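/- arXiv:2409.01868 — 3 statements merged into one kernel-verified Lean document; each statement's English description precedes it below -/
import Mathlib

section
/- Let S : L¹(ℝ^d) → L¹(ℝ^d) be a positive bounded linear operator such that for some k ∈ ℕ and κ₀ > 0: (1) there exists g₀ ∈ L¹₊ \ {0} with S g₀ ≥ κ₀ g₀, or there exists ψ₀ ∈ L^∞₊ \ {0} with S* ψ₀ ≥ κ₀ ψ₀; (2) S^k = W + K with ‖W‖ < κ₀^k and K weakly compact in L¹; (3) for every f ∈ L¹₊ \ {0}, S^k f(x) > 0 for almost every x ∈ ℝ^d. Then there exists a unique triplet (Λ₀, f₀, φ₀) ∈ ℝ × L¹₊(ℝ^d) × L^∞₊(ℝ^d) such that S f₀ = Λ₀ f₀, S* φ₀ = Λ₀ φ₀, ‖φ₀‖_{L^∞} = 1 and ⟨φ₀, f₀⟩ = 1; moreover Λ₀ > 0, f₀ > 0 a.e. and φ₀ > 0 a.e. -/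
open MeasureTheory Filter ENNReal Topology

set_option linter.unusedSectionVars false
section abs
variable {X : Type*} [NormedAddCommGroup X] [Lattice X] [HasSolidNorm X] [IsOrderedAddMonoid X]
  [NormedSpace ℝ X]

lemma aux_pow_pos {S : X →L[ℝ] X} (hS : ∀ f, 0 ≤ f → 0 ≤ S f) (n : ℕ) :
    ∀ f, 0 ≤ f → 0 ≤ (S ^ n) f := by
  induction n with
  | zero => intro f hf; simpa using hf
  | succ n ih => intro f hf; rw [pow_succ']; exact hS _ (ih f hf)

lemma aux_mono {S : X →L[ℝ] X} (hS : ∀ f, 0 ≤ f → 0 ≤ S f) {f g : X} (h : f ≤ g) : S f ≤ S g := by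
  have := hS (g - f) (sub_nonneg.2 h)
  rwa [map_sub, sub_nonneg] at this

lemma aux_norm_le {S : X →L[ℝ] X} (hS : ∀ f, 0 ≤ f → 0 ≤ S f) (f : X) : ‖S f‖ ≤ ‖S |f|‖ := by
  apply norm_le_norm_of_abs_le_abs
  refine le_trans ?_ (le_abs_self _)
  rw [abs_le']
  refine ⟨aux_mono hS (le_abs_self f), ?_⟩
  rw [← map_neg]
  exact aux_mono hS (neg_le_abs f)

set_option maxHeartbeats 2000000 in
lemma aux_resolvent [CompleteSpace X] [PosSMulMono ℝ X] {S : X →L[ℝ] X}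
    (hS : ∀ f, 0 ≤ f → 0 ≤ S f)
    (I : X →L[ℝ] ℝ) (hI : ∀ f, 0 ≤ f → I f = ‖f‖) {lam mu C₀ : ℝ} (hmu : 0 < mu) (hml : mu < lam)
    (hb : ∀ n, ‖S ^ n‖ ≤ C₀ * mu ^ n) :
    ∃ R : X →L[ℝ] X, (∀ f, 0 ≤ f → 0 ≤ R f) ∧ (∀ f, S (R f) = lam • (R f - f)) ∧
      (∀ f, R (S f) = lam • (R f - f)) ∧
      ∀ C, 2 ≤ C → ‖R‖ ≤ C → ∀ n, ‖S ^ n‖ ≤ C * (lam * (1 - 1 / C)) ^ n := by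
  have hl : 0 < lam := hmu.trans hml
  have hsum : Summable (fun n : ℕ => (lam⁻¹) ^ n • S ^ n) := by
    refine Summable.of_norm_bounded (g := fun n => C₀ * (mu / lam) ^ n) ?_ ?_
    · refine (summable_geometric_of_lt_one (by positivity) ?_).mul_left _
      rwa [div_lt_one hl]
    · intro n
      rw [norm_smul, norm_pow, norm_inv, Real.norm_of_nonneg hl.le]
      calc lam⁻¹ ^ n * ‖S ^ n‖ ≤ lam⁻¹ ^ n * (C₀ * mu ^ n) := by gcongr; exact hb n
        _ = _ := by rw [div_pow, inv_pow]; field_simp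
  obtain ⟨R, hR⟩ := hsum
  have happ : ∀ f, HasSum (fun n : ℕ => (lam⁻¹) ^ n • (S ^ n) f) (R f) := fun f =>
    (ContinuousLinearMap.apply ℝ X f).hasSum hR
  have hRpos : ∀ f, 0 ≤ f → 0 ≤ R f := fun f hf =>
    (happ f).nonneg fun n => smul_nonneg (by positivity) (aux_pow_pos hS n f hf)
  have hRS : ∀ f, R f = f + lam⁻¹ • R (S f) := by
    intro f
    have h1 := (hasSum_nat_add_iff' 1).2 (happ f)
    have h2 := (happ (S f)).const_smul lam⁻¹
    have : (fun n : ℕ => lam⁻¹ ^ (n+1) • (S ^ (n+1)) f) =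
        fun n : ℕ => lam⁻¹ • (lam⁻¹ ^ n • (S ^ n) (S f)) := by
      funext n
      rw [smul_smul, pow_succ' lam⁻¹, pow_succ S]; rfl
    rw [this] at h1
    have := h1.unique h2
    simp at this
    rw [← this]; abel
  have hSR : ∀ f, S (R f) = R (S f) := by
    intro f
    have h1 := S.hasSum (happ f)
    have h2 := happ (S f)
    have : (fun n : ℕ => S (lam⁻¹ ^ n • (S ^ n) f)) = fun n : ℕ => (lam⁻¹ ^ n • (S ^ n) (S f)) := by
      funext n
      rw [map_smul]
      congr 1
      change (S * S ^ n) f = (S ^ n * S) f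
      rw [← pow_succ, ← pow_succ']
    have h1' : HasSum (fun n : ℕ => S (lam⁻¹ ^ n • (S ^ n) f)) (S (R f)) := h1
    rw [this] at h1'
    exact h1'.unique h2
  have hRS' : ∀ f, R (S f) = lam • (R f - f) := by
    intro f
    conv_rhs => rw [hRS f]
    rw [add_sub_cancel_left, smul_smul, mul_inv_cancel₀ hl.ne', one_smul]
  refine ⟨R, hRpos, fun f => (hSR f).trans (hRS' f), hRS', ?_⟩
  intro C hC hRC n
  have hC0 : 0 < C := by linarith
  have hq : 0 ≤ 1 - 1 / C := by
    rw [sub_nonneg, div_le_one hC0]; linarith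
  have hU : ∀ g, 0 ≤ g → ‖g‖ ≤ I (R g) := by
    intro g hg
    rw [hRS g, map_add, hI g hg, map_smul, hI _ (hRpos _ (hS g hg))]
    have : 0 ≤ lam⁻¹ • ‖R (S g)‖ := by positivity
    linarith
  have hUC : ∀ g, 0 ≤ g → I (R g) ≤ C * ‖g‖ := by
    intro g hg
    rw [hI _ (hRpos _ hg)]
    exact (R.le_opNorm g).trans (by gcongr)
  have hstep : ∀ n, ∀ g, 0 ≤ g → I (R ((S ^ n) g)) ≤ (lam * (1 - 1 / C)) ^ n * I (R g) := by
    intro n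
    induction n with
    | zero => intro g hg; simp
    | succ n ih =>
      intro g hg
      have hg' := aux_pow_pos hS n g hg
      have e : (S ^ (n+1)) g = S ((S ^ n) g) := by rw [pow_succ']; rfl
      rw [e, hRS', map_smul, map_sub, hI _ hg', smul_eq_mul, pow_succ', mul_assoc]
      refine le_trans ?_ (mul_le_mul_of_nonneg_left (ih g hg) (by positivity))
      rw [mul_assoc]
      refine mul_le_mul_of_nonneg_left ?_ hl.le
      have := hUC _ hg'
      have : I (R ((S ^ n) g)) / C ≤ ‖(S ^ n) g‖ := by
        rw [div_le_iff₀ hC0]; linarith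
      have e2 : (1 - 1 / C) * I (R ((S ^ n) g)) = I (R ((S ^ n) g)) - I (R ((S ^ n) g)) / C := by
        ring
      rw [e2]; linarith
  refine ContinuousLinearMap.opNorm_le_bound _ (by positivity) fun f => ?_
  refine (aux_norm_le (aux_pow_pos hS n) f).trans ?_
  have h0 : (0:X) ≤ |f| := abs_nonneg f
  refine (hU _ (aux_pow_pos hS n _ h0)).trans ((hstep n _ h0).trans ?_)
  have := hUC _ h0
  rw [norm_abs_eq_norm] at this
  calc _ ≤ (lam * (1 - 1 / C)) ^ n * (C * ‖f‖) := by gcongr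
    _ = _ := by ring

lemma aux_seq [CompleteSpace X] [PosSMulMono ℝ X] {S : X →L[ℝ] X}
    (hS : ∀ f, 0 ≤ f → 0 ≤ S f)
    (I : X →L[ℝ] ℝ) (hI : ∀ f, 0 ≤ f → I f = ‖f‖) {κ c : ℝ} (hκ : 0 < κ) (hc : 0 < c)
    (hlow : ∀ n, c * κ ^ n ≤ ‖S ^ n‖) :
    ∃ (r : ℝ) (lam : ℕ → ℝ) (R : ℕ → X →L[ℝ] X) (g : ℕ → X), κ ≤ r ∧ Tendsto lam atTop (𝓝 r) ∧
      (∀ j, r < lam j) ∧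
      (∀ j f, 0 ≤ f → 0 ≤ R j f) ∧ (∀ j f, S (R j f) = lam j • (R j f - f)) ∧
      (∀ j f, R j (S f) = lam j • (R j f - f)) ∧ (∀ j : ℕ, (j : ℝ) + 1 ≤ ‖R j‖) ∧
      (∀ j, 0 ≤ g j ∧ ‖g j‖ ≤ 1 ∧ ‖R j‖ / 2 ≤ ‖R j (g j)‖) := by
  set T : Set ℝ := {l | 0 < l ∧ ∃ C, ∀ n, ‖S ^ n‖ ≤ C * l ^ n} with hT
  have hTb : ∀ l ∈ T, κ ≤ l := by
    rintro l ⟨hl, C, hC⟩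
    by_contra! hlt
    have h1 : ∀ n : ℕ, (κ / l) ^ n ≤ C / c := by
      intro n
      have := (hlow n).trans (hC n)
      rw [div_pow, div_le_div_iff₀ (by positivity) hc]
      linarith
    have h2 := tendsto_pow_atTop_atTop_of_one_lt ((one_lt_div hl).2 hlt)
    obtain ⟨n, hn⟩ := (h2.eventually_gt_atTop (C / c)).exists
    exact absurd (h1 n) (not_le.2 hn)
  have hTne : T.Nonempty := by
    refine ⟨‖S‖ + 1, by positivity, max 1 ‖(1 : X →L[ℝ] X)‖, fun n => ?_⟩
    rcases Nat.eq_zero_or_pos n with rfl | hn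
    · simp
    · calc ‖S ^ n‖ ≤ ‖S‖ ^ n := norm_pow_le' _ hn
        _ ≤ (‖S‖ + 1) ^ n := by gcongr; linarith
        _ ≤ _ := le_mul_of_one_le_left (by positivity) (le_max_left _ _)
  have hbdd : BddBelow T := ⟨κ, hTb⟩
  set r := sInf T with hr
  have hκr : κ ≤ r := le_csInf hTne hTb
  have hr0 : 0 < r := hκ.trans_le hκr
  set lam : ℕ → ℝ := fun j => r * (1 + 1 / ((j : ℝ) + 2)) with hlam
  have hlr : ∀ j, r < lam j := fun j => by
    have : 0 < 1 / ((j : ℝ) + 2) := by positivity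
    simp only [hlam]; nlinarith
  have key : ∀ j, ∃ (R : X →L[ℝ] X) (g : X), (∀ f, 0 ≤ f → 0 ≤ R f) ∧
      (∀ f, S (R f) = lam j • (R f - f)) ∧
      (∀ f, R (S f) = lam j • (R f - f)) ∧ ((j : ℝ) + 1 ≤ ‖R‖) ∧
      (0 ≤ g ∧ ‖g‖ ≤ 1 ∧ ‖R‖ / 2 ≤ ‖R g‖) := by
    intro j
    obtain ⟨mu, ⟨hmu, C₀, hC₀⟩, hml⟩ := exists_lt_of_csInf_lt hTne (hlr j)
    obtain ⟨R, hRp, hSR, hRS, hRC⟩ := aux_resolvent hS I hI hmu hml hC₀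
    have hnorm : (j : ℝ) + 2 < ‖R‖ := by
      by_contra! hle
      have h2 : (2 : ℝ) ≤ (j : ℝ) + 2 := by linarith [(Nat.cast_nonneg j : (0:ℝ) ≤ j)]
      have hq : lam j * (1 - 1 / ((j : ℝ) + 2)) < r := by
        have : 0 < 1 / ((j : ℝ) + 2) := by positivity
        simp only [hlam]
        nlinarith [mul_pos hr0 (mul_pos this this)]
      have hq0 : 0 < lam j * (1 - 1 / ((j : ℝ) + 2)) := by
        refine mul_pos (hr0.trans (hlr j)) ?_
        rw [sub_pos, div_lt_one (by linarith)]; linarith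
      have : lam j * (1 - 1 / ((j : ℝ) + 2)) ∈ T := ⟨hq0, _, hRC _ h2 hle⟩
      exact absurd (csInf_le hbdd this) (not_le.2 hq)
    have hj : (0:ℝ) ≤ j := Nat.cast_nonneg j
    obtain ⟨x, hx, hx2⟩ := R.exists_lt_apply_of_lt_opNorm (r := ‖R‖ / 2) (by linarith)
    refine ⟨R, |x|, hRp, hSR, hRS, by linarith, abs_nonneg x, ?_, ?_⟩
    · rw [norm_abs_eq_norm]; exact hx.le
    · exact hx2.le.trans (aux_norm_le hRp x)
  choose R g h1 h2 h3 h4 h5 using key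
  refine ⟨r, lam, R, g, hκr, ?_, hlr, h1, h2, h3, h4, h5⟩
  have h0 : Tendsto (fun j : ℕ => 1 / ((j : ℝ) + 2)) atTop (𝓝 0) := by
    simp_rw [one_div]
    exact tendsto_inv_atTop_zero.comp (tendsto_atTop_add_const_right _ _ tendsto_natCast_atTop_atTop)
  have := (h0.const_add 1).const_mul r
  simpa [hlam] using this
end abs

section wk
variable {X : Type*} [NormedAddCommGroup X] [NormedSpace ℝ X]

/-- sequential-ultrafilter form of weak compactness -/
def AuxWC {X : Type*} [NormedAddCommGroup X] [NormedSpace ℝ X] (K : X →L[ℝ] X) : Prop :=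
  ∀ (C : ℝ) (x : ℕ → X), (∀ j, ‖x j‖ ≤ C) → ∃ y, ∀ l : X →L[ℝ] ℝ,
    Tendsto (fun j => l (K (x j))) (hyperfilter ℕ : Filter ℕ) (𝓝 (l y))

lemma aux_wc_of_compact (K : X →L[ℝ] X) (h : IsCompact (closure
      ((fun f => toWeakSpaceCLM ℝ X (K f)) '' Metric.closedBall 0 1))) : AuxWC K := by
  intro C x hx
  set D := max C 1 with hD
  have hD0 : 0 < D := lt_of_lt_of_le one_pos (le_max_right _ _)
  have hin : ∀ j, toWeakSpaceCLM ℝ X (K (D⁻¹ • x j)) ∈ closure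
      ((fun f => toWeakSpaceCLM ℝ X (K f)) '' Metric.closedBall 0 1) := by
    intro j
    refine subset_closure ⟨D⁻¹ • x j, ?_, rfl⟩
    rw [mem_closedBall_zero_iff, norm_smul, norm_inv, Real.norm_of_nonneg hD0.le,
      inv_mul_le_iff₀ hD0, mul_one]
    exact (hx j).trans (le_max_left _ _)
  obtain ⟨y, -, hy⟩ := h.ultrafilter_le_nhds
    ((hyperfilter ℕ).map (fun j => toWeakSpaceCLM ℝ X (K (D⁻¹ • x j))))
    (by
      rw [Ultrafilter.coe_map, le_principal_iff]
      exact Filter.mem_map.2 (Filter.univ_mem' hin))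
  obtain ⟨y, rfl⟩ := (toWeakSpace ℝ X).surjective y
  refine ⟨D • y, fun l => ?_⟩
  have ht : Tendsto (fun j => toWeakSpaceCLM ℝ X (K (D⁻¹ • x j))) (hyperfilter ℕ : Filter ℕ)
    (𝓝 (toWeakSpace ℝ X y)) := hy
  have hc := WeakBilin.eval_continuous (topDualPairing ℝ X).flip l
  have h1 := (hc.tendsto _).comp ht
  have h2 : Tendsto (fun j => l (K (D⁻¹ • x j))) (hyperfilter ℕ : Filter ℕ) (𝓝 (l y)) := h1
  have h3 := h2.const_mul D
  refine (h3.congr fun j => ?_).trans_eq ?_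
  · rw [map_smul, map_smul, smul_eq_mul, mul_inv_cancel_left₀ hD0.ne']
  · rw [map_smul, smul_eq_mul]

lemma aux_wc_pow {T W K : X →L[ℝ] X} (hK : AuxWC K) (h : T = W + K) (n : ℕ) :
    ∃ K' : X →L[ℝ] X, AuxWC K' ∧ T ^ n = W ^ n + K' := by
  induction n with
  | zero => exact ⟨0, fun C x _ => ⟨0, fun l => by simp⟩, by simp⟩
  | succ n ih =>
    obtain ⟨K', hK', e⟩ := ih
    refine ⟨K * W ^ n + T * K', ?_, ?_⟩
    · intro C x hx
      obtain ⟨y, hy⟩ := hK' C x hx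
      obtain ⟨z, hz⟩ := hK (‖W ^ n‖ * C) (fun j => (W ^ n) (x j)) (fun j =>
        ((W ^ n).le_opNorm _).trans (by gcongr; exact hx j))
      refine ⟨z + T y, fun l => ?_⟩
      have := (hz l).add (hy (l ∘L T))
      simpa using this
    · rw [pow_succ', e]
      conv_lhs => rw [mul_add]
      nth_rewrite 1 [h]
      rw [add_mul, ← pow_succ', add_assoc]

lemma aux_weak_limit [CompleteSpace X] {S W K : X →L[ℝ] X} {k : ℕ} {r : ℝ} (hK : AuxWC K)
    (h : S ^ k = W + K) (hr : 0 < r) (hW : ‖W‖ < r ^ k) (f : ℕ → X) (hf : ∀ j, ‖f j‖ = 1)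
    (hlim : Tendsto (fun j => S (f j) - r • f j) atTop (𝓝 0)) :
    ∃ y, S y = r • y ∧ ∀ l : X →L[ℝ] ℝ,
      Tendsto (fun j => l (f j)) (hyperfilter ℕ : Filter ℕ) (𝓝 (l y)) := by
  have hpow : ∀ n : ℕ, Tendsto (fun j => (S ^ n) (f j) - r ^ n • f j) atTop (𝓝 0) := by
    intro n
    induction n with
    | zero => simp
    | succ n ih =>
      have h1 := (S.continuous.tendsto 0).comp ih
      have h2 := hlim.const_smul (r ^ n)
      have h3 := h1.add h2
      simp only [map_zero, smul_zero, add_zero] at h3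
      refine h3.congr fun j => ?_
      simp only [Function.comp, map_sub, map_smul, smul_sub, smul_smul, pow_succ' S, pow_succ r,
        mul_apply_eq_comp]
      abel
  have ha : 0 < r ^ k := by positivity
  obtain ⟨u, hu⟩ := isUnit_one_sub_of_norm_lt_one (x := (r ^ k)⁻¹ • W) (by
    rw [norm_smul, norm_inv, Real.norm_of_nonneg ha.le, inv_mul_lt_iff₀ ha, mul_one]; exact hW)
  set T : X →L[ℝ] X := (r ^ k)⁻¹ • (↑u⁻¹ : X →L[ℝ] X) with hT
  have hTx : ∀ x, T (r ^ k • x - W x) = x := by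
    intro x
    have e : r ^ k • x - W x = r ^ k • (u : X →L[ℝ] X) x := by
      rw [hu]
      simp [smul_sub, smul_smul, mul_inv_cancel₀ ha.ne']
    rw [e, map_smul, hT]
    have : (↑u⁻¹ : X →L[ℝ] X) ((u : X →L[ℝ] X) x) = x := by
      rw [← mul_apply_eq_comp, Units.inv_mul]; rfl
    rw [smul_apply, this, smul_smul, mul_inv_cancel₀ ha.ne', one_smul]
  obtain ⟨z, hz⟩ := hK 1 f (fun j => (hf j).le)
  have hU : (hyperfilter ℕ : Filter ℕ) ≤ atTop := Nat.hyperfilter_le_atTop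
  have hw : ∀ l : X →L[ℝ] ℝ,
      Tendsto (fun j => l (f j)) (hyperfilter ℕ : Filter ℕ) (𝓝 (l (T z))) := by
    intro l
    have h1 := hz (l ∘L T)
    have h2 := (((l ∘L T).continuous.tendsto 0).comp (hpow k)).mono_left hU
    rw [map_zero] at h2
    have h3 := h1.sub h2
    rw [sub_zero] at h3
    refine h3.congr fun j => ?_
    rw [Function.comp, ← map_sub, h]
    conv_rhs => rw [← hTx (f j)]
    simp only [ContinuousLinearMap.comp_apply, add_apply]
    congr 2
    abel
  refine ⟨T z, ?_, hw⟩
  apply SeparatingDual.eq_iff_forall_dual_eq (R := ℝ) |>.2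
  intro l
  have h1 := hw (l ∘L S)
  have h2 := ((l.continuous.tendsto 0).comp hlim).mono_left hU
  have h3 := h2.add ((hw l).const_mul r)
  rw [map_zero, zero_add] at h3
  have h4 : Tendsto (fun j => (l ∘L S) (f j)) (hyperfilter ℕ : Filter ℕ) (𝓝 (r * l (T z))) := by
    refine h3.congr fun j => ?_
    simp
  have := tendsto_nhds_unique h1 h4
  simpa using this
end wk

section conc
variable {α : Type*} [MeasurableSpace α] {μ : Measure α}

/-- the duality pairing -/
noncomputable def auxP (μ : Measure α) : Lp ℝ ⊤ μ →L[ℝ] Lp ℝ 1 μ →L[ℝ] ℝ :=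
  (ContinuousLinearMap.mul ℝ ℝ).lpPairing μ ⊤ 1

lemma auxP_apply (p : Lp ℝ ⊤ μ) (f : Lp ℝ 1 μ) : auxP μ p f = ∫ x, p x * f x ∂μ := by
  rw [auxP, ContinuousLinearMap.lpPairing_eq_integral]; rfl

lemma auxP_int (p : Lp ℝ ⊤ μ) (f : Lp ℝ 1 μ) : Integrable (fun x => p x * f x) μ :=
  memLp_one_iff_integrable.1 ((Lp.memLp f).mul (Lp.memLp p))

lemma auxP_nonneg {p : Lp ℝ ⊤ μ} {f : Lp ℝ 1 μ} (hp : 0 ≤ p) (hf : 0 ≤ f) : 0 ≤ auxP μ p f := by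
  rw [auxP_apply]
  apply integral_nonneg_of_ae
  filter_upwards [(Lp.coeFn_nonneg p).2 hp, (Lp.coeFn_nonneg f).2 hf] with x h1 h2
  exact mul_nonneg h1 h2

lemma auxP_pos {p : Lp ℝ ⊤ μ} {f : Lp ℝ 1 μ} (hp : 0 ≤ p) (hf : 0 ≤ f)
    (h : ¬ ∀ᵐ x ∂μ, p x * f x = 0) : 0 < auxP μ p f := by
  refine lt_of_le_of_ne (auxP_nonneg hp hf) fun h0 => h ?_
  rw [auxP_apply] at h0
  refine (integral_eq_zero_iff_of_nonneg_ae ?_ (auxP_int p f)).1 h0.symm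
  filter_upwards [(Lp.coeFn_nonneg p).2 hp, (Lp.coeFn_nonneg f).2 hf] with x h1 h2
  exact mul_nonneg h1 h2

lemma auxP_pos_left {p : Lp ℝ ⊤ μ} {f : Lp ℝ 1 μ} (hp : 0 ≤ p) (hf : 0 ≤ f)
    (hp' : ∀ᵐ x ∂μ, 0 < p x) (hf0 : f ≠ 0) : 0 < auxP μ p f := by
  refine auxP_pos hp hf fun h => hf0 ((Lp.eq_zero_iff_ae_eq_zero).2 ?_)
  filter_upwards [h, hp'] with x h1 h2
  exact (mul_eq_zero.1 h1).resolve_left h2.ne'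

lemma auxP_pos_right {p : Lp ℝ ⊤ μ} {f : Lp ℝ 1 μ} (hp : 0 ≤ p) 
    (hf' : ∀ᵐ x ∂μ, 0 < f x) (hp0 : p ≠ 0) : 0 < auxP μ p f := by
  have hf : 0 ≤ f := (Lp.coeFn_nonneg f).1 (hf'.mono fun x hx => hx.le)
  refine auxP_pos hp hf fun h => hp0 ((Lp.eq_zero_iff_ae_eq_zero).2 ?_)
  filter_upwards [h, hf'] with x h1 h2
  exact (mul_eq_zero.1 h1).resolve_right h2.ne'

/-- the integral functional -/
noncomputable def auxI (μ : Measure α) : Lp ℝ 1 μ →L[ℝ] ℝ := L1.integralCLM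

lemma auxI_apply (f : Lp ℝ 1 μ) : auxI μ f = ∫ x, f x ∂μ := by
  rw [auxI, ← L1.integral_eq, L1.integral_eq_integral]

lemma auxI_norm (f : Lp ℝ 1 μ) (hf : 0 ≤ f) : auxI μ f = ‖f‖ := by
  rw [auxI_apply, L1.norm_eq_integral_norm]
  apply integral_congr_ae
  filter_upwards [(Lp.coeFn_nonneg f).2 hf] with x hx
  exact (Real.norm_of_nonneg hx).symm

lemma auxI_le (f : Lp ℝ 1 μ) : |auxI μ f| ≤ ‖f‖ := by
  rw [auxI_apply, L1.norm_eq_integral_norm]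
  exact norm_integral_le_integral_norm (fun x => f x)

lemma aux_psm {q : ℝ≥0∞} : PosSMulMono ℝ (Lp ℝ q μ) := ⟨fun a ha f g h => by
  rw [← Lp.coeFn_le] at h ⊢
  filter_upwards [h, Lp.coeFn_smul a f, Lp.coeFn_smul a g] with x h1 h2 h3
  rw [h2, h3]
  exact mul_le_mul_of_nonneg_left h1 ha⟩

open Classical in
/-- indicator in L1 -/
noncomputable def auxInd (μ : Measure α) (s : Set α) : Lp ℝ 1 μ :=
  if h : MeasurableSet s ∧ μ s ≠ ⊤ then indicatorConstLp 1 h.1 h.2 1 else 0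

lemma auxInd_eq {s : Set α} (hs : MeasurableSet s) (h : μ s ≠ ⊤) :
    auxInd μ s = indicatorConstLp 1 hs h 1 := by
  rw [auxInd, dif_pos ⟨hs, h⟩]

lemma auxInd_nonneg (s : Set α) : 0 ≤ auxInd μ s := by
  rw [auxInd]
  split_ifs with h
  · rw [← Lp.coeFn_nonneg]
    filter_upwards [indicatorConstLp_coeFn (p := 1) (hs := h.1) (hμs := h.2) (c := (1:ℝ))] with x hx
    rw [hx]
    exact Set.indicator_nonneg (fun _ _ => zero_le_one) x
  · exact le_rfl

lemma auxInd_hasSum (psi : Lp ℝ 1 μ →L[ℝ] ℝ) (hpsi : ∀ f, 0 ≤ f → 0 ≤ psi f) (A : ℕ → Set α)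
    (hA : ∀ i, MeasurableSet (A i)) (hd : Pairwise (Function.onFun Disjoint A))
    (hfin : μ (⋃ i, A i) ≠ ⊤) :
    HasSum (fun i => psi (auxInd μ (A i))) (psi (auxInd μ (⋃ i, A i))) := by
  rw [hasSum_iff_tendsto_nat_of_nonneg (fun i => hpsi _ (auxInd_nonneg _))]
  have hAf : ∀ i, μ (A i) ≠ ⊤ := fun i =>
    ne_top_of_le_ne_top hfin (measure_mono (Set.subset_iUnion A i))
  have htm : ∀ n, MeasurableSet (⋃ i ∈ Finset.range n, A i) := fun n =>
    Finset.measurableSet_biUnion _ fun i _ => hA i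
  have hsub : ∀ n, (⋃ i ∈ Finset.range n, A i) ⊆ ⋃ i, A i := fun n =>
    Set.iUnion₂_subset_iUnion _ _
  have htf : ∀ n, μ (⋃ i ∈ Finset.range n, A i) ≠ ⊤ := fun n =>
    ne_top_of_le_ne_top hfin (measure_mono (hsub n))
  have hpart : ∀ n, ∑ i ∈ Finset.range n, psi (auxInd μ (A i)) =
      psi (auxInd μ (⋃ i ∈ Finset.range n, A i)) := by
    intro n
    induction n with
    | zero => 
      simp [auxInd]
    | succ n ih =>
      rw [Finset.sum_range_succ, ih, ← map_add]
      congr 1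
      have hdis : Disjoint (⋃ i ∈ Finset.range n, A i) (A n) := by
        rw [Set.disjoint_iUnion₂_left]
        intro i hi
        exact hd (by have := Finset.mem_range.1 hi; omega)
      have hset : (⋃ i ∈ Finset.range (n+1), A i) = (⋃ i ∈ Finset.range n, A i) ∪ A n := by
        rw [Finset.range_add_one, Finset.set_biUnion_insert, Set.union_comm]
      rw [hset, auxInd_eq (htm n) (htf n), auxInd_eq (hA n) (hAf n),
        auxInd_eq ((htm n).union (hA n)) (by rw [← hset]; exact htf _),
        ← indicatorConstLp_disjoint_union _ _ _ _ hdis]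
  simp_rw [hpart]
  refine (psi.continuous.tendsto _).comp ?_
  rw [auxInd_eq (MeasurableSet.iUnion hA) hfin]
  simp_rw [auxInd_eq (htm _) (htf _)]
  apply tendsto_indicatorConstLp_set (by simp)
  have hsd : ∀ n, symmDiff (⋃ i ∈ Finset.range n, A i) (⋃ i, A i) =
      (⋃ i, A i) \ (⋃ i ∈ Finset.range n, A i) := by
    intro n
    rw [Set.symmDiff_def, Set.sdiff_eq_empty.2 (hsub n), Set.empty_union]
  simp_rw [hsd]
  have h0 : (⋂ n, (⋃ i, A i) \ (⋃ i ∈ Finset.range n, A i)) = ∅ := by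
    ext x
    simp only [Set.mem_iInter, Set.mem_sdiff, Set.mem_iUnion, Set.mem_empty_iff_false, iff_false]
    intro h
    obtain ⟨i, hi⟩ := (h 0).1
    exact (h (i+1)).2 ⟨i, by simp, hi⟩
  have := tendsto_measure_iInter_atTop (μ := μ)
    (s := fun n => (⋃ i, A i) \ (⋃ i ∈ Finset.range n, A i))
    (fun n => ((MeasurableSet.iUnion hA).diff (htm n)).nullMeasurableSet) ?_ ⟨0, by simpa using hfin⟩
  · rwa [h0, measure_empty] at this
  · intro m n hmn
    refine Set.sdiff_subset_sdiff_right ?_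
    refine Set.biUnion_subset_biUnion_left fun i hi => ?_
    simp at hi ⊢
    omega

lemma aux_rep [SigmaFinite μ] (psi : Lp ℝ 1 μ →L[ℝ] ℝ) (hpsi : ∀ f, 0 ≤ f → 0 ≤ psi f) :
    ∃ p : Lp ℝ ⊤ μ, 0 ≤ p ∧ (∀ᵐ x ∂μ, p x ≤ ‖psi‖) ∧ ∀ f, auxP μ p f = psi f := by
  set E : ℕ → Set α := disjointed (spanningSets μ) with hE
  have hEm : ∀ n, MeasurableSet (E n) := fun n =>
    MeasurableSet.disjointed (measurableSet_spanningSets μ) n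
  have hEf : ∀ n, μ (E n) ≠ ⊤ := fun n =>
    ((measure_mono (disjointed_subset _ n)).trans_lt (measure_spanningSets_lt_top μ n)).ne
  have hEd : Pairwise (Function.onFun Disjoint E) := disjoint_disjointed _
  have hEU : (⋃ n, E n) = Set.univ := by rw [hE, iUnion_disjointed, iUnion_spanningSets]
  have hfin : ∀ n s, μ (s ∩ E n) ≠ ⊤ := fun n s =>
    ne_top_of_le_ne_top (hEf n) (measure_mono Set.inter_subset_right)
  let nu : ℕ → Measure α := fun n => Measure.ofMeasurable
    (fun s _ => ENNReal.ofReal (psi (auxInd μ (s ∩ E n)))) (by simp [auxInd]) (by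
      intro f hf hd
      have hs := auxInd_hasSum psi hpsi (fun i => f i ∩ E n) (fun i => (hf i).inter (hEm n))
        (fun i j hij => (hd hij).mono Set.inter_subset_left Set.inter_subset_left)
        (by rw [← Set.iUnion_inter]; exact hfin _ _)
      rw [← Set.iUnion_inter] at hs
      rw [← hs.tsum_eq, ENNReal.ofReal_tsum_of_nonneg (fun i => hpsi _ (auxInd_nonneg _)) hs.summable])
  have hnu : ∀ n s, MeasurableSet s → nu n s = ENNReal.ofReal (psi (auxInd μ (s ∩ E n))) :=
    fun n s hs => Measure.ofMeasurable_apply s hs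
  have hnuf : ∀ n, IsFiniteMeasure (nu n) := fun n => ⟨by
    rw [hnu n _ MeasurableSet.univ]; exact ENNReal.ofReal_lt_top⟩
  let N : Measure α := Measure.sum nu
  have hN : ∀ s, MeasurableSet s → μ s ≠ ⊤ → N s = ENNReal.ofReal (psi (auxInd μ s)) := by
    intro s hs hsf
    rw [Measure.sum_apply _ hs]
    simp_rw [hnu _ s hs]
    have hU : (⋃ n, s ∩ E n) = s := by rw [← Set.inter_iUnion, hEU, Set.inter_univ]
    have h := auxInd_hasSum psi hpsi (fun i => s ∩ E i) (fun i => hs.inter (hEm i))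
        (fun i j hij => (hEd hij).mono Set.inter_subset_right Set.inter_subset_right)
        (by rw [hU]; exact hsf)
    rw [hU] at h
    rw [← h.tsum_eq, ENNReal.ofReal_tsum_of_nonneg (fun i => hpsi _ (auxInd_nonneg _)) h.summable]
  have hNle : ∀ s, MeasurableSet s → μ s ≠ ⊤ → N s ≤ ENNReal.ofReal ‖psi‖ * μ s := by
    intro s hs hsf
    rw [hN s hs hsf, ← ENNReal.ofReal_toReal hsf, ← ENNReal.ofReal_mul (norm_nonneg _)]
    apply ENNReal.ofReal_le_ofReal
    refine (le_abs_self _).trans ((psi.le_opNorm _).trans ?_)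
    gcongr
    rw [auxInd_eq hs hsf, norm_indicatorConstLp (by simp) (by simp)]
    simp [Measure.real]
  have hac : N ≪ μ := by
    refine Measure.AbsolutelyContinuous.mk fun s hs h0 => ?_
    have := hNle s hs (by simp [h0])
    rw [h0, mul_zero] at this
    exact le_antisymm this zero_le
  have hD := Measure.withDensity_rnDeriv_eq N μ hac
  have hDle : N.rnDeriv μ ≤ᵐ[μ] fun _ => ENNReal.ofReal ‖psi‖ := by
    refine ae_le_of_forall_setLIntegral_le_of_sigmaFinite (Measure.measurable_rnDeriv N μ) ?_
    intro s hs hsf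
    rw [← withDensity_apply _ hs, hD, setLIntegral_const]
    exact hNle s hs hsf.ne
  have hDle' : ∀ᵐ x ∂μ, (N.rnDeriv μ x).toReal ≤ ‖psi‖ := by
    filter_upwards [hDle] with x hx
    exact ENNReal.toReal_le_of_le_ofReal (norm_nonneg _) hx
  have hmem : MemLp (fun x => (N.rnDeriv μ x).toReal) ⊤ μ := by
    refine memLp_top_of_bound (Measure.measurable_rnDeriv N μ).ennreal_toReal.aestronglyMeasurable
      ‖psi‖ ?_
    filter_upwards [hDle'] with x hx
    rwa [Real.norm_of_nonneg ENNReal.toReal_nonneg]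
  refine ⟨hmem.toLp _, ?_, ?_, ?_⟩
  · rw [← Lp.coeFn_nonneg]
    filter_upwards [hmem.coeFn_toLp] with x hx
    rw [hx]; exact ENNReal.toReal_nonneg
  · filter_upwards [hmem.coeFn_toLp, hDle'] with x hx h2
    rw [hx]; exact h2
  intro f
  refine Lp.induction (p := 1) (by simp) (fun f => auxP μ (hmem.toLp _) f = psi f) ?_ ?_ ?_ f
  · intro c s hs hsf
    rw [Lp.simpleFunc.coe_indicatorConst]
    have e : indicatorConstLp 1 hs hsf.ne c = c • auxInd μ s := by
      rw [auxInd_eq hs hsf.ne]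
      ext1
      filter_upwards [indicatorConstLp_coeFn (p := 1) (hs := hs) (hμs := hsf.ne) (c := c),
        Lp.coeFn_smul c (indicatorConstLp 1 hs hsf.ne (1:ℝ)),
        indicatorConstLp_coeFn (p := 1) (hs := hs) (hμs := hsf.ne) (c := (1:ℝ))] with x h1 h2 h3
      rw [h1, h2, Pi.smul_apply, h3]
      by_cases hx : x ∈ s <;> simp [hx]
    rw [e, map_smul, map_smul]
    congr 1
    rw [auxP_apply]
    have h1 : ∫ x, (hmem.toLp _ : Lp ℝ ⊤ μ) x * (auxInd μ s) x ∂μ =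
        ∫ x in s, (N.rnDeriv μ x).toReal ∂μ := by
      rw [← integral_indicator hs]
      apply integral_congr_ae
      rw [auxInd_eq hs hsf.ne]
      filter_upwards [hmem.coeFn_toLp,
        indicatorConstLp_coeFn (p := 1) (hs := hs) (hμs := hsf.ne) (c := (1:ℝ))] with x h1 h2
      rw [h1, h2]
      by_cases hx : x ∈ s <;> simp [hx]
    rw [h1, integral_toReal (Measure.measurable_rnDeriv N μ).aemeasurable
      ((ae_restrict_of_ae hDle).mono fun x hx => lt_of_le_of_lt hx ENNReal.ofReal_lt_top),
      ← withDensity_apply _ hs, hD, hN s hs hsf.ne, ENNReal.toReal_ofReal (hpsi _ (auxInd_nonneg _))]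
  · intro f g hf hg _ h1 h2
    rw [map_add, map_add, h1, h2]
  · exact isClosed_eq (auxP μ _).continuous psi.continuous

lemma aux_pos_of_weak (f : ℕ → Lp ℝ 1 μ) (y : Lp ℝ 1 μ) (hf : ∀ j, 0 ≤ f j)
    (h : ∀ l : Lp ℝ 1 μ →L[ℝ] ℝ,
      Tendsto (fun j => l (f j)) (hyperfilter ℕ : Filter ℕ) (𝓝 (l y))) : 0 ≤ y := by
  rw [← Lp.coeFn_nonneg]
  apply ae_nonneg_of_forall_setIntegral_nonneg (L1.integrable_coeFn y)
  intro s hs hsf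
  set p : Lp ℝ ⊤ μ := indicatorConstLp ⊤ hs hsf.ne 1 with hp
  have hp0 : 0 ≤ p := by
    rw [← Lp.coeFn_nonneg]
    filter_upwards [indicatorConstLp_coeFn (p := ⊤) (hs := hs) (hμs := hsf.ne) (c := (1:ℝ))] with x hx
    rw [hp, hx]
    exact Set.indicator_nonneg (fun _ _ => zero_le_one) x
  have e : auxP μ p y = ∫ x in s, y x ∂μ := by
    rw [auxP_apply, ← integral_indicator hs]
    apply integral_congr_ae
    filter_upwards [indicatorConstLp_coeFn (p := ⊤) (hs := hs) (hμs := hsf.ne) (c := (1:ℝ))] with x hx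
    rw [hp, hx]
    by_cases hx : x ∈ s <;> simp [hx]
  rw [← e]
  exact ge_of_tendsto (h (auxP μ p)) (Eventually.of_forall fun j => auxP_nonneg hp0 (hf j))

lemma auxP_mono {p q : Lp ℝ ⊤ μ} {f : Lp ℝ 1 μ} (hf : 0 ≤ f) (h : p ≤ q) :
    auxP μ p f ≤ auxP μ q f := by
  have := auxP_nonneg (sub_nonneg.2 h) hf
  rw [map_sub, sub_apply] at this
  linarith

lemma auxP_le_norm {p : Lp ℝ ⊤ μ} (h : ∀ᵐ x ∂μ, |p x| ≤ 1) (f : Lp ℝ 1 μ) :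
    auxP μ p f ≤ ‖f‖ := by
  rw [auxP_apply, L1.norm_eq_integral_norm]
  refine integral_mono_ae (auxP_int p f) (L1.integrable_coeFn f).norm ?_
  filter_upwards [h] with x hx
  calc p x * f x ≤ |p x * f x| := le_abs_self _
    _ = |p x| * |f x| := abs_mul _ _
    _ ≤ 1 * |f x| := by gcongr
    _ = ‖f x‖ := by rw [one_mul]; rfl

lemma aux_small (p : ℕ → Lp ℝ ⊤ μ) (hp0 : ∀ j, 0 ≤ p j) (hp1 : ∀ j, ∀ᵐ x ∂μ, p j x ≤ 1)
    (hlim : ∀ᵐ x ∂μ, Tendsto (fun j => p j x) atTop (𝓝 0))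
    (x w z : ℕ → Lp ℝ 1 μ) (y : Lp ℝ 1 μ) (hx : ∀ j, 0 ≤ x j) (hxw : ∀ j, x j = w j + z j) {δ : ℝ}
    (hw : ∀ j, ‖w j‖ ≤ δ) (hz : ∀ l : Lp ℝ 1 μ →L[ℝ] ℝ,
      Tendsto (fun j => l (z j)) (hyperfilter ℕ : Filter ℕ) (𝓝 (l y))) {ε : ℝ} (hε : 0 < ε) :
    ∀ᶠ j in (hyperfilter ℕ : Filter ℕ), auxP μ (p j) (x j) ≤ δ + ε := by
  let v : ℕ → α → ℝ := fun j a => max 0 (min 1 (p j a))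
  have hvm : ∀ j, Measurable (v j) := fun j =>
    measurable_const.max (measurable_const.min (Lp.stronglyMeasurable (p j)).measurable)
  have hv0 : ∀ j a, 0 ≤ v j a := fun j a => le_max_left _ _
  have hv1 : ∀ j a, v j a ≤ 1 := fun j a => max_le zero_le_one (min_le_left _ _)
  have hvp : ∀ᵐ a ∂μ, ∀ j, v j a = p j a := by
    rw [ae_all_iff]
    intro j
    filter_upwards [hp1 j, (Lp.coeFn_nonneg _).2 (hp0 j)] with a h1 h2
    simp only [v]
    rw [min_eq_right h1]; exact max_eq_right h2
  let u : ℕ → α → ℝ := fun n a => ⨆ i, v (n + i) a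
  have hbd : ∀ n a, BddAbove (Set.range fun i => v (n + i) a) := fun n a =>
    ⟨1, by rintro _ ⟨i, rfl⟩; exact hv1 _ _⟩
  have hum : ∀ n, Measurable (u n) := fun n => Measurable.iSup fun i => hvm _
  have hu0 : ∀ n a, 0 ≤ u n a := fun n a => (hv0 (n + 0) a).trans (le_ciSup (hbd n a) 0)
  have hu1 : ∀ n a, u n a ≤ 1 := fun n a => ciSup_le fun i => hv1 _ _
  have huv : ∀ n j a, n ≤ j → v j a ≤ u n a := by
    intro n j a h
    obtain ⟨i, rfl⟩ := Nat.exists_eq_add_of_le h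
    exact le_ciSup (hbd n a) i
  have hmem : ∀ n, MemLp (u n) ⊤ μ := fun n =>
    memLp_top_of_bound (hum n).aestronglyMeasurable 1 (Eventually.of_forall fun a => by
      rw [Real.norm_of_nonneg (hu0 n a)]; exact hu1 n a)
  set U : ℕ → Lp ℝ ⊤ μ := fun n => (hmem n).toLp _ with hU
  have hUlim : Tendsto (fun n => auxP μ (U n) y) atTop (𝓝 0) := by
    simp_rw [auxP_apply]
    have : ∀ n, ∫ a, (U n) a * y a ∂μ = ∫ a, u n a * y a ∂μ := fun n => by
      apply integral_congr_ae
      filter_upwards [(hmem n).coeFn_toLp] with a ha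
      rw [hU, ha]
    simp_rw [this]
    have h0 : (0:ℝ) = ∫ a, (0:ℝ) ∂μ := by simp
    rw [h0]
    refine tendsto_integral_of_dominated_convergence (fun a => ‖y a‖)
      (fun n => (hum n).aestronglyMeasurable.mul (Lp.aestronglyMeasurable y))
      (L1.integrable_coeFn y).norm ?_ ?_
    · intro n
      refine Eventually.of_forall fun a => ?_
      rw [norm_mul, Real.norm_of_nonneg (hu0 n a)]
      exact mul_le_of_le_one_left (norm_nonneg _) (hu1 n a)
    · filter_upwards [hlim, hvp] with a h1 h2
      have h3 : Tendsto (fun n => u n a) atTop (𝓝 0) := by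
        rw [Metric.tendsto_atTop] at h1 ⊢
        intro e he
        obtain ⟨M, hM⟩ := h1 (e / 2) (by positivity)
        refine ⟨M, fun n hn => ?_⟩
        rw [Real.dist_eq, sub_zero, abs_of_nonneg (hu0 n a)]
        refine lt_of_le_of_lt (ciSup_le fun i => ?_) (half_lt_self he)
        have := hM (n + i) (by omega)
        rw [Real.dist_eq, sub_zero, ← h2] at this
        exact (le_abs_self _).trans this.le
      simpa using h3.mul_const (y a)
  obtain ⟨n, hn⟩ := (hUlim.eventually (gt_mem_nhds hε)).exists
  have h1 := (hz (auxP μ (U n))).eventually (gt_mem_nhds hn)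
  have h2 : ∀ᶠ j in (hyperfilter ℕ : Filter ℕ), n ≤ j :=
    Nat.hyperfilter_le_atTop (eventually_ge_atTop n)
  filter_upwards [h1, h2] with j h1 h2
  have h3 : p j ≤ U n := by
    rw [← Lp.coeFn_le]
    filter_upwards [(hmem n).coeFn_toLp, hvp] with a ha hb
    rw [hU, ha, ← hb]
    exact huv n j a h2
  refine (auxP_mono (hx j) h3).trans ?_
  rw [hxw, map_add]
  have h4 : auxP μ (U n) (w j) ≤ ‖w j‖ := by
    apply auxP_le_norm
    filter_upwards [(hmem n).coeFn_toLp] with a ha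
    rw [hU, ha, abs_of_nonneg (hu0 n a)]
    exact hu1 n a
  linarith [hw j]

lemma aux_small' (p : ℕ → Lp ℝ ⊤ μ) (hp0 : ∀ j, 0 ≤ p j) (hp1 : ∀ j, ∀ᵐ x ∂μ, p j x ≤ 1)
    (f : Lp ℝ 1 μ) (hf : ∀ᵐ x ∂μ, 0 < f x) (hlim : ∀ ε > 0, ∀ N : ℕ, ∃ j ≥ N, auxP μ (p j) f < ε)
    {T W K : Lp ℝ 1 μ →L[ℝ] Lp ℝ 1 μ} (hT : ∀ f, 0 ≤ f → 0 ≤ T f) (hTW : T = W + K)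
    (hK : AuxWC K) (g : ℕ → Lp ℝ 1 μ) (hg0 : ∀ j, 0 ≤ g j) (hg1 : ∀ j, ‖g j‖ ≤ 1)
    {ε : ℝ} (hε : 0 < ε) (N : ℕ) : ∃ j ≥ N, auxP μ (p j) (T (g j)) ≤ ‖W‖ + ε := by
  have hf0 : 0 ≤ f := (Lp.coeFn_nonneg f).1 (hf.mono fun x hx => hx.le)
  choose t ht1 ht2 using fun i : ℕ => hlim (1 / ((i : ℝ) + 1)) (by positivity) i
  have hl : Tendsto (fun i => auxP μ (p (t i)) f) atTop (𝓝 0) :=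
    squeeze_zero (fun i => auxP_nonneg (hp0 _) hf0) (fun i => (ht2 i).le)
      tendsto_one_div_add_atTop_nhds_zero_nat
  have hm : TendstoInMeasure μ (fun i a => p (t i) a * f a) atTop (fun _ => 0) := by
    refine tendstoInMeasure_of_tendsto_eLpNorm (p := 1) one_ne_zero
      (fun i => (auxP_int _ _).aestronglyMeasurable) aestronglyMeasurable_const ?_
    have : ∀ i, eLpNorm ((fun a => p (t i) a * f a) - fun _ => 0) 1 μ =
        ENNReal.ofReal (auxP μ (p (t i)) f) := by
      intro i
      have e : ((fun a => p (t i) a * f a) - fun _ => (0:ℝ)) = fun a => p (t i) a * f a := by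
        funext a; simp
      rw [e, eLpNorm_one_eq_lintegral_enorm, auxP_apply,
        ← ofReal_integral_norm_eq_lintegral_enorm (auxP_int _ _)]
      congr 1
      apply integral_congr_ae
      filter_upwards [(Lp.coeFn_nonneg _).2 (hp0 (t i)), hf] with a h1 h2
      exact Real.norm_of_nonneg (mul_nonneg h1 h2.le)
    simp_rw [this]
    simpa using ENNReal.tendsto_ofReal hl
  obtain ⟨ns, hns, hae⟩ := hm.exists_seq_tendsto_ae
  set s : ℕ → ℕ := fun i => t (ns i) with hs
  have hsi : ∀ i, i ≤ s i := fun i => (hns.id_le i).trans (ht1 (ns i))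
  have hae' : ∀ᵐ a ∂μ, Tendsto (fun i => p (s i) a) atTop (𝓝 0) := by
    filter_upwards [hae, hf] with a h1 h2
    have := h1.mul_const (f a)⁻¹
    rw [zero_mul] at this
    refine this.congr fun i => ?_
    rw [mul_assoc, mul_inv_cancel₀ h2.ne', mul_one]
  obtain ⟨y, hy⟩ := hK 1 (fun i => g (s i)) (fun i => hg1 _)
  have := aux_small (fun i => p (s i)) (fun i => hp0 _) (fun i => hp1 _) hae'
    (fun i => T (g (s i))) (fun i => W (g (s i))) (fun i => K (g (s i))) y (fun i => hT _ (hg0 _))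
    (fun i => by rw [hTW]; rfl) (δ := ‖W‖)
    (fun i => (W.le_opNorm _).trans (mul_le_of_le_one_right (norm_nonneg _) (hg1 _))) hy hε
  obtain ⟨i, hi, hi2⟩ := (this.and (Nat.hyperfilter_le_atTop (eventually_ge_atTop N))).exists
  exact ⟨s i, le_trans hi2 (hsi i), hi⟩

end conc


section concd
variable {α : Type*} [MeasurableSpace α] {μ : Measure α}

lemma aux_cut (f : Lp ℝ 1 μ) {A : Set α} (hA : MeasurableSet A) :
    ∃ g : Lp ℝ 1 μ, ∀ᵐ x ∂μ, g x = A.indicator f x :=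
  ⟨((L1.integrable_coeFn f).indicator hA).toL1 _, Integrable.coeFn_toL1 _⟩

lemma aux_uniq_f {φ : Lp ℝ ⊤ μ} {T : Lp ℝ 1 μ →L[ℝ] Lp ℝ 1 μ} {ρ : ℝ} (hρ : 0 < ρ)
    (hT : ∀ f, 0 ≤ f → 0 ≤ T f) (hT3 : ∀ f, 0 ≤ f → f ≠ 0 → ∀ᵐ x ∂μ, 0 < T f x)
    (hφ : ∀ᵐ x ∂μ, 0 < φ x) (hφT : ∀ f, auxP μ φ (T f) = ρ * auxP μ φ f)
    {g : Lp ℝ 1 μ} (hg : T g = ρ • g) (h0 : auxP μ φ g = 0) : g ≤ 0 := by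
  have hφ0 : 0 ≤ φ := (Lp.coeFn_nonneg φ).1 (hφ.mono fun x hx => hx.le)
  set P := g ⊔ 0 with hP
  have hP0 : 0 ≤ P := le_sup_right
  by_contra hcon
  have hPne : P ≠ 0 := fun h => hcon (by rw [← h]; exact le_sup_left)
  have hPx : ∀ᵐ x ∂μ, P x = max (g x) 0 := by
    filter_upwards [Lp.coeFn_sup g 0, Lp.coeFn_zero ℝ 1 μ] with x h1 h2
    rw [hP, h1, Pi.sup_apply, h2]; rfl
  have hh : 0 ≤ T P - ρ • P := by
    rw [← Lp.coeFn_nonneg]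
    have h1 := (Lp.coeFn_le _ _).2 (aux_mono hT (le_sup_left : g ≤ P))
    rw [hg] at h1
    filter_upwards [h1, (Lp.coeFn_nonneg _).2 (hT P hP0), hPx, Lp.coeFn_sub (T P) (ρ • P),
      Lp.coeFn_smul ρ P, Lp.coeFn_smul ρ g] with x h1 h2 h3 h4 h5 h6
    rw [h4, Pi.sub_apply, h5, Pi.smul_apply, h3, smul_eq_mul]
    rw [h6, Pi.smul_apply, smul_eq_mul] at h1
    rcases max_cases (g x) 0 with h | h <;> rw [h.1]
    · simpa using h1
    · simpa using h2
  have hz : T P = ρ • P := by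
    by_contra hne
    have := auxP_pos_left hφ0 hh hφ (sub_ne_zero.2 hne)
    rw [map_sub, hφT, map_smul, smul_eq_mul, sub_self] at this
    exact lt_irrefl _ this
  have hgp : ∀ᵐ x ∂μ, 0 < g x := by
    have h1 := hT3 P hP0 hPne
    rw [hz] at h1
    filter_upwards [h1, Lp.coeFn_smul ρ P, hPx] with x h1 h2 h3
    rw [h2, Pi.smul_apply, smul_eq_mul, h3] at h1
    have := pos_of_mul_pos_right h1 hρ.le
    rcases max_cases (g x) 0 with h | h
    · rw [h.1] at this; exact this
    · rw [h.1] at this; exact absurd this (lt_irrefl _)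
  have hg0 : 0 ≤ g := (Lp.coeFn_nonneg g).1 (hgp.mono fun x hx => hx.le)
  have := auxP_pos_left hφ0 hg0 hφ (fun h => hcon (by rw [h]))
  rw [h0] at this
  exact lt_irrefl _ this

lemma aux_uniq_phi {χ : Lp ℝ ⊤ μ} {T : Lp ℝ 1 μ →L[ℝ] Lp ℝ 1 μ} {ρ : ℝ} 
    (hT : ∀ f, 0 ≤ f → 0 ≤ T f) (hT3 : ∀ f, 0 ≤ f → f ≠ 0 → ∀ᵐ x ∂μ, 0 < T f x)
    {f : Lp ℝ 1 μ} (hf : ∀ᵐ x ∂μ, 0 < f x) (hTf : T f = ρ • f)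
    (hχT : ∀ f, auxP μ χ (T f) = ρ * auxP μ χ f)
    (h0 : auxP μ χ f = 0) : χ ≤ 0 := by
  set P := χ ⊔ 0 with hP
  have hP0 : 0 ≤ P := le_sup_right
  by_contra hcon
  have hPne : P ≠ 0 := fun h => hcon (by rw [← h]; exact le_sup_left)
  have hPx : ∀ᵐ x ∂μ, P x = max (χ x) 0 := by
    filter_upwards [Lp.coeFn_sup χ 0, Lp.coeFn_zero ℝ ⊤ μ] with x h1 h2
    rw [hP, h1, Pi.sup_apply, h2]; rfl
  set A : Set α := {x | 0 < χ x} with hA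
  have hAm : MeasurableSet A :=
    measurableSet_lt measurable_const (Lp.stronglyMeasurable χ).measurable
  obtain ⟨u, hu⟩ := aux_cut f hAm
  obtain ⟨v, hv⟩ := aux_cut f hAm.compl
  have huv : f = u + v := by
    ext1
    filter_upwards [hu, hv, Lp.coeFn_add u v] with x h1 h2 h3
    rw [h3, Pi.add_apply, h1, h2]
    by_cases hx : x ∈ A <;> simp [hx]
  have hu0 : 0 ≤ u := by
    rw [← Lp.coeFn_nonneg]
    filter_upwards [hu, hf] with x h1 h2
    rw [h1]
    by_cases hx : x ∈ A <;> simp [hx, h2.le]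
  have hv0 : 0 ≤ v := by
    rw [← Lp.coeFn_nonneg]
    filter_upwards [hv, hf] with x h1 h2
    rw [h1]
    by_cases hx : x ∈ A <;> simp [hx, h2.le]
  have e1 : auxP μ χ u = auxP μ P f := by
    rw [auxP_apply, auxP_apply]
    apply integral_congr_ae
    filter_upwards [hu, hPx] with x h1 h2
    rw [h1, h2]
    by_cases hx : x ∈ A
    · rw [Set.indicator_of_mem hx, max_eq_left (le_of_lt hx)]
    · rw [Set.indicator_of_notMem hx, max_eq_right (not_lt.1 hx)]; ring
  have e2 : auxP μ P (T v) ≤ 0 := by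
    have h1 := auxP_mono (hT u hu0) (le_sup_left : χ ≤ P)
    rw [hχT, e1] at h1
    have h2 : auxP μ P (T f) = ρ * auxP μ P f := by rw [hTf, map_smul, smul_eq_mul]
    have h3 : auxP μ P (T f) = auxP μ P (T u) + auxP μ P (T v) := by
      rw [← map_add, ← map_add, ← huv]
    linarith
  have hvz : v = 0 := by
    by_contra hne
    exact absurd (auxP_pos_right hP0 (hT3 v hv0 hne) hPne) (not_lt.2 e2)
  have hχ : ∀ᵐ x ∂μ, 0 < χ x := by
    filter_upwards [hv, hf, (Lp.eq_zero_iff_ae_eq_zero).1 hvz] with x h1 h2 h3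
    by_contra hx
    rw [h3, Set.indicator_of_mem (show x ∈ Aᶜ from hx)] at h1
    exact h2.ne h1
  have hχ0 : 0 ≤ χ := (Lp.coeFn_nonneg χ).1 (hχ.mono fun x hx => hx.le)
  have := auxP_pos_right hχ0 hf (fun h => hcon (by rw [h]))
  rw [h0] at this
  exact lt_irrefl _ this

lemma aux_phi_pos {φ : Lp ℝ ⊤ μ} {T : Lp ℝ 1 μ →L[ℝ] Lp ℝ 1 μ} {ρ : ℝ} 
    (hT3 : ∀ f, 0 ≤ f → f ≠ 0 → ∀ᵐ x ∂μ, 0 < T f x)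
    {f : Lp ℝ 1 μ} (hf : ∀ᵐ x ∂μ, 0 < f x) (hφ0 : 0 ≤ φ) (hφ : φ ≠ 0)
    (hφT : ∀ f, auxP μ φ (T f) = ρ * auxP μ φ f) : ∀ᵐ x ∂μ, 0 < φ x := by
  set A : Set α := {x | φ x ≤ 0} with hA
  have hAm : MeasurableSet A :=
    measurableSet_le (Lp.stronglyMeasurable φ).measurable measurable_const
  obtain ⟨v, hv⟩ := aux_cut f hAm
  have hv0 : 0 ≤ v := by
    rw [← Lp.coeFn_nonneg]
    filter_upwards [hv, hf] with x h1 h2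
    rw [h1]
    by_cases hx : x ∈ A <;> simp [hx, h2.le]
  have e : auxP μ φ v ≤ 0 := by
    rw [auxP_apply]
    apply integral_nonpos_of_ae
    filter_upwards [hv, hf] with x h1 h2
    rw [h1]
    by_cases hx : x ∈ A
    · rw [Set.indicator_of_mem hx]; exact mul_nonpos_of_nonpos_of_nonneg hx h2.le
    · rw [Set.indicator_of_notMem hx]; simp
  have hvz : v = 0 := by
    by_contra hne
    have h1 := auxP_pos_right hφ0 (hT3 v hv0 hne) hφ
    rw [hφT, le_antisymm e (auxP_nonneg hφ0 hv0), mul_zero] at h1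
    exact lt_irrefl _ h1
  filter_upwards [hv, hf, (Lp.eq_zero_iff_ae_eq_zero).1 hvz] with x h1 h2 h3
  by_contra hx
  rw [h3, Set.indicator_of_mem (show x ∈ A from not_lt.1 hx)] at h1
  exact h2.ne h1

lemma aux_low1 {S : Lp ℝ 1 μ →L[ℝ] Lp ℝ 1 μ} (hS : ∀ f, 0 ≤ f → 0 ≤ S f) {κ : ℝ} (hκ : 0 < κ)
    {g : Lp ℝ 1 μ} (hg : 0 ≤ g) (hg0 : g ≠ 0) (h : κ • g ≤ S g) (n : ℕ) :
    1 * κ ^ n ≤ ‖S ^ n‖ := by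
  have : PosSMulMono ℝ (Lp ℝ 1 μ) := aux_psm
  have h1 : ∀ n, κ ^ n • g ≤ (S ^ n) g := by
    intro n
    induction n with
    | zero => simp
    | succ n ih =>
      have e1 := aux_mono (aux_pow_pos hS n) h
      rw [map_smul] at e1
      calc κ ^ (n+1) • g = κ • (κ ^ n • g) := by rw [smul_smul, pow_succ']
        _ ≤ κ • (S ^ n) g := smul_le_smul_of_nonneg_left ih hκ.le
        _ ≤ (S ^ n) (S g) := e1
        _ = (S ^ (n+1)) g := by rw [pow_succ]; rfl
  have hk : 0 < κ ^ n := pow_pos hκ n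
  have h2 : ‖κ ^ n • g‖ ≤ ‖(S ^ n) g‖ := by
    apply norm_le_norm_of_abs_le_abs
    rw [abs_of_nonneg (smul_nonneg hk.le hg), abs_of_nonneg (aux_pow_pos hS n g hg)]
    exact h1 n
  rw [norm_smul, Real.norm_of_nonneg hk.le] at h2
  rw [one_mul]
  exact le_of_mul_le_mul_right (h2.trans ((S ^ n).le_opNorm g)) (norm_pos_iff.2 hg0)

lemma aux_low2 [SigmaFinite μ] {S : Lp ℝ 1 μ →L[ℝ] Lp ℝ 1 μ} (hS : ∀ f, 0 ≤ f → 0 ≤ S f) {κ : ℝ}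
    (hκ : 0 < κ) {p : Lp ℝ ⊤ μ} (hp : 0 ≤ p) (hp0 : p ≠ 0)
    (h : ∀ f, 0 ≤ f → κ * auxP μ p f ≤ auxP μ p (S f)) :
    ∃ c, 0 < c ∧ ∀ n, c * κ ^ n ≤ ‖S ^ n‖ := by
  have hex : ∃ f : Lp ℝ 1 μ, ∀ᵐ x ∂μ, 0 < f x := by
    obtain ⟨g, hg0, hgm, hgi⟩ := exists_pos_lintegral_lt_of_sigmaFinite μ (ε := 1) one_ne_zero
    have hi : Integrable (fun x => (g x : ℝ)) μ := by
      refine ⟨hgm.coe_nnreal_real.aestronglyMeasurable, ?_⟩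
      rw [hasFiniteIntegral_iff_enorm]
      simpa using hgi.trans one_lt_top
    refine ⟨hi.toL1 _, ?_⟩
    filter_upwards [hi.coeFn_toL1] with x hx
    rw [hx]; exact hg0 x
  obtain ⟨f, hf⟩ := hex
  have hf0 : 0 ≤ f := (Lp.coeFn_nonneg f).1 (hf.mono fun x hx => hx.le)
  have hpf := auxP_pos_right hp hf hp0
  have h1 : ∀ n, κ ^ n * auxP μ p f ≤ auxP μ p ((S ^ n) f) := by
    intro n
    induction n with
    | zero => simp
    | succ n ih =>
      calc κ ^ (n+1) * auxP μ p f = κ * (κ ^ n * auxP μ p f) := by ring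
        _ ≤ κ * auxP μ p ((S ^ n) f) := by gcongr
        _ ≤ auxP μ p (S ((S ^ n) f)) := h _ (aux_pow_pos hS n f hf0)
        _ = auxP μ p ((S ^ (n+1)) f) := by rw [pow_succ']; rfl
  refine ⟨auxP μ p f / ((‖auxP μ p‖ + 1) * (‖f‖ + 1)), by positivity, fun n => ?_⟩
  rw [div_mul_eq_mul_div, div_le_iff₀ (by positivity)]
  calc auxP μ p f * κ ^ n ≤ auxP μ p ((S ^ n) f) := by rw [mul_comm]; exact h1 n
    _ ≤ ‖auxP μ p ((S ^ n) f)‖ := le_abs_self _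
    _ ≤ ‖auxP μ p‖ * ‖(S ^ n) f‖ := (auxP μ p).le_opNorm _
    _ ≤ (‖auxP μ p‖ + 1) * (‖S ^ n‖ * (‖f‖ + 1)) := by
        gcongr
        · linarith
        · exact ((S ^ n).le_opNorm _).trans (by gcongr; linarith)
    _ = _ := by ring
end concd

section conce
variable {α : Type*} [MeasurableSpace α] {μ : Measure α}

lemma aux_weakstar {X : Type*} [NormedAddCommGroup X] [NormedSpace ℝ X] (q : ℕ → X →L[ℝ] ℝ)
    (hq : ∀ j, ‖q j‖ ≤ 1) : ∃ q0 : X →L[ℝ] ℝ, ∀ x,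
      Tendsto (fun j => q j x) (hyperfilter ℕ : Filter ℕ) (𝓝 (q0 x)) := by
  have hc := WeakDual.isCompact_closedBall (𝕜 := ℝ) (0 : StrongDual ℝ X) 1
  let u : ℕ → WeakDual ℝ X := fun j => StrongDual.toWeakDual (q j)
  obtain ⟨q0, -, h0⟩ := hc.ultrafilter_le_nhds' ((hyperfilter ℕ).map u) (by
    rw [Ultrafilter.mem_map]
    refine univ_mem' fun j => ?_
    simp only [Set.mem_preimage, Metric.mem_closedBall, dist_zero_right]
    exact hq j)
  refine ⟨WeakDual.toStrongDual q0, fun x => ?_⟩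
  have : Tendsto u (hyperfilter ℕ : Filter ℕ) (𝓝 q0) := h0
  exact ((WeakDual.eval_continuous x).tendsto q0).comp this

lemma aux_exist [SigmaFinite μ] {S W K : Lp ℝ 1 μ →L[ℝ] Lp ℝ 1 μ} (hS : ∀ f, 0 ≤ f → 0 ≤ S f)
    {k : ℕ} {κ c : ℝ} (hκ : 0 < κ) (hc : 0 < c) (hlow : ∀ n, c * κ ^ n ≤ ‖S ^ n‖)
    (h2 : S ^ k = W + K) (hW : ‖W‖ < κ ^ k) (hK : AuxWC K)
    (h3 : ∀ f, 0 ≤ f → f ≠ 0 → ∀ᵐ x ∂μ, 0 < (S ^ k) f x) :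
    ∃ (r : ℝ) (f : Lp ℝ 1 μ) (φ : Lp ℝ ⊤ μ), 0 < r ∧ (∀ᵐ x ∂μ, 0 < f x) ∧ S f = r • f ∧
      0 ≤ φ ∧ φ ≠ 0 ∧ ∀ f, auxP μ φ (S f) = r * auxP μ φ f := by
  have : PosSMulMono ℝ (Lp ℝ 1 μ) := aux_psm
  obtain ⟨r, lam, R, g, hκr, hlam, hlr, hR0, hSR, hRS, hRn, hg⟩ :=
    aux_seq hS (auxI μ) auxI_norm hκ hc hlow
  have hr : 0 < r := hκ.trans_le hκr
  have hWr : ‖W‖ < r ^ k := hW.trans_le (by gcongr)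
  have hRpos : ∀ j, 0 < ‖R j‖ := fun j => lt_of_lt_of_le (by positivity) (hRn j)
  have hj1 : Tendsto (fun j : ℕ => (j : ℝ) + 1) atTop atTop :=
    tendsto_atTop_add_const_right _ _ tendsto_natCast_atTop_atTop
  have hRinv : Tendsto (fun j => ‖R j‖⁻¹) atTop (𝓝 0) :=
    tendsto_inv_atTop_zero.comp (tendsto_atTop_mono hRn hj1)
  have hRgpos : ∀ j, 0 < ‖R j (g j)‖ := fun j =>
    lt_of_lt_of_le (by have := hRpos j; positivity) (hg j).2.2
  have hRginv : Tendsto (fun j => ‖R j (g j)‖⁻¹) atTop (𝓝 0) := by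
    refine squeeze_zero (fun j => by positivity) (fun j => ?_)
      (by simpa using hRinv.const_mul 2)
    have h1 := hRpos j
    rw [← div_eq_mul_inv, inv_eq_one_div, div_le_div_iff₀ (hRgpos j) h1]
    have := (hg j).2.2
    linarith
  -- step 2: the eigenvector
  obtain ⟨y, hy, hylim⟩ := aux_weak_limit hK h2 hr hWr
    (fun j => ‖R j (g j)‖⁻¹ • R j (g j))
    (fun j => by rw [norm_smul, norm_inv, norm_norm, inv_mul_cancel₀ (hRgpos j).ne']) (by
      rw [tendsto_zero_iff_norm_tendsto_zero]
      have hz : Tendsto (fun j => |lam j - r| + |lam j| * ‖R j (g j)‖⁻¹) atTop (𝓝 0) := by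
        have e1 : Tendsto (fun j => |lam j - r|) atTop (𝓝 0) := by
          simpa using (hlam.sub_const r).abs
        simpa using e1.add (hlam.abs.mul hRginv)
      refine squeeze_zero (fun j => norm_nonneg _) (fun j => ?_) hz
      have e : S (‖R j (g j)‖⁻¹ • R j (g j)) - r • (‖R j (g j)‖⁻¹ • R j (g j)) =
          (lam j - r) • (‖R j (g j)‖⁻¹ • R j (g j)) - (lam j * ‖R j (g j)‖⁻¹) • g j := by
        rw [map_smul, hSR]
        module
      rw [e]
      refine (norm_sub_le _ _).trans ?_
      rw [norm_smul, norm_smul, norm_smul, norm_inv, norm_norm, inv_mul_cancel₀ (hRgpos j).ne',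
        mul_one, norm_mul, norm_inv, norm_norm, Real.norm_eq_abs, Real.norm_eq_abs]
      exact add_le_add le_rfl (mul_le_of_le_one_right (by positivity) (hg j).2.1))
  have hy0 : 0 ≤ y := aux_pos_of_weak _ y (fun j => smul_nonneg (by positivity)
    (hR0 j _ (hg j).1)) hylim
  have hyI : auxI μ y = 1 := by
    refine tendsto_nhds_unique (hylim (auxI μ)) ?_
    have : (fun j => auxI μ (‖R j (g j)‖⁻¹ • R j (g j))) = fun _ => (1:ℝ) := by
      funext j
      rw [map_smul, auxI_norm _ (hR0 j _ (hg j).1), smul_eq_mul, inv_mul_cancel₀ (hRgpos j).ne']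
    rw [this]
    exact tendsto_const_nhds
  have hyne : y ≠ 0 := by
    rintro rfl
    simp at hyI
  have hyk : ∀ n, (S ^ n) y = r ^ n • y := by
    intro n
    induction n with
    | zero => simp
    | succ n ih =>
      rw [pow_succ, mul_apply_eq_comp, hy, map_smul, ih, smul_smul, pow_succ']
  have hypos : ∀ᵐ x ∂μ, 0 < y x := by
    have := h3 y hy0 hyne
    rw [hyk] at this
    filter_upwards [this, Lp.coeFn_smul (r ^ k) y] with x h1 h2
    rw [h2, Pi.smul_apply, smul_eq_mul] at h1
    exact pos_of_mul_pos_right h1 (by positivity)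
  -- step 3: the dual eigenvector
  let q : ℕ → Lp ℝ 1 μ →L[ℝ] ℝ := fun j => ‖R j‖⁻¹ • (auxI μ ∘L R j)
  have hqa : ∀ j f, q j f = ‖R j‖⁻¹ * auxI μ (R j f) := fun j f => rfl
  have hq1 : ∀ j, ‖q j‖ ≤ 1 := by
    intro j
    refine ContinuousLinearMap.opNorm_le_bound _ zero_le_one fun f => ?_
    rw [hqa, norm_mul, norm_inv, norm_norm, one_mul, inv_mul_le_iff₀ (hRpos j)]
    exact (auxI_le _).trans ((R j).le_opNorm f)
  have hq0 : ∀ j f, 0 ≤ f → 0 ≤ q j f := by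
    intro j f hf
    rw [hqa, auxI_norm _ (hR0 j f hf)]
    positivity
  have hqS : ∀ j f, q j (S f) = lam j * q j f - lam j * (‖R j‖⁻¹ * auxI μ f) := by
    intro j f
    rw [hqa, hqa, hRS, map_smul, map_sub, smul_eq_mul]
    ring
  have hIinv : ∀ (x : ℕ → Lp ℝ 1 μ) (C : ℝ), (∀ j, ‖x j‖ ≤ C) →
      Tendsto (fun j => lam j * (‖R j‖⁻¹ * auxI μ (x j))) atTop (𝓝 0) := by
    intro x C hx
    have : Tendsto (fun j => ‖R j‖⁻¹ * auxI μ (x j)) atTop (𝓝 0) := by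
      refine squeeze_zero_norm (fun j => ?_) (by simpa using hRinv.mul_const C)
      rw [norm_mul, norm_inv, norm_norm]
      gcongr
      exact (auxI_le _).trans (hx j)
    simpa using hlam.mul this
  obtain ⟨q0, hq0lim⟩ := aux_weakstar q hq1
  have hhyp : (hyperfilter ℕ : Filter ℕ) ≤ atTop := by
    rw [← Nat.cofinite_eq_atTop]; exact hyperfilter_le_cofinite
  have hq00 : ∀ f, 0 ≤ f → 0 ≤ q0 f := fun f hf =>
    ge_of_tendsto (hq0lim f) (Eventually.of_forall fun j => hq0 j f hf)
  have hq0S : ∀ f, q0 (S f) = r * q0 f := by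
    intro f
    refine tendsto_nhds_unique (hq0lim (S f)) ?_
    simp_rw [hqS]
    have h1 := (hIinv (fun _ => f) ‖f‖ (fun _ => le_rfl)).mono_left hhyp
    simpa using ((hlam.mono_left hhyp).mul (hq0lim f)).sub h1
  have hq0ne : q0 ≠ 0 := by
    rintro rfl
    choose p hp0 hp1 hp using fun j => aux_rep (q j) (hq0 j)
    have hp1' : ∀ j, ∀ᵐ x ∂μ, p j x ≤ 1 := fun j => (hp1 j).mono fun x hx => hx.trans (hq1 j)
    have hrk : 0 < r ^ k := pow_pos hr k
    obtain ⟨n, hn⟩ := exists_pow_lt_of_lt_one (show (0:ℝ) < 1/8 by norm_num)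
      ((div_lt_one hrk).2 hWr)
    rw [div_pow, div_lt_iff₀ (by positivity)] at hn
    obtain ⟨K', hK', hTn⟩ := aux_wc_pow hK h2 (n+1)
    set m := k * (n+1) with hm
    rw [← pow_mul, ← hm] at hTn
    have hrm : r ^ m = (r ^ k) ^ n * r ^ k := by rw [hm, pow_mul, pow_succ]
    have hrm0 : 0 < r ^ m := pow_pos hr m
    have hWm : ‖W ^ (n+1)‖ ≤ r ^ m / 8 := by
      refine (norm_pow_le' W n.succ_pos).trans ?_
      rw [Nat.succ_eq_add_one, pow_succ, hrm]
      have : ‖W‖ ^ n * ‖W‖ ≤ (1/8 * (r^k)^n) * r ^ k := by gcongr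
      linarith
    have hd : ∀ m, Tendsto (fun j => q j ((S ^ m) (g j)) - lam j ^ m * q j (g j)) atTop (𝓝 0) := by
      intro m
      induction m with
      | zero => simp
      | succ m ih =>
        have h1 := hIinv (fun j => (S ^ m) (g j)) ‖S ^ m‖ (fun j =>
          ((S ^ m).le_opNorm _).trans (mul_le_of_le_one_right (norm_nonneg _) (hg j).2.1))
        have h2 := (hlam.mul ih).sub h1
        rw [mul_zero, sub_zero] at h2
        refine h2.congr fun j => ?_
        rw [pow_succ' S, mul_apply_eq_comp, hqS]
        ring
    have hqg : ∀ j, 1/2 ≤ q j (g j) := by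
      intro j
      rw [hqa, auxI_norm _ (hR0 j _ (hg j).1)]
      have h1 := hRpos j
      rw [inv_mul_eq_div, le_div_iff₀ h1]
      have := (hg j).2.2
      linarith
    have hev : ∀ᶠ j in atTop, -(r ^ m / 8) < q j ((S ^ m) (g j)) - lam j ^ m * q j (g j) :=
      (hd m).eventually (lt_mem_nhds (by linarith))
    obtain ⟨N, hN⟩ := eventually_atTop.1 hev
    obtain ⟨j, hjN, hj⟩ := aux_small' p hp0 hp1' y hypos (by
      intro ε hε N
      have h1 := (hq0lim y).eventually (gt_mem_nhds (show (0 : Lp ℝ 1 μ →L[ℝ] ℝ) y < ε by simpa using hε))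
      have h2 : ∀ᶠ j in (hyperfilter ℕ : Filter ℕ), N ≤ j := hhyp (eventually_ge_atTop N)
      obtain ⟨j, h3, h4⟩ := (h1.and h2).exists
      exact ⟨j, h4, by rw [hp]; exact h3⟩) (aux_pow_pos hS m) hTn hK' g (fun j => (hg j).1)
      (fun j => (hg j).2.1) (show 0 < r ^ m / 8 by positivity) N
    have h1 := hN j hjN
    rw [hp] at hj
    have h2 : r ^ m * (1/2) ≤ lam j ^ m * q j (g j) := by
      have := hlr j
      have := hqg j
      have : 0 ≤ lam j := by linarith
      gcongr
    linarith
  obtain ⟨φ, hφ0, -, hφ⟩ := aux_rep q0 hq00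
  refine ⟨r, y, φ, hr, hypos, hy, hφ0, ?_, fun f => by rw [hφ, hφ, hq0S]⟩
  rintro rfl
  apply hq0ne
  ext f
  rw [← hφ]
  simp
end conce

section concf
variable {α : Type*} [MeasurableSpace α] {μ : Measure α}
set_option maxHeartbeats 2000000 in
lemma aux_main [SigmaFinite μ] (S W K : Lp ℝ 1 μ →L[ℝ] Lp ℝ 1 μ)
    (hSpos : ∀ f : Lp ℝ 1 μ, 0 ≤ f → 0 ≤ S f) (k : ℕ) (κ₀ : ℝ) (hκ₀ : 0 < κ₀)
    (h1 : (∃ g₀ : Lp ℝ 1 μ, 0 ≤ g₀ ∧ g₀ ≠ 0 ∧ κ₀ • g₀ ≤ S g₀) ∨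
      (∃ ψ₀ : Lp ℝ ⊤ μ, 0 ≤ ψ₀ ∧ ψ₀ ≠ 0 ∧ ∀ f : Lp ℝ 1 μ,
          0 ≤ f → κ₀ * auxP μ ψ₀ f ≤ auxP μ ψ₀ (S f)))
    (h2 : S ^ k = W + K) (hWnorm : ‖W‖ < κ₀ ^ k)
    (hKweak : IsCompact (closure
      ((fun f => toWeakSpaceCLM ℝ _ (K f)) '' Metric.closedBall 0 1)))
    (h3 : ∀ f : Lp ℝ 1 μ, 0 ≤ f → f ≠ 0 → ∀ᵐ x ∂μ, 0 < ((S ^ k) f) x) :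
    ∃ (Λ₀ : ℝ) (f₀ : Lp ℝ 1 μ) (φ₀ : Lp ℝ ⊤ μ),
      (0 ≤ f₀ ∧ 0 ≤ φ₀ ∧ S f₀ = Λ₀ • f₀ ∧
        (∀ f : Lp ℝ 1 μ, auxP μ φ₀ (S f) = Λ₀ * auxP μ φ₀ f) ∧
        ‖φ₀‖ = 1 ∧ auxP μ φ₀ f₀ = 1) ∧
      (0 < Λ₀ ∧ (∀ᵐ x ∂μ, 0 < f₀ x) ∧ (∀ᵐ x ∂μ, 0 < φ₀ x)) ∧
      (∀ (Λ' : ℝ) (f' : Lp ℝ 1 μ) (φ' : Lp ℝ ⊤ μ),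
        0 ≤ f' → 0 ≤ φ' → S f' = Λ' • f' →
        (∀ f : Lp ℝ 1 μ, auxP μ φ' (S f) = Λ' * auxP μ φ' f) →
        ‖φ'‖ = 1 → auxP μ φ' f' = 1 →
        Λ' = Λ₀ ∧ f' = f₀ ∧ φ' = φ₀) := by
  have hKwc := aux_wc_of_compact K hKweak
  obtain ⟨c, hc, hlow⟩ : ∃ c : ℝ, 0 < c ∧ ∀ n, c * κ₀ ^ n ≤ ‖S ^ n‖ := by
    rcases h1 with ⟨g, hg, hg0, h⟩ | ⟨p, hp, hp0, h⟩
    · exact ⟨1, one_pos, aux_low1 hSpos hκ₀ hg hg0 h⟩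
    · exact aux_low2 hSpos hκ₀ hp hp0 h
  obtain ⟨r, f₁, φ₁, hr, hf1, hSf1, hφ1, hφne, hφS⟩ :=
    aux_exist hSpos hκ₀ hc hlow h2 hWnorm hKwc h3
  have hρ : 0 < r ^ k := pow_pos hr k
  have hpowf : ∀ (s : ℝ) (f : Lp ℝ 1 μ),
      S f = s • f → ∀ n, (S ^ n) f = s ^ n • f := by
    intro s f hf n
    induction n with
    | zero => simp
    | succ n ih =>
      rw [pow_succ, mul_apply_eq_comp, hf, map_smul, ih, smul_smul, pow_succ']
  have hpowφ : ∀ (s : ℝ) (φ : Lp ℝ ⊤ μ),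
      (∀ f, auxP μ φ (S f) = s * auxP μ φ f) →
      ∀ n f, auxP μ φ ((S ^ n) f) = s ^ n * auxP μ φ f := by
    intro s φ hφ n f
    induction n with
    | zero => simp
    | succ n ih =>
      rw [pow_succ', mul_apply_eq_comp, hφ, ih]; ring
  have hTpos := aux_pow_pos hSpos k
  have hφpos1 := aux_phi_pos h3 hf1 hφ1 hφne (hpowφ r φ₁ hφS k)
  have hnφ : 0 < ‖φ₁‖ := norm_pos_iff.2 hφne
  have : PosSMulMono ℝ (Lp ℝ 1 μ) := aux_psm
  have : PosSMulMono ℝ (Lp ℝ ⊤ μ) := aux_psm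
  obtain ⟨φ₀, hφ₀⟩ : ∃ φ₀, φ₀ = ‖φ₁‖⁻¹ • φ₁ := ⟨_, rfl⟩
  have hφ0 : 0 ≤ φ₀ := by rw [hφ₀]; exact smul_nonneg (by positivity) hφ1
  have hφ0n : ‖φ₀‖ = 1 := by
    rw [hφ₀, norm_smul, norm_inv, norm_norm, inv_mul_cancel₀ hnφ.ne']
  have hφ0S : ∀ f, auxP μ φ₀ (S f) = r * auxP μ φ₀ f := by
    intro f
    rw [hφ₀, map_smul, smul_apply, smul_apply, hφS,
      smul_eq_mul, smul_eq_mul]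
    ring
  have hφ0pos : ∀ᵐ x ∂μ, 0 < φ₀ x := by
    filter_upwards [hφpos1, Lp.coeFn_smul ‖φ₁‖⁻¹ φ₁] with x h1 h2
    rw [hφ₀, h2, Pi.smul_apply, smul_eq_mul]; positivity
  have hφ0ne : φ₀ ≠ 0 := by
    rintro h; rw [h, norm_zero] at hφ0n; exact zero_ne_one hφ0n
  have hcc := auxP_pos_right hφ0 hf1 hφ0ne
  obtain ⟨f₀, hf₀⟩ : ∃ f₀, f₀ = (auxP μ φ₀ f₁)⁻¹ • f₁ := ⟨_, rfl⟩
  have hf0pos : ∀ᵐ x ∂μ, 0 < f₀ x := by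
    filter_upwards [hf1, Lp.coeFn_smul (auxP μ φ₀ f₁)⁻¹ f₁] with x h1 h2
    rw [hf₀, h2, Pi.smul_apply, smul_eq_mul]; positivity
  have hf0 : 0 ≤ f₀ := (Lp.coeFn_nonneg f₀).1 (hf0pos.mono fun x hx => hx.le)
  have hSf0 : S f₀ = r • f₀ := by
    rw [hf₀, map_smul, hSf1, smul_comm]
  have hone : auxP μ φ₀ f₀ = 1 := by
    rw [hf₀, map_smul, smul_eq_mul, inv_mul_cancel₀ hcc.ne']
  refine ⟨r, f₀, φ₀, ⟨hf0, hφ0, hSf0, hφ0S, hφ0n, hone⟩, ⟨hr, hf0pos, hφ0pos⟩, ?_⟩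
  intro s f' φ' hf' hφ' hSf' hφS' hn' hone'
  have hf'ne : f' ≠ 0 := by
    rintro rfl
    simp at hone'
  have hpos := auxP_pos_left hφ0 hf' hφ0pos hf'ne
  have hs : s = r := by
    have := hφ0S f'
    rw [hSf', map_smul, smul_eq_mul] at this
    exact mul_right_cancel₀ hpos.ne' this
  subst hs
  obtain ⟨a, ha⟩ : ∃ a, a = auxP μ φ₀ f' := ⟨_, rfl⟩
  obtain ⟨b, hb⟩ : ∃ b, b = auxP μ φ' f₀ := ⟨_, rfl⟩
  have hfa : f' = a • f₀ := by
    have e1 : S (f' - a • f₀) = s • (f' - a • f₀) := by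
      rw [map_sub, map_smul, hSf', hSf0]; module
    have e2 : S (a • f₀ - f') = s • (a • f₀ - f') := by
      rw [map_sub, map_smul, hSf', hSf0]; module
    have i1 := aux_uniq_f hρ hTpos h3 hφ0pos (hpowφ s φ₀ hφ0S k) (hpowf s _ e1 k)
      (by rw [map_sub, map_smul, hone, ← ha]; simp)
    have i2 := aux_uniq_f hρ hTpos h3 hφ0pos (hpowφ s φ₀ hφ0S k) (hpowf s _ e2 k)
      (by rw [map_sub, map_smul, hone, ← ha]; simp)
    exact le_antisymm (sub_nonpos.1 i1) (sub_nonpos.1 i2)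
  have hφb : φ' = b • φ₀ := by
    have e1 : ∀ f, auxP μ (φ' - b • φ₀) (S f) = s * auxP μ (φ' - b • φ₀) f := by
      intro f
      rw [map_sub, map_smul, sub_apply, sub_apply, smul_apply,
        smul_apply, hφS', hφ0S, smul_eq_mul, smul_eq_mul]
      ring
    have e2 : ∀ f, auxP μ (b • φ₀ - φ') (S f) = s * auxP μ (b • φ₀ - φ') f := by
      intro f
      rw [map_sub, map_smul, sub_apply, sub_apply, smul_apply,
        smul_apply, hφS', hφ0S, smul_eq_mul, smul_eq_mul]
      ring
    have i1 := aux_uniq_phi hTpos h3 hf0pos (hpowf s f₀ hSf0 k) (hpowφ s _ e1 k)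
      (by rw [map_sub, map_smul, sub_apply, smul_apply, hone, ← hb]; simp)
    have i2 := aux_uniq_phi hTpos h3 hf0pos (hpowf s f₀ hSf0 k) (hpowφ s _ e2 k)
      (by rw [map_sub, map_smul, sub_apply, smul_apply, hone, ← hb]; simp)
    exact le_antisymm (sub_nonpos.1 i1) (sub_nonpos.1 i2)
  have hb0 : 0 ≤ b := by rw [hb]; exact auxP_nonneg hφ' hf0
  have hb1 : b = 1 := by
    rw [hφb, norm_smul, hφ0n, mul_one, Real.norm_of_nonneg hb0] at hn'
    exact hn'
  rw [hb1, one_smul] at hφb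
  have ha1 : a = 1 := by rw [ha, ← hφb]; exact hone'
  rw [ha1, one_smul] at hfa
  exact ⟨rfl, hfa, hφb⟩
end concf

theorem perron_eigentriplet_of_L1_semigroup_generator
    {d : ℕ}
    (S W K : Lp ℝ 1 (volume : Measure (EuclideanSpace ℝ (Fin d))) →L[ℝ]
      Lp ℝ 1 (volume : Measure (EuclideanSpace ℝ (Fin d))))
    (hSpos : ∀ f : Lp ℝ 1 (volume : Measure (EuclideanSpace ℝ (Fin d))), 0 ≤ f → 0 ≤ S f)
    (k : ℕ) (κ₀ : ℝ) (hκ₀ : 0 < κ₀)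
    (h1 : (∃ g₀ : Lp ℝ 1 (volume : Measure (EuclideanSpace ℝ (Fin d))),
        0 ≤ g₀ ∧ g₀ ≠ 0 ∧ κ₀ • g₀ ≤ S g₀) ∨
      (∃ ψ₀ : Lp ℝ ⊤ (volume : Measure (EuclideanSpace ℝ (Fin d))),
        0 ≤ ψ₀ ∧ ψ₀ ≠ 0 ∧ ∀ f : Lp ℝ 1 (volume : Measure (EuclideanSpace ℝ (Fin d))),
          0 ≤ f → κ₀ * ∫ x, ψ₀ x * f x ≤ ∫ x, ψ₀ x * (S f) x))
    (h2 : S ^ k = W + K)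
    (hWnorm : ‖W‖ < κ₀ ^ k)
    (hKweak : IsCompact (closure
      ((fun f => toWeakSpaceCLM ℝ _ (K f)) '' Metric.closedBall 0 1)))
    (h3 : ∀ f : Lp ℝ 1 (volume : Measure (EuclideanSpace ℝ (Fin d))),
      0 ≤ f → f ≠ 0 → ∀ᵐ x, 0 < ((S ^ k) f) x) :
    ∃ (Λ₀ : ℝ) (f₀ : Lp ℝ 1 (volume : Measure (EuclideanSpace ℝ (Fin d))))
      (φ₀ : Lp ℝ ⊤ (volume : Measure (EuclideanSpace ℝ (Fin d)))),
      (0 ≤ f₀ ∧ 0 ≤ φ₀ ∧ S f₀ = Λ₀ • f₀ ∧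
        (∀ f : Lp ℝ 1 (volume : Measure (EuclideanSpace ℝ (Fin d))),
          ∫ x, φ₀ x * (S f) x = Λ₀ * ∫ x, φ₀ x * f x) ∧
        ‖φ₀‖ = 1 ∧ (∫ x, φ₀ x * f₀ x) = 1) ∧
      (0 < Λ₀ ∧ (∀ᵐ x, 0 < f₀ x) ∧ (∀ᵐ x, 0 < φ₀ x)) ∧
      (∀ (Λ' : ℝ) (f' : Lp ℝ 1 (volume : Measure (EuclideanSpace ℝ (Fin d))))
        (φ' : Lp ℝ ⊤ (volume : Measure (EuclideanSpace ℝ (Fin d)))),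
        0 ≤ f' → 0 ≤ φ' → S f' = Λ' • f' →
        (∀ f : Lp ℝ 1 (volume : Measure (EuclideanSpace ℝ (Fin d))),
          ∫ x, φ' x * (S f) x = Λ' * ∫ x, φ' x * f x) →
        ‖φ'‖ = 1 → (∫ x, φ' x * f' x) = 1 →
        Λ' = Λ₀ ∧ f' = f₀ ∧ φ' = φ₀) := by
  have h := aux_main S W K hSpos k κ₀ hκ₀ (by simpa only [auxP_apply] using h1) h2 hWnorm hKweak h3
  simpa only [auxP_apply] using h
end

section
/- Let S : L¹(ℝ^d) → L¹(ℝ^d) be a positive bounded linear operator such that for some k ∈ ℕ and κ₀ > 0: (1) there exists g₀ ∈ L¹₊ \ {0} with S g₀ ≥ κ₀ g₀, or there exists ψ₀ ∈ L^∞₊ \ {0} with S* ψ₀ ≥ κ₀ ψ₀; (2) S^k = W + K with ‖W‖ < κ₀^k and K weakly compact in L¹; (3) for every f ∈ L¹₊ \ {0}, S^k f(x) > 0 for almost every x ∈ ℝ^d. Let (Λ₀, f₀, φ₀) be the triplet with S f₀ = Λ₀ f₀, S* φ₀ = Λ₀ φ₀, ‖φ₀‖_{L^∞} = ⟨φ₀,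 f₀⟩ = 1. Then there exist ζ ∈ (0, 1) and C ≥ 1 such that for every n ∈ ℕ and every f ∈ L¹(ℝ^d), ‖Λ₀^{−n} Sⁿ f − ⟨φ₀, f⟩ f₀‖_{L¹} ≤ C ζⁿ ‖f − ⟨φ₀, f⟩ f₀‖_{L¹}. -/
open MeasureTheory Filter ENNReal
namespace PerronAux

lemma weak_combo {X : Type*} [NormedAddCommGroup X] [NormedSpace ℝ X] (K : X →L[ℝ] X)
    (hK : IsCompact (closure ((fun f => toWeakSpaceCLM ℝ _ (K f)) '' Metric.closedBall 0 1)))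
    (g : ℕ → X →L[ℝ] ℝ) (hg : ∀ v, Tendsto (fun n => g n v) atTop (nhds 0))
    {ε : ℝ} (hε : 0 < ε) :
    ∃ (t : Finset ℕ) (l : ℕ → ℝ), (∀ n ∈ t, 0 ≤ l n) ∧ ∑ n ∈ t, l n = 1 ∧
      ∀ f, ‖f‖ ≤ 1 → ∑ n ∈ t, l n * g n (K f) ≤ ε := by
  classical
  have hcont : ∀ n, Continuous (fun v : WeakSpace ℝ X => g n ((toWeakSpace ℝ X).symm v)) := by
    intro n
    exact WeakBilin.eval_continuous (topDualPairing ℝ X).flip (g n)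
  obtain ⟨t, ht⟩ := hK.elim_finite_subcover
    (fun n => {v : WeakSpace ℝ X | g n ((toWeakSpace ℝ X).symm v) < ε})
    (fun n => isOpen_lt (hcont n) continuous_const) (by
      intro v _
      obtain ⟨n, hn⟩ := ((hg ((toWeakSpace ℝ X).symm v)).eventually (gt_mem_nhds hε)).exists
      exact Set.mem_iUnion.2 ⟨n, hn⟩)
  have ht' : ∀ f, ‖f‖ ≤ 1 → ∃ n ∈ t, g n (K f) < ε := by
    intro f hf
    have := ht (subset_closure ⟨f, by simpa using hf, rfl⟩)
    simpa using this
  let s : Set (t → ℝ) := {y | ∀ n, ε < y n}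
  let G : X →ₗ[ℝ] (t → ℝ) := LinearMap.pi (fun n => ((g n).comp K : X →ₗ[ℝ] ℝ))
  have hs1 : Convex ℝ s := by
    have : s = Set.pi Set.univ (fun _ : t => Set.Ioi ε) := by ext y; simp [s]
    rw [this]; exact convex_pi (fun i _ => convex_Ioi ε)
  have hs2 : IsOpen s := by
    have : s = Set.pi Set.univ (fun _ : t => Set.Ioi ε) := by ext y; simp [s]
    rw [this]; exact isOpen_set_pi Set.finite_univ (fun i _ => isOpen_Ioi)
  have ht1 : Convex ℝ (G '' Metric.closedBall 0 1) := (convex_closedBall 0 1).linear_image G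
  have hd : Disjoint s (G '' Metric.closedBall 0 1) := by
    rw [Set.disjoint_left]
    rintro y hy ⟨f, hf, rfl⟩
    obtain ⟨n, hn, h⟩ := ht' f (by simpa using hf)
    have := hy ⟨n, hn⟩
    simp only [G, LinearMap.pi_apply] at this
    exact absurd h (not_lt.2 this.le)
  obtain ⟨F, u, hF1, hF2⟩ := geometric_hahn_banach_open hs1 hs2 ht1 hd
  have hu : u ≤ 0 := by simpa using hF2 0 ⟨0, by simp, by simp⟩
  let c : t → ℝ := fun n => - F (Pi.single n 1)
  have hF : ∀ y, F y = - ∑ n, c n * y n := by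
    intro y
    conv_lhs => rw [← Finset.univ_sum_single y]
    rw [map_sum, ← Finset.sum_neg_distrib]
    refine Finset.sum_congr rfl fun n _ => ?_
    have : (Pi.single n (y n) : t → ℝ) = y n • Pi.single n 1 := by
      rw [← Pi.single_smul]; simp
    rw [this, map_smul]; simp [c]; ring
  have hc : ∀ n, 0 ≤ c n := by
    intro n
    by_contra hn
    push Not at hn
    -- go far in direction n
    let y0 : t → ℝ := fun _ => ε + 1
    have hy : ∀ r : ℝ, 0 ≤ r → F y0 - r * c n < u := by
      intro r hr
      have h1 := hF1 (y0 + r • Pi.single n 1) (by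
        intro j
        have : 0 ≤ r * (Pi.single n (1:ℝ) : t → ℝ) j := by
          apply mul_nonneg hr
          by_cases h : j = n
          · subst h; simp
          · simp [h]
        simp only [Pi.add_apply, Pi.smul_apply, smul_eq_mul, y0]; linarith)
      rw [map_add, map_smul] at h1
      simp only [smul_eq_mul] at h1
      simp only [c]; linarith
    have h2 := hy ((|F y0| + 1) / (-c n)) (by have := abs_nonneg (F y0); apply div_nonneg <;> linarith)
    have h3 : (|F y0| + 1) / (-c n) * c n = -(|F y0| + 1) := by
      have hne := hn.ne
      rw [div_neg, neg_mul, div_mul_cancel₀ _ hne]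
    rw [h3] at h2
    have := neg_abs_le (F y0)
    linarith
  have hcs : 0 < ∑ n, c n := by
    have h1 := hF1 (fun _ => ε + 1) (by intro j; simp)
    rw [hF] at h1
    rw [← Finset.sum_mul] at h1
    by_contra hh
    push Not at hh
    nlinarith
  have hue : -u ≤ ε * ∑ n, c n := by
    by_contra hh
    push Not at hh
    set δ := (-u - ε * ∑ n, c n) / (2 * ∑ n, c n) with hδ
    have hδ0 : 0 < δ := div_pos (by linarith) (by linarith)
    have h1 := hF1 (fun _ => ε + δ) (by intro j; simp [hδ0])
    rw [hF, ← Finset.sum_mul] at h1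
    have : δ * ∑ n, c n = (-u - ε * ∑ n, c n) / 2 := by rw [hδ]; field_simp
    nlinarith
  refine ⟨t, fun n => if h : n ∈ t then c ⟨n, h⟩ / ∑ n, c n else 0, ?_, ?_, ?_⟩
  · intro n hn
    simp only [hn, dite_true]
    exact div_nonneg (hc _) hcs.le
  · rw [← Finset.sum_attach]
    simp only [Finset.coe_mem, dite_true, Finset.univ_eq_attach] at *
    rw [← Finset.sum_div, div_self hcs.ne']
  · intro f hf
    have h1 := hF2 (G f) ⟨f, by simpa using hf, rfl⟩
    rw [hF] at h1
    rw [← Finset.sum_attach]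
    simp only [Finset.coe_mem, dite_true, Finset.univ_eq_attach] at *
    have h2 : ∑ n ∈ t.attach, c n * (G f) n ≤ ε * ∑ n ∈ t.attach, c n := by linarith
    have : ∑ x ∈ t.attach, c x / (∑ n ∈ t.attach, c n) * (g x) (K f)
        = (∑ n ∈ t.attach, c n * (G f) n) / ∑ n ∈ t.attach, c n := by
      rw [Finset.sum_div]
      refine Finset.sum_congr rfl fun n _ => ?_
      simp only [G, LinearMap.pi_apply, ContinuousLinearMap.coe_coe, ContinuousLinearMap.comp_apply]
      ring
    rw [this, div_le_iff₀ hcs]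
    exact h2


section
variable {α : Type*} [MeasurableSpace α] {μ : Measure α}

lemma exists_pr (a : α → ℝ) (ham : AEStronglyMeasurable a μ) (C : ℝ)
    (h : ∀ᵐ x ∂μ, ‖a x‖ ≤ C) :
    ∃ l : Lp ℝ 1 μ →L[ℝ] ℝ, ∀ f, l f = ∫ x, a x * f x ∂μ := by
  have hm : MemLp a ∞ μ := memLp_top_of_bound ham C h
  refine ⟨(ContinuousLinearMap.mul ℝ ℝ).lpPairing μ ∞ 1 (hm.toLp a), fun f => ?_⟩
  rw [ContinuousLinearMap.lpPairing_eq_integral]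
  refine integral_congr_ae ?_
  filter_upwards [hm.coeFn_toLp] with x hx
  simp [hx]

lemma int_mul (a : α → ℝ) (ham : AEStronglyMeasurable a μ) (C : ℝ)
    (h : ∀ᵐ x ∂μ, ‖a x‖ ≤ C) (f : Lp ℝ 1 μ) : Integrable (fun x => a x * f x) μ :=
  (L1.integrable_coeFn f).bdd_mul (c := C) ham h

lemma exists_setI (A : Set α) (hA : MeasurableSet A) :
    ∃ l : Lp ℝ 1 μ →L[ℝ] ℝ, ∀ f, l f = ∫ x in A, f x ∂μ := by
  obtain ⟨l, hl⟩ := exists_pr (μ := μ) (A.indicator (fun _ => (1:ℝ)))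
    ((measurable_const.indicator hA).aestronglyMeasurable) 1
    (Eventually.of_forall fun x => by by_cases h : x ∈ A <;> simp [h])
  refine ⟨l, fun f => ?_⟩
  rw [hl, ← integral_indicator hA]
  refine integral_congr_ae (Eventually.of_forall fun x => ?_)
  by_cases h : x ∈ A <;> simp [h]

lemma norm_eq_of_nonneg {f : Lp ℝ 1 μ} (hf : 0 ≤ f) : ‖f‖ = ∫ x, f x ∂μ := by
  rw [L1.norm_eq_integral_norm]
  refine integral_congr_ae ?_
  filter_upwards [(Lp.coeFn_nonneg f).2 hf] with x hx
  simpa using hx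

lemma abs_setI_le (A : Set α) (f : Lp ℝ 1 μ) : |∫ x in A, f x ∂μ| ≤ ‖f‖ := by
  rw [L1.norm_eq_integral_norm]
  calc |∫ x in A, f x ∂μ| ≤ ∫ x in A, ‖f x‖ ∂μ := by
        rw [← Real.norm_eq_abs]; exact norm_integral_le_integral_norm _
    _ ≤ _ := setIntegral_le_integral (L1.integrable_coeFn f).norm
        (Eventually.of_forall fun x => norm_nonneg _)

lemma ui_seq (W K P : Lp ℝ 1 μ →L[ℝ] Lp ℝ 1 μ) (hP : P = W + K)
    (hpos : ∀ f, 0 ≤ f → 0 ≤ P f)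
    (hK : IsCompact (closure ((fun f => toWeakSpaceCLM ℝ _ (K f)) '' Metric.closedBall 0 1)))
    (A : ℕ → Set α) (hAm : ∀ n, MeasurableSet (A n)) (hA : Antitone A) (hA0 : μ (⋂ n, A n) = 0)
    {ε : ℝ} (hε : 0 < ε) :
    ∃ N, ∀ f, 0 ≤ f → ∫ x in A N, P f x ∂μ ≤ (‖W‖ + ε) * ‖f‖ := by
  choose g hg using fun n => exists_setI (μ := μ) (A n) (hAm n)
  obtain ⟨t, l, hl, hls, hlt⟩ := weak_combo K hK g (fun v => by
    simp_rw [hg]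
    have := tendsto_setIntegral_of_antitone (μ := μ) (f := v) hAm hA
      ⟨0, (L1.integrable_coeFn v).integrableOn⟩
    rwa [setIntegral_measure_zero _ hA0] at this) hε
  refine ⟨t.sup id, fun f hf => ?_⟩
  have hlt' : ∑ n ∈ t, l n * g n (K f) ≤ ε * ‖f‖ := by
    by_cases h0 : f = 0
    · simp [h0]
    have hn : 0 < ‖f‖ := norm_pos_iff.2 h0
    have h1 := hlt (‖f‖⁻¹ • f) (by rw [norm_smul, norm_inv, norm_norm, inv_mul_cancel₀ hn.ne'])
    have : ∑ n ∈ t, l n * g n (K (‖f‖⁻¹ • f)) = ‖f‖⁻¹ * ∑ n ∈ t, l n * g n (K f) := by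
      rw [Finset.mul_sum]
      refine Finset.sum_congr rfl fun n _ => ?_
      rw [map_smul, map_smul, smul_eq_mul]; ring
    rw [this, inv_mul_le_iff₀ hn] at h1
    linarith
  have hPf := (Lp.coeFn_nonneg _).2 (hpos f hf)
  calc ∫ x in A (t.sup id), P f x ∂μ = ∑ n ∈ t, l n * ∫ x in A (t.sup id), P f x ∂μ := by
        rw [← Finset.sum_mul, hls, one_mul]
    _ ≤ ∑ n ∈ t, l n * g n (P f) := by
        refine Finset.sum_le_sum fun n hn => mul_le_mul_of_nonneg_left ?_ (hl n hn)
        rw [hg]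
        exact setIntegral_mono_set (L1.integrable_coeFn _).integrableOn
          (ae_restrict_of_ae hPf) (LE.le.eventuallyLE (hA (Finset.le_sup (f := id) hn)))
    _ = ∑ n ∈ t, l n * g n (W f) + ∑ n ∈ t, l n * g n (K f) := by
        rw [← Finset.sum_add_distrib]
        refine Finset.sum_congr rfl fun n _ => ?_
        rw [hP, _root_.add_apply, map_add]; ring
    _ ≤ ∑ n ∈ t, l n * (‖W‖ * ‖f‖) + ε * ‖f‖ := by
        refine add_le_add (Finset.sum_le_sum fun n hn => mul_le_mul_of_nonneg_left ?_ (hl n hn)) hlt'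
        rw [hg]
        exact (le_abs_self _).trans ((abs_setI_le _ _).trans (W.le_opNorm f))
    _ = _ := by rw [← Finset.sum_mul, hls]; ring

lemma ui (W K P : Lp ℝ 1 μ →L[ℝ] Lp ℝ 1 μ) (hP : P = W + K)
    (hpos : ∀ f, 0 ≤ f → 0 ≤ P f)
    (hK : IsCompact (closure ((fun f => toWeakSpaceCLM ℝ _ (K f)) '' Metric.closedBall 0 1)))
    (ν : Measure α) (hν : μ ≪ ν) {γ : ℝ} (hγ : ‖W‖ < γ) :
    ∃ δ : ℝ≥0∞, 0 < δ ∧ ∀ A, MeasurableSet A → ν A ≤ δ →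
      ∀ f, 0 ≤ f → ∫ x in A, P f x ∂μ ≤ γ * ‖f‖ := by
  by_contra hcon
  push Not at hcon
  obtain ⟨e, he0, hes⟩ := ENNReal.exists_pos_sum_of_countable (ε := 1) one_ne_zero ℕ
  choose A hAm hAν f hf hfA using fun n => hcon (e n) (by exact_mod_cast he0 n)
  have hlim : ν (limsup A atTop) = 0 := by
    apply measure_limsup_atTop_eq_zero
    exact ne_top_of_le_ne_top one_ne_top ((ENNReal.tsum_le_tsum hAν).trans hes.le)
  let B : ℕ → Set α := fun n => ⋃ i ≥ n, A i
  have hBm : ∀ n, MeasurableSet (B n) := fun n =>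
    MeasurableSet.iUnion fun i => MeasurableSet.iUnion fun _ => hAm i
  have hBa : Antitone B := by
    intro m n hmn x hx
    simp only [B, Set.mem_iUnion] at hx ⊢
    obtain ⟨i, hi, h⟩ := hx
    exact ⟨i, hmn.trans hi, h⟩
  have hB0 : μ (⋂ n, B n) = 0 := by
    apply hν
    rw [limsup_eq_iInf_iSup_of_nat] at hlim
    simpa [B] using hlim
  obtain ⟨N, hN⟩ := ui_seq W K P hP hpos hK B hBm hBa hB0 (ε := γ - ‖W‖) (by linarith)
  have h1 := hN (f N) (hf N)
  have h2 := hfA N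
  have h3 : ∫ x in A N, P (f N) x ∂μ ≤ ∫ x in B N, P (f N) x ∂μ := by
    refine setIntegral_mono_set (L1.integrable_coeFn _).integrableOn
          (ae_restrict_of_ae ((Lp.coeFn_nonneg _).2 (hpos _ (hf N))))
          (LE.le.eventuallyLE ?_)
    intro x hx
    simp only [B, Set.mem_iUnion]
    exact ⟨N, le_rfl, hx⟩
  have h4 : ‖W‖ + (γ - ‖W‖) = γ := by ring
  rw [h4] at h1
  linarith
end


section
variable {α : Type*} [MeasurableSpace α] {μ : Measure α}

lemma tendsto_trunc (f₀ f : Lp ℝ 1 μ) (hf₀ : ∀ᵐ x ∂μ, 0 < f₀ x) (hf : 0 ≤ f) :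
    Tendsto (fun n : ℕ => f ⊓ (n : ℝ) • f₀) atTop (nhds f) := by
  rw [tendsto_iff_norm_sub_tendsto_zero]
  simp_rw [L1.norm_eq_integral_norm]
  have h0 : (0 : ℝ) = ∫ x, (0 : ℝ) ∂μ := by simp
  rw [h0]
  have hfn := (Lp.coeFn_nonneg _).2 hf
  have hc : ∀ n : ℕ, ∀ᵐ x ∂μ, (f ⊓ (n : ℝ) • f₀ - f : Lp ℝ 1 μ) x = min (f x) (n * f₀ x) - f x := by
    intro n
    filter_upwards [Lp.coeFn_sub (f ⊓ (n : ℝ) • f₀) f, Lp.coeFn_inf f ((n : ℝ) • f₀),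
      Lp.coeFn_smul (n : ℝ) f₀] with x h1 h2 h3
    rw [h1, Pi.sub_apply, h2, Pi.inf_apply, h3]; simp
  have hc' := ae_all_iff.2 hc
  refine tendsto_integral_of_dominated_convergence (fun x => f x)
    (fun n => (L1.integrable_coeFn _).norm.aestronglyMeasurable) (L1.integrable_coeFn f) ?_ ?_
  · intro n
    filter_upwards [hc n, hf₀, hfn] with x h1 h2 h3
    rw [h1, norm_norm, Real.norm_eq_abs, abs_le]
    have h3' : (0:ℝ) ≤ f x := h3
    have h4 : (0:ℝ) ≤ n * f₀ x := by positivity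
    have h5 := le_min h3' h4
    have h6 := min_le_left (f x) (n * f₀ x)
    constructor <;> linarith
  · filter_upwards [hc', hf₀] with x h1 h2
    have : ∀ᶠ n : ℕ in atTop, ‖(f ⊓ (n : ℝ) • f₀ - f : Lp ℝ 1 μ) x‖ = 0 := by
      obtain ⟨N, hN⟩ := exists_nat_ge (f x / f₀ x)
      filter_upwards [eventually_ge_atTop N] with n hn
      rw [h1, min_eq_left, sub_self, norm_zero]
      have : f x / f₀ x ≤ n := hN.trans (by exact_mod_cast hn)
      rwa [div_le_iff₀ h2] at this
    exact tendsto_const_nhds.congr' (this.mono fun n hn => hn.symm)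

lemma dual_rep (f₀ : Lp ℝ 1 μ) (hf₀ : ∀ᵐ x ∂μ, 0 < f₀ x) (l : Lp ℝ 1 μ →L[ℝ] ℝ) :
    ∃ b : α → ℝ, Measurable b ∧ (∀ᵐ x ∂μ, ‖b x‖ ≤ ‖l‖) ∧ ∀ f, l f = ∫ x, b x * f x ∂μ := by
  let s : α → ℝ := fun x => √(f₀ x)
  have hsm : StronglyMeasurable s := by
    exact (Real.continuous_sqrt.measurable.comp (Lp.stronglyMeasurable f₀).measurable).stronglyMeasurable
  have hss : ∀ᵐ x ∂μ, s x ^ 2 = f₀ x := by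
    filter_upwards [hf₀] with x hx
    exact Real.sq_sqrt hx.le
  have hspos : ∀ᵐ x ∂μ, 0 < s x := by
    filter_upwards [hf₀] with x hx
    exact Real.sqrt_pos.2 hx
  have hs2 : MemLp s 2 μ := by
    rw [memLp_two_iff_integrable_sq hsm.aestronglyMeasurable]
    exact (L1.integrable_coeFn f₀).congr (hss.mono fun x hx => hx.symm)
  let J : Lp ℝ 2 μ →L[ℝ] Lp ℝ 1 μ := (ContinuousLinearMap.mul ℝ ℝ).holderL μ 2 2 1 (hs2.toLp s)
  have hJ : ∀ h : Lp ℝ 2 μ, ∀ᵐ x ∂μ, J h x = s x * h x := by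
    intro h
    filter_upwards [(ContinuousLinearMap.mul ℝ ℝ).coeFn_holder (r := 1) (hs2.toLp s) h,
      hs2.coeFn_toLp] with x h1 h2
    change ((ContinuousLinearMap.mul ℝ ℝ).holder 1 (hs2.toLp s) h) x = _
    rw [h1, h2]; rfl
  let b2 : Lp ℝ 2 μ := (InnerProductSpace.toDual ℝ (Lp ℝ 2 μ)).symm (l.comp J)
  have hb2 : ∀ h : Lp ℝ 2 μ, l (J h) = ∫ x, b2 x * h x ∂μ := by
    intro h
    have : inner ℝ b2 h = l (J h) := by
      simp only [b2, InnerProductSpace.toDual_symm_apply]; rfl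
    rw [← this, L2.inner_def]
    refine integral_congr_ae (Eventually.of_forall fun x => ?_)
    simp [mul_comm]
  have hb2s : Integrable (fun x => b2 x * s x) μ := (Lp.memLp b2).integrable_mul hs2
  have hset : ∀ A, MeasurableSet A → |∫ x in A, b2 x * s x ∂μ| ≤ ∫ x in A, ‖l‖ * f₀ x ∂μ := by
    intro A hA
    have hm : MemLp (A.indicator s) 2 μ := hs2.indicator hA
    have h1 : l (J (hm.toLp _)) = ∫ x in A, b2 x * s x ∂μ := by
      rw [hb2, ← integral_indicator hA]
      refine integral_congr_ae ?_
      filter_upwards [hm.coeFn_toLp] with x hx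
      rw [hx]
      by_cases h : x ∈ A <;> simp [h]
    have h2 : ‖J (hm.toLp _)‖ = ∫ x in A, f₀ x ∂μ := by
      rw [L1.norm_eq_integral_norm, ← integral_indicator hA]
      refine integral_congr_ae ?_
      filter_upwards [hm.coeFn_toLp, hJ (hm.toLp _), hss, hf₀] with x hx hx2 hx3 hx4
      rw [hx2, hx]
      by_cases h : x ∈ A
      · simp only [h, Set.indicator_of_mem]
        rw [← sq, hx3, Real.norm_of_nonneg hx4.le]
      · simp [h]
    rw [← h1, integral_const_mul, ← h2]
    exact l.le_opNorm _
  have hle : ∀ᵐ x ∂μ, b2 x * s x ≤ ‖l‖ * f₀ x := by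
    refine ae_le_of_forall_setIntegral_le hb2s ((L1.integrable_coeFn f₀).const_mul _) ?_
    intro A hA _
    exact (le_abs_self _).trans (hset A hA)
  have hge : ∀ᵐ x ∂μ, -(b2 x * s x) ≤ ‖l‖ * f₀ x := by
    refine ae_le_of_forall_setIntegral_le hb2s.neg ((L1.integrable_coeFn f₀).const_mul _) ?_
    intro A hA _
    rw [integral_neg]
    exact (neg_le_abs _).trans (hset A hA)
  let b : α → ℝ := fun x => b2 x / s x
  have hbm : Measurable b := (Lp.stronglyMeasurable b2).measurable.div hsm.measurable
  have hbb : ∀ᵐ x ∂μ, ‖b x‖ ≤ ‖l‖ := by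
    filter_upwards [hle, hge, hss, hspos] with x h1 h2 h3 h4
    simp only [b]
    rw [norm_div, Real.norm_of_nonneg h4.le, div_le_iff₀ h4, Real.norm_eq_abs]
    rw [← h3] at h1 h2
    refine abs_le.2 ⟨?_, ?_⟩
    · by_contra hh; push Not at hh; nlinarith
    · by_contra hh; push Not at hh; nlinarith
  refine ⟨b, hbm, hbb, ?_⟩
  obtain ⟨lb, hlb⟩ := exists_pr b hbm.aestronglyMeasurable ‖l‖ hbb
  simp_rw [← hlb]
  have hpos : ∀ f, 0 ≤ f → l f = lb f := by
    intro f hf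
    have hn : ∀ n : ℕ, l (f ⊓ (n : ℝ) • f₀) = lb (f ⊓ (n : ℝ) • f₀) := by
      intro n
      set k := f ⊓ (n : ℝ) • f₀ with hk
      have hkb : ∀ᵐ x ∂μ, 0 ≤ k x ∧ k x ≤ n * f₀ x := by
        filter_upwards [Lp.coeFn_inf f ((n : ℝ) • f₀),
          Lp.coeFn_smul (n : ℝ) f₀, (Lp.coeFn_nonneg _).2 hf, hf₀] with x h2 h3 h4 h5
        rw [hk, h2, Pi.inf_apply, h3]
        simp only [Pi.smul_apply, smul_eq_mul]
        exact ⟨le_min h4 (by positivity), min_le_right _ _⟩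
      have hm : MemLp (fun x => k x / s x) 2 μ := by
        refine (hs2.const_mul (n : ℝ)).mono
          ((Lp.stronglyMeasurable k).measurable.div hsm.measurable).aestronglyMeasurable ?_
        filter_upwards [hkb, hss, hspos] with x h1 h2 h3
        rw [Real.norm_of_nonneg (div_nonneg h1.1 h3.le), Real.norm_of_nonneg (by positivity),
          div_le_iff₀ h3]
        nlinarith [h1.2]
      have hJk : J (hm.toLp _) = k := by
        apply Lp.ext
        filter_upwards [hJ (hm.toLp _), hm.coeFn_toLp, hspos] with x h1 h2 h3
        rw [h1, h2]; field_simp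
      rw [hlb]
      conv_lhs => rw [← hJk]
      rw [hb2]
      refine integral_congr_ae ?_
      filter_upwards [hm.coeFn_toLp] with x h2
      rw [h2]; simp only [b]; ring
    have t1 := (l.continuous.tendsto f).comp (tendsto_trunc f₀ f hf₀ hf)
    have t2 := (lb.continuous.tendsto f).comp (tendsto_trunc f₀ f hf₀ hf)
    refine tendsto_nhds_unique t1 (t2.congr fun n => ?_)
    exact (hn n).symm
  intro f
  rw [← posPart_sub_negPart f, map_sub, map_sub, hpos _ (posPart_nonneg f), hpos _ (negPart_nonneg f)]
end


section
variable {α : Type*} [MeasurableSpace α] {μ : Measure α}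

lemma smul_nn {c : ℝ} (hc : 0 ≤ c) {f : Lp ℝ 1 μ} (hf : 0 ≤ f) : 0 ≤ c • f := by
  rw [← Lp.coeFn_nonneg]
  filter_upwards [Lp.coeFn_smul c f, (Lp.coeFn_nonneg f).2 hf] with x h1 h2
  rw [h1]
  exact mul_nonneg hc h2

lemma smul_mono_left {c d : ℝ} (hc : c ≤ d) {f : Lp ℝ 1 μ} (hf : 0 ≤ f) : c • f ≤ d • f := by
  rw [← sub_nonneg, ← sub_smul]
  exact smul_nn (sub_nonneg.2 hc) hf

lemma norm_add_nn {f g : Lp ℝ 1 μ} (hf : 0 ≤ f) (hg : 0 ≤ g) : ‖f + g‖ = ‖f‖ + ‖g‖ := by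
  rw [norm_eq_of_nonneg hf, norm_eq_of_nonneg hg, norm_eq_of_nonneg (add_nonneg hf hg),
    ← integral_add (L1.integrable_coeFn f) (L1.integrable_coeFn g)]
  exact integral_congr_ae (Lp.coeFn_add f g)

lemma norm_mono_nn {f g : Lp ℝ 1 μ} (hf : 0 ≤ f) (hg : f ≤ g) : ‖f‖ ≤ ‖g‖ := by
  apply norm_le_norm_of_abs_le_abs
  rwa [abs_of_nonneg hf, abs_of_nonneg (hf.trans hg)]

lemma small_set {w a : α → ℝ} (hw : Integrable w μ) (ha : Measurable a)
    (hapos : ∀ᵐ x ∂μ, 0 < a x) {ε : ℝ} (hε : 0 < ε) :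
    ∃ δ : ℝ, 0 < δ ∧ ∫ x in {x | a x < δ}, w x ∂μ ≤ ε := by
  let A : ℕ → Set α := fun n => {x | a x < 1 / ((n : ℝ) + 1)}
  have hm : ∀ n, MeasurableSet (A n) := fun n => measurableSet_lt ha measurable_const
  have hanti : Antitone A := by
    intro m n hmn x hx
    have h1 : (m : ℝ) ≤ n := by exact_mod_cast hmn
    have h2 : a x < 1 / ((n : ℝ) + 1) := hx
    have h3 : 1 / ((n : ℝ) + 1) ≤ 1 / ((m : ℝ) + 1) :=
      one_div_le_one_div_of_le (by positivity) (by linarith)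
    exact lt_of_lt_of_le h2 h3
  have h0 : μ (⋂ n, A n) = 0 := by
    refine measure_mono_null ?_ hapos
    intro x hx
    simp only [Set.mem_iInter, A, Set.mem_ofPred_eq] at hx
    simp only [Set.mem_compl_iff, Set.mem_ofPred_eq, not_lt]
    by_contra hh
    push Not at hh
    obtain ⟨n, hn⟩ := exists_nat_one_div_lt hh
    exact absurd (hx n) (not_lt.2 hn.le)
  have := tendsto_setIntegral_of_antitone (μ := μ) (f := w) hm hanti ⟨0, hw.integrableOn⟩
  rw [setIntegral_measure_zero _ h0] at this
  obtain ⟨n, hn⟩ := (this.eventually (gt_mem_nhds hε)).exists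
  exact ⟨1 / ((n : ℝ) + 1), by positivity, hn.le⟩

structure Setup (μ : Measure α) (P : Lp ℝ 1 μ →L[ℝ] Lp ℝ 1 μ) (f₀ : Lp ℝ 1 μ) (φ : α → ℝ)
    (Φ : Lp ℝ 1 μ →L[ℝ] ℝ) (γ : ℝ) : Prop where
  pos : ∀ f, 0 ≤ f → 0 ≤ P f
  irr : ∀ f, 0 ≤ f → f ≠ 0 → ∀ᵐ x ∂μ, 0 < P f x
  f0pos : ∀ᵐ x ∂μ, 0 < f₀ x
  φm : Measurable φ
  φpos : ∀ᵐ x ∂μ, 0 < φ x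
  φle : ∀ᵐ x ∂μ, φ x ≤ 1
  φess : ∀ r < 1, μ {x | r ≤ φ x} ≠ 0
  hΦ : ∀ f, Φ f = ∫ x, φ x * f x ∂μ
  Pf0 : P f₀ = f₀
  PΦ : ∀ f, Φ (P f) = Φ f
  Φf0 : Φ f₀ = 1
  γ0 : 0 < γ
  γ1 : γ < 1
  ui : ∃ δ : ℝ, 0 < δ ∧ ∀ A, MeasurableSet A → ∫ x in A, φ x * f₀ x ∂μ ≤ δ →
      ∀ f, 0 ≤ f → ∫ x in A, P f x ∂μ ≤ γ * ‖f‖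

namespace Setup
variable {P : Lp ℝ 1 μ →L[ℝ] Lp ℝ 1 μ} {f₀ : Lp ℝ 1 μ} {φ : α → ℝ}
    {Φ : Lp ℝ 1 μ →L[ℝ] ℝ} {γ : ℝ}

lemma f0nn (H : Setup μ P f₀ φ Φ γ) : 0 ≤ f₀ := by
  rw [← Lp.coeFn_nonneg]
  exact H.f0pos.mono fun x hx => hx.le

lemma φb (H : Setup μ P f₀ φ Φ γ) : ∀ᵐ x ∂μ, ‖φ x‖ ≤ 1 := by
  filter_upwards [H.φpos, H.φle] with x h1 h2
  rwa [Real.norm_of_nonneg h1.le]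

lemma φint (H : Setup μ P f₀ φ Φ γ) (f : Lp ℝ 1 μ) : Integrable (fun x => φ x * f x) μ :=
  int_mul φ H.φm.aestronglyMeasurable 1 H.φb f

lemma Φnn (H : Setup μ P f₀ φ Φ γ) {f : Lp ℝ 1 μ} (hf : 0 ≤ f) : 0 ≤ Φ f := by
  rw [H.hΦ]
  apply integral_nonneg_of_ae
  filter_upwards [H.φpos, (Lp.coeFn_nonneg f).2 hf] with x h1 h2
  exact mul_nonneg h1.le h2

lemma Φmono (H : Setup μ P f₀ φ Φ γ) {f g : Lp ℝ 1 μ} (hf : f ≤ g) : Φ f ≤ Φ g := by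
  have := H.Φnn (sub_nonneg.2 hf)
  rw [map_sub] at this; linarith

lemma Φle (H : Setup μ P f₀ φ Φ γ) {f : Lp ℝ 1 μ} (hf : 0 ≤ f) : Φ f ≤ ‖f‖ := by
  rw [H.hΦ, norm_eq_of_nonneg hf]
  refine integral_mono_ae (H.φint f) (L1.integrable_coeFn f) ?_
  filter_upwards [H.φle, (Lp.coeFn_nonneg f).2 hf] with x h1 h2
  have h2' : (0:ℝ) ≤ f x := h2
  nlinarith

lemma Pmono (H : Setup μ P f₀ φ Φ γ) {f g : Lp ℝ 1 μ} (hf : f ≤ g) : P f ≤ P g := by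
  have := H.pos _ (sub_nonneg.2 hf)
  rw [map_sub] at this
  exact sub_nonneg.1 this

lemma powpos (H : Setup μ P f₀ φ Φ γ) (n : ℕ) {f : Lp ℝ 1 μ} (hf : 0 ≤ f) : 0 ≤ (P ^ n) f := by
  induction n with
  | zero => simpa using hf
  | succ n ih => rw [pow_succ']; exact H.pos _ ih

lemma powmono (H : Setup μ P f₀ φ Φ γ) (n : ℕ) {f g : Lp ℝ 1 μ} (hf : f ≤ g) :
    (P ^ n) f ≤ (P ^ n) g := by
  have := H.powpos n (sub_nonneg.2 hf)
  rw [map_sub] at this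
  exact sub_nonneg.1 this

lemma powΦ (H : Setup μ P f₀ φ Φ γ) (n : ℕ) (f : Lp ℝ 1 μ) : Φ ((P ^ n) f) = Φ f := by
  induction n with
  | zero => simp
  | succ n ih =>
    rw [pow_succ', ← ih]
    exact H.PΦ _

lemma powf0 (H : Setup μ P f₀ φ Φ γ) (n : ℕ) : (P ^ n) f₀ = f₀ := by
  induction n with
  | zero => simp
  | succ n ih =>
    rw [pow_succ']
    change P ((P ^ n) f₀) = f₀
    rw [ih, H.Pf0]

lemma powabs (H : Setup μ P f₀ φ Φ γ) (n : ℕ) (g : Lp ℝ 1 μ) : |(P ^ n) g| ≤ (P ^ n) |g| := by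
  rw [abs_le']
  refine ⟨H.powmono n (le_abs_self g), ?_⟩
  rw [← map_neg]
  exact H.powmono n (neg_le_abs g)

lemma lyap (H : Setup μ P f₀ φ Φ γ) : ∃ C : ℝ, 0 ≤ C ∧ ∀ f, 0 ≤ f → ‖P f‖ ≤ γ * ‖f‖ + C * Φ f := by
  obtain ⟨δ, hδ, hui⟩ := H.ui
  obtain ⟨e, he, hes⟩ := small_set (H.φint f₀) H.φm H.φpos hδ
  refine ⟨e⁻¹, by positivity, fun f hf => ?_⟩
  have hA : MeasurableSet {x | φ x < e} := measurableSet_lt H.φm measurable_const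
  have h1 := hui _ hA hes f hf
  have hPf := (Lp.coeFn_nonneg _).2 (H.pos f hf)
  rw [norm_eq_of_nonneg (H.pos f hf), ← integral_add_compl hA (L1.integrable_coeFn _)]
  refine add_le_add h1 ?_
  rw [← H.PΦ, H.hΦ, ← integral_const_mul]
  calc ∫ x in {x | φ x < e}ᶜ, P f x ∂μ ≤ ∫ x in {x | φ x < e}ᶜ, e⁻¹ * (φ x * P f x) ∂μ := by
        refine setIntegral_mono_on_ae (L1.integrable_coeFn _).integrableOn
          ((H.φint _).const_mul _).integrableOn hA.compl ?_
        filter_upwards [hPf] with x hx hxA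
        simp only [Set.mem_compl_iff, Set.mem_ofPred_eq, not_lt] at hxA
        have hx' : (0:ℝ) ≤ P f x := hx
        rw [← mul_assoc]
        have : 1 ≤ e⁻¹ * φ x := by rw [inv_mul_eq_div, le_div_iff₀ he]; linarith
        nlinarith
    _ ≤ _ := by
        refine setIntegral_le_integral ((H.φint _).const_mul _) ?_
        filter_upwards [hPf, H.φpos] with x hx hx2
        exact mul_nonneg (by positivity) (mul_nonneg hx2.le hx)

lemma lyap_iter (H : Setup μ P f₀ φ Φ γ) : ∃ C : ℝ, 0 ≤ C ∧ ∀ (n : ℕ) f, 0 ≤ f →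
    ‖(P ^ n) f‖ ≤ γ ^ n * ‖f‖ + C * Φ f := by
  obtain ⟨C, hC, h⟩ := H.lyap
  have hγ := H.γ1
  have hγ0 := H.γ0
  have h1g : 0 < 1 - γ := by linarith
  refine ⟨C / (1 - γ), by positivity, fun n f hf => ?_⟩
  induction n with
  | zero => simpa using mul_nonneg (by positivity : 0 ≤ C / (1 - γ)) (H.Φnn hf)
  | succ n ih =>
    have h1 := h _ (H.powpos n hf)
    rw [H.powΦ] at h1
    rw [pow_succ']
    change ‖P ((P ^ n) f)‖ ≤ _
    have h2 : γ * (C / (1 - γ)) + C = C / (1 - γ) := by field_simp; ring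
    calc _ ≤ _ := h1
      _ ≤ γ * (γ ^ n * ‖f‖ + C / (1 - γ) * Φ f) + C * Φ f := by gcongr
      _ = γ ^ (n+1) * ‖f‖ + (γ * (C / (1 - γ)) + C) * Φ f := by ring
      _ = _ := by rw [h2]

lemma trunc (H : Setup μ P f₀ φ Φ γ) : ∃ M : ℝ, 0 < M ∧ ∀ f, 0 ≤ f →
    ‖P f - P f ⊓ (M * ‖f‖) • f₀‖ ≤ γ * ‖f‖ := by
  obtain ⟨δ, hδ, hui⟩ := H.ui
  refine ⟨δ⁻¹, by positivity, fun f hf => ?_⟩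
  by_cases h0 : f = 0
  · simp [h0]
  have hn : 0 < ‖f‖ := norm_pos_iff.2 h0
  set c := δ⁻¹ * ‖f‖ with hc
  have hc0 : 0 < c := by positivity
  let A : Set α := {x | c * f₀ x < P f x}
  have hA : MeasurableSet A := measurableSet_lt
    ((Lp.stronglyMeasurable f₀).measurable.const_mul c) (Lp.stronglyMeasurable _).measurable
  have hPf := (Lp.coeFn_nonneg _).2 (H.pos f hf)
  have hAδ : ∫ x in A, φ x * f₀ x ∂μ ≤ δ := by
    have h1 : c * ∫ x in A, φ x * f₀ x ∂μ ≤ ‖f‖ := by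
      refine le_trans ?_ (H.Φle hf)
      rw [← H.PΦ, H.hΦ, ← integral_const_mul]
      calc _ ≤ ∫ x in A, φ x * P f x ∂μ := by
            refine setIntegral_mono_on_ae ((H.φint _).const_mul _).integrableOn
              (H.φint _).integrableOn hA ?_
            filter_upwards [H.φpos] with x hx hxA
            have hxA' : c * f₀ x < P f x := hxA
            nlinarith
        _ ≤ _ := by
            refine setIntegral_le_integral (H.φint _) ?_
            filter_upwards [hPf, H.φpos] with x hx hx2
            exact mul_nonneg hx2.le hx
    have h2 : ‖f‖ = c * δ := by rw [hc]; field_simp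
    rw [h2] at h1
    exact le_of_mul_le_mul_left h1 hc0
  refine le_trans ?_ (hui A hA hAδ f hf)
  rw [norm_eq_of_nonneg (sub_nonneg.2 inf_le_left), ← integral_indicator hA]
  refine integral_mono_ae (L1.integrable_coeFn _) ((L1.integrable_coeFn _).indicator hA) ?_
  filter_upwards [Lp.coeFn_sub (P f) (P f ⊓ c • f₀), Lp.coeFn_inf (P f) (c • f₀),
    Lp.coeFn_smul c f₀, H.f0pos, hPf] with x h1 h2 h3 h4 h5
  rw [h1, Pi.sub_apply, h2, Pi.inf_apply, h3, Pi.smul_apply, smul_eq_mul]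
  by_cases hx : x ∈ A
  · simp only [hx, Set.indicator_of_mem]
    have : (0:ℝ) ≤ P f x ⊓ (c * f₀ x) := le_inf h5 (by positivity)
    linarith
  · rw [Set.indicator_of_notMem hx]
    have : P f x ≤ c * f₀ x := not_lt.1 hx
    rw [inf_of_le_left this, sub_self]

lemma trunc_iter (H : Setup μ P f₀ φ Φ γ) : ∃ M : ℝ, 0 < M ∧ ∀ (n : ℕ) f, 0 ≤ f →
    ∃ r, 0 ≤ r ∧ (P ^ n) f ≤ (M * ‖f‖) • f₀ + r ∧ ‖r‖ ≤ γ ^ n * ‖f‖ := by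
  obtain ⟨M, hM, h⟩ := H.trunc
  have hγ := H.γ1
  have hγ0 := H.γ0
  have h1g : 0 < 1 - γ := by linarith
  refine ⟨M / (1 - γ), by positivity, fun n => ?_⟩
  induction n with
  | zero =>
    intro f hf
    refine ⟨f, hf, ?_, by simp⟩
    simpa using smul_nn (by positivity : 0 ≤ M / (1 - γ) * ‖f‖) H.f0nn
  | succ n ih =>
    intro f hf
    set y := P f ⊓ (M * ‖f‖) • f₀ with hy
    have hr := h f hf
    have hr0 : 0 ≤ P f - y := sub_nonneg.2 inf_le_left
    obtain ⟨r, hr1, hr2, hr3⟩ := ih (P f - y) hr0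
    refine ⟨r, hr1, ?_, ?_⟩
    · have e1 : (P ^ (n+1)) f = (P ^ n) y + (P ^ n) (P f - y) := by
        rw [← map_add, add_sub_cancel, pow_succ]; rfl
      have e2 : (P ^ n) y ≤ (M * ‖f‖) • f₀ := by
        refine (H.powmono n inf_le_right).trans ?_
        rw [map_smul, H.powf0]
      have e3 : (P ^ n) (P f - y) ≤ (M / (1 - γ) * (γ * ‖f‖)) • f₀ + r := by
        refine hr2.trans (add_le_add_left (smul_mono_left ?_ H.f0nn) r)
        gcongr
      rw [e1]
      refine (add_le_add e2 e3).trans (le_of_eq ?_)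
      rw [← add_assoc, ← add_smul]
      congr 2
      field_simp; ring
    · refine hr3.trans ?_
      rw [pow_succ, mul_assoc]
      gcongr
end Setup
end


section
variable {α : Type*} [MeasurableSpace α] {μ : Measure α}

lemma exists_restr (B : Set α) (hB : MeasurableSet B) (f : Lp ℝ 1 μ) :
    ∃ g : Lp ℝ 1 μ, ∀ᵐ x ∂μ, g x = B.indicator f x :=
  ⟨((L1.integrable_coeFn f).indicator hB).toL1 _, Integrable.coeFn_toL1 _⟩

lemma bregman {s t M : ℝ} (ht : t ≤ M) :
    (min s M - t) ^ 2 / 2 ≤ min s M * s - min s M ^ 2 / 2 - t * s + t ^ 2 / 2 := by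
  rcases le_total s M with h | h
  · rw [min_eq_left h]; nlinarith
  · rw [min_eq_right h]; nlinarith [mul_nonneg (sub_nonneg.2 h) (sub_nonneg.2 ht)]

namespace Setup
variable {P : Lp ℝ 1 μ →L[ℝ] Lp ℝ 1 μ} {f₀ : Lp ℝ 1 μ} {φ : α → ℝ}
    {Φ : Lp ℝ 1 μ →L[ℝ] ℝ} {γ : ℝ}

lemma slice_core (H : Setup μ P f₀ φ Φ γ) : ∃ (h0 : Lp ℝ 1 μ) (B : Set α) (c : ℝ),
    0 ≤ h0 ∧ MeasurableSet B ∧ μ B ≠ 0 ∧ 0 < c ∧ 4 * c ≤ Φ h0 ∧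
    ∀ f, 0 ≤ f → ‖f‖ = 1 → (∀ᵐ x ∂μ, x ∉ B → f x = 0) → Φ (h0 - P f)⁺ ≤ c := by
  obtain ⟨M, hM, hMt⟩ := H.trunc
  have hγ := H.γ1
  have hγ0 := H.γ0
  set r0 : ℝ := (1 + γ) / 2 with hr0
  set κ : ℝ := (1 - γ) / 16 with hκ
  have hκ0 : 0 < κ := by rw [hκ]; linarith
  let B0 : Set α := {x | r0 ≤ φ x}
  have hB0 : MeasurableSet B0 := measurableSet_le measurable_const H.φm
  have hB0μ : μ B0 ≠ 0 := H.φess r0 (by rw [hr0]; linarith)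
  let D : Set (Lp ℝ 1 μ) := {f | 0 ≤ f ∧ ‖f‖ = 1 ∧ ∀ᵐ x ∂μ, x ∉ B0 → f x = 0}
  have hDne : D.Nonempty := by
    obtain ⟨g, hg⟩ := exists_restr B0 hB0 f₀
    have hgnn : 0 ≤ g := by
      rw [← Lp.coeFn_nonneg]
      filter_upwards [hg, H.f0pos] with x h1 h2
      rw [h1]
      exact Set.indicator_apply_nonneg (fun _ => h2.le)
    have hg0 : g ≠ 0 := by
      rintro rfl
      apply hB0μ
      have : ∀ᵐ x ∂μ, x ∉ B0 := by
        filter_upwards [hg, H.f0pos, Lp.coeFn_zero ℝ 1 μ] with x h1 h2 h3 hx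
        rw [h3, Set.indicator_of_mem hx] at h1
        simp at h1
        linarith
      simpa [ae_iff] using this
    have hn : 0 < ‖g‖ := norm_pos_iff.2 hg0
    refine ⟨‖g‖⁻¹ • g, smul_nn (by positivity) hgnn, ?_, ?_⟩
    · rw [norm_smul, norm_inv, norm_norm, inv_mul_cancel₀ hn.ne']
    · filter_upwards [hg, Lp.coeFn_smul ‖g‖⁻¹ g] with x h1 h2 hx
      rw [h2, Pi.smul_apply, h1, Set.indicator_of_notMem hx, smul_zero]
  let T : Lp ℝ 1 μ → α → ℝ := fun f x => min (P f x / f₀ x) M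
  have hTm : ∀ f, Measurable (T f) := fun f =>
    ((Lp.stronglyMeasurable _).measurable.div (Lp.stronglyMeasurable _).measurable).min
      measurable_const
  have hTb : ∀ f, 0 ≤ f → ∀ᵐ x ∂μ, 0 ≤ T f x ∧ T f x ≤ M := by
    intro f hf
    filter_upwards [H.f0pos, (Lp.coeFn_nonneg _).2 (H.pos f hf)] with x h1 h2
    exact ⟨le_min (div_nonneg h2 h1.le) hM.le, min_le_right _ _⟩
  have hTφ : ∀ f, 0 ≤ f → ∀ᵐ x ∂μ, ‖φ x * T f x‖ ≤ M := by
    intro f hf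
    filter_upwards [hTb f hf, H.φpos, H.φle] with x h1 h2 h3
    rw [Real.norm_of_nonneg (mul_nonneg h2.le h1.1)]
    nlinarith
  have hTφ2 : ∀ f, 0 ≤ f → ∀ᵐ x ∂μ, ‖φ x * T f x ^ 2 / 2‖ ≤ M ^ 2 := by
    intro f hf
    filter_upwards [hTb f hf, H.φpos, H.φle] with x h1 h2 h3
    rw [Real.norm_of_nonneg (by have := h2.le; positivity)]
    have : T f x ^ 2 ≤ M ^ 2 := pow_le_pow_left₀ h1.1 h1.2 2
    have h4 := sq_nonneg (T f x)
    nlinarith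
  have hI1 : ∀ f, 0 ≤ f → ∀ v : Lp ℝ 1 μ, Integrable (fun x => φ x * T f x * v x) μ :=
    fun f hf v => int_mul _ (H.φm.mul (hTm f)).aestronglyMeasurable M (hTφ f hf) v
  have hI2 : ∀ f, 0 ≤ f → Integrable (fun x => φ x * T f x ^ 2 / 2 * f₀ x) μ :=
    fun f hf => int_mul _ ((H.φm.mul ((hTm f).pow_const 2)).div_const 2).aestronglyMeasurable
      (M ^ 2) (hTφ2 f hf) f₀
  let q : Lp ℝ 1 μ → ℝ := fun f =>
    ∫ x, φ x * T f x * P f x ∂μ - ∫ x, φ x * T f x ^ 2 / 2 * f₀ x ∂μ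
  have hqM : ∀ f ∈ D, q f ≤ M := by
    rintro f ⟨hf, hf1, -⟩
    have h1 : 0 ≤ ∫ x, φ x * T f x ^ 2 / 2 * f₀ x ∂μ := by
      apply integral_nonneg_of_ae
      filter_upwards [H.φpos, H.f0pos] with x h1 h2
      have := h1.le
      have := h2.le
      simp only [Pi.zero_apply]
      positivity
    have h2 : ∫ x, φ x * T f x * P f x ∂μ ≤ M * Φ (P f) := by
      rw [H.hΦ, ← integral_const_mul]
      refine integral_mono_ae (hI1 f hf _) ((H.φint _).const_mul _) ?_
      filter_upwards [H.φpos, hTb f hf, (Lp.coeFn_nonneg _).2 (H.pos f hf)] with x h1 h2 h3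
      have h3' : (0:ℝ) ≤ P f x := h3
      have := mul_nonneg h1.le h3'
      nlinarith [h2.2]
    have h3 := H.Φle hf
    rw [H.PΦ] at h2
    rw [hf1] at h3
    simp only [q]
    nlinarith
  have hbdd : BddAbove (q '' D) := ⟨M, by rintro _ ⟨f, hf, rfl⟩; exact hqM f hf⟩
  set S := sSup (q '' D) with hS
  obtain ⟨_, ⟨f1, hf1, rfl⟩, hq1⟩ := exists_lt_of_lt_csSup (hDne.image q)
    (show S - κ ^ 2 < sSup (q '' D) by rw [← hS]; have := pow_pos hκ0 2; linarith)
  obtain ⟨la, hla⟩ := exists_pr (fun x => φ x * T f1 x)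
    (H.φm.mul (hTm f1)).aestronglyMeasurable M (hTφ f1 hf1.1)
  obtain ⟨b, hbm, hbb, hbl⟩ := dual_rep f₀ H.f0pos (la.comp P)
  set τ : ℝ := la (P f1) with hτ
  let B : Set α := B0 ∩ {x | τ - κ ^ 2 ≤ b x}
  have hB : MeasurableSet B := hB0.inter (measurableSet_le measurable_const hbm)
  have hbint : ∀ f : Lp ℝ 1 μ, Integrable (fun x => b x * f x) μ :=
    fun f => int_mul b hbm.aestronglyMeasurable _ hbb f
  have hBμ : μ B ≠ 0 := by
    intro h0
    have h1 : ∀ᵐ x ∂μ, x ∉ B := by simpa [ae_iff] using h0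
    have h2 : τ ≤ (τ - κ ^ 2) * ‖f1‖ := by
      have : τ = ∫ x, b x * f1 x ∂μ := by rw [← hbl]; rfl
      rw [norm_eq_of_nonneg hf1.1, ← integral_const_mul]
      conv_lhs => rw [this]
      refine integral_mono_ae (hbint f1) ((L1.integrable_coeFn f1).const_mul _) ?_
      filter_upwards [h1, hf1.2.2, (Lp.coeFn_nonneg _).2 hf1.1] with x h1 h2 h3
      have h3' : (0:ℝ) ≤ f1 x := h3
      by_cases hx : x ∈ B0
      · have : b x < τ - κ ^ 2 := by
          by_contra hh
          push Not at hh
          exact h1 ⟨hx, hh⟩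
        nlinarith
      · simp [h2 hx]
    rw [hf1.2.1] at h2
    have := pow_pos hκ0 2
    linarith
  have hdef : ∀ᵐ x ∂μ, (P f1 ⊓ M • f₀ : Lp ℝ 1 μ) x = T f1 x * f₀ x := by
    filter_upwards [Lp.coeFn_inf (P f1) (M • f₀), Lp.coeFn_smul M f₀, H.f0pos] with x h1 h2 h3
    rw [h1, Pi.inf_apply, h2, Pi.smul_apply, smul_eq_mul]
    simp only [T]
    rw [min_mul_of_nonneg _ _ h3.le, div_mul_cancel₀ _ h3.ne']
  refine ⟨P f1 ⊓ M • f₀, B, 2 * κ, ?_, hB, hBμ, by positivity, ?_, ?_⟩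
  · exact le_inf (H.pos _ hf1.1) (smul_nn hM.le H.f0nn)
  · have h1 := hMt f1 hf1.1
    rw [hf1.2.1, mul_one, mul_one] at h1
    have h2 := H.Φle (sub_nonneg.2 (inf_le_left : P f1 ⊓ M • f₀ ≤ P f1))
    rw [map_sub, H.PΦ] at h2
    have h3 : r0 ≤ Φ f1 := by
      have : r0 = r0 * ‖f1‖ := by rw [hf1.2.1, mul_one]
      rw [this, norm_eq_of_nonneg hf1.1, ← integral_const_mul, H.hΦ]
      refine integral_mono_ae ((L1.integrable_coeFn f1).const_mul _) (H.φint _) ?_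
      filter_upwards [hf1.2.2, (Lp.coeFn_nonneg _).2 hf1.1] with x h2 h3
      have h3' : (0:ℝ) ≤ f1 x := h3
      by_cases hx : x ∈ B0
      · exact mul_le_mul_of_nonneg_right hx h3'
      · simp [h2 hx]
    rw [hκ]
    rw [hr0] at h3
    linarith
  · intro f hf hfn hfB
    have hfD : f ∈ D := by
      refine ⟨hf, hfn, ?_⟩
      filter_upwards [hfB] with x hx hxB
      exact hx fun h => hxB h.1
    have hqf : q f ≤ S := le_csSup hbdd ⟨f, hfD, rfl⟩
    have hlf : τ - κ ^ 2 ≤ la (P f) := by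
      have h1 : la (P f) = ∫ x, b x * f x ∂μ := by rw [← hbl]; rfl
      have h2 : τ - κ ^ 2 = (τ - κ ^ 2) * ‖f‖ := by rw [hfn, mul_one]
      rw [h1, h2, norm_eq_of_nonneg hf, ← integral_const_mul]
      refine integral_mono_ae ((L1.integrable_coeFn f).const_mul _) (hbint f) ?_
      filter_upwards [hfB, (Lp.coeFn_nonneg _).2 hf] with x h2 h3
      have h3' : (0:ℝ) ≤ f x := h3
      by_cases hx : x ∈ B
      · exact mul_le_mul_of_nonneg_right hx.2 h3'
      · simp [h2 hx]
    -- the main estimate, integrated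
    have hmain : Φ (P f1 ⊓ M • f₀ - P f)⁺ ≤ κ * Φ f₀ + (1 / (2 * κ)) *
        ((∫ x, φ x * T f x * P f x ∂μ - ∫ x, φ x * T f x ^ 2 / 2 * f₀ x ∂μ) -
          ∫ x, φ x * T f1 x * P f x ∂μ + ∫ x, φ x * T f1 x ^ 2 / 2 * f₀ x ∂μ) := by
      have i1 : Integrable (fun x => φ x * T f x * P f x - φ x * T f x ^ 2 / 2 * f₀ x) μ :=
        (hI1 f hf _).sub (hI2 f hf)
      have i2 : Integrable (fun x => φ x * T f x * P f x - φ x * T f x ^ 2 / 2 * f₀ x -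
          φ x * T f1 x * P f x) μ := i1.sub (hI1 f1 hf1.1 _)
      have i3 : Integrable (fun x => φ x * T f x * P f x - φ x * T f x ^ 2 / 2 * f₀ x -
          φ x * T f1 x * P f x + φ x * T f1 x ^ 2 / 2 * f₀ x) μ := i2.add (hI2 f1 hf1.1)
      have i4 : Integrable (fun x => κ * (φ x * f₀ x)) μ := (H.φint _).const_mul _
      rw [← integral_sub (hI1 f hf _) (hI2 f hf),
        ← integral_sub i1 (hI1 f1 hf1.1 _), ← integral_add i2 (hI2 f1 hf1.1),
        ← integral_const_mul, H.hΦ, H.hΦ, ← integral_const_mul,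
        ← integral_add i4 (i3.const_mul _)]
      refine integral_mono_ae (H.φint _) (i4.add (i3.const_mul _)) ?_
      filter_upwards [Lp.coeFn_sup (P f1 ⊓ M • f₀ - P f) 0, Lp.coeFn_sub (P f1 ⊓ M • f₀) (P f),
        Lp.coeFn_zero ℝ 1 μ, hdef, hTb f1 hf1.1, H.f0pos, H.φpos] with x h1 h2 h3 h4 h5 h6 h7
      have e1 : ((P f1 ⊓ M • f₀ - P f)⁺ : Lp ℝ 1 μ) x = max (T f1 x * f₀ x - P f x) 0 := by
        change ((P f1 ⊓ M • f₀ - P f) ⊔ 0 : Lp ℝ 1 μ) x = _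
        rw [h1, Pi.sup_apply, h2, Pi.sub_apply, h3, h4]; rfl
      rw [e1]
      set s := P f x / f₀ x with hs
      have e2 : P f x = s * f₀ x := by rw [hs, div_mul_cancel₀ _ h6.ne']
      have e3 : T f x = min s M := rfl
      have e4 := bregman (s := s) h5.2
      rw [← e3] at e4
      have e5 : T f x ≤ s := min_le_left _ _
      rw [e2]
      set t := T f x
      set t0 := T f1 x
      have e6 : max (t0 * f₀ x - s * f₀ x) 0 ≤ |t - t0| * f₀ x := by
        apply max_le
        · have := neg_abs_le (t - t0)
          nlinarith
        · positivity
      have e7 : |t - t0| ≤ κ + 1 / (2 * κ) * ((t - t0) ^ 2 / 2) := by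
        rw [← sq_abs]
        have : κ + 1 / (2 * κ) * (|t - t0| ^ 2 / 2) - |t - t0| = (|t - t0| - 2 * κ) ^ 2 / (4 * κ) := by
          field_simp; ring
        have h8 : 0 ≤ (|t - t0| - 2 * κ) ^ 2 / (4 * κ) := by positivity
        linarith
      have e8 : |t - t0| ≤ κ + 1 / (2 * κ) * (t * s - t ^ 2 / 2 - t0 * s + t0 ^ 2 / 2) := by
        refine e7.trans ?_
        gcongr
      calc φ x * max (t0 * f₀ x - s * f₀ x) 0
          ≤ φ x * ((κ + 1 / (2 * κ) * (t * s - t ^ 2 / 2 - t0 * s + t0 ^ 2 / 2)) * f₀ x) := by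
            gcongr
            exact e6.trans (by gcongr)
        _ = _ := by ring
    have e1 : ∫ x, φ x * T f1 x * P f x ∂μ = la (P f) := (hla _).symm
    have e2 : ∫ x, φ x * T f1 x ^ 2 / 2 * f₀ x ∂μ = τ - q f1 := by
      simp only [q, hτ]
      rw [hla]; ring
    have e3 : ∫ x, φ x * T f x * P f x ∂μ - ∫ x, φ x * T f x ^ 2 / 2 * f₀ x ∂μ = q f := rfl
    rw [e1, e2, e3, H.Φf0] at hmain
    have e4 : q f - la (P f) + (τ - q f1) ≤ 2 * κ ^ 2 := by linarith
    have e5 : 1 / (2 * κ) * (q f - la (P f) + (τ - q f1)) ≤ 1 / (2 * κ) * (2 * κ ^ 2) := by gcongr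
    have e6 : 1 / (2 * κ) * (2 * κ ^ 2) = κ := by field_simp
    linarith

lemma slice (H : Setup μ P f₀ φ Φ γ) : ∃ (h0 : Lp ℝ 1 μ) (B : Set α) (c : ℝ),
    0 ≤ h0 ∧ MeasurableSet B ∧ μ B ≠ 0 ∧ 0 < c ∧ 4 * c ≤ Φ h0 ∧
    ∀ f, 0 ≤ f → ∀ β : ℝ, 0 ≤ β → β ≤ ∫ x in B, f x ∂μ → Φ (β • h0 - P f)⁺ ≤ β * c := by
  obtain ⟨h0, B, c, hh0, hB, hBμ, hc, hc4, h⟩ := H.slice_core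
  refine ⟨h0, B, c, hh0, hB, hBμ, hc, hc4, fun f hf β hβ hβB => ?_⟩
  rcases hβ.eq_or_lt with rfl | hβ0
  · have : ((0:ℝ) • h0 - P f)⁺ = 0 := by
      rw [posPart_eq_zero, zero_smul, zero_sub, neg_nonpos]
      exact H.pos f hf
    rw [this]; simp
  obtain ⟨g, hg⟩ := exists_restr B hB f
  have hfn := (Lp.coeFn_nonneg f).2 hf
  have hgnn : 0 ≤ g := by
    rw [← Lp.coeFn_nonneg]
    filter_upwards [hg, hfn] with x h1 h2
    rw [h1]
    exact Set.indicator_apply_nonneg (fun _ => h2)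
  have hgf : g ≤ f := by
    rw [← Lp.coeFn_le]
    filter_upwards [hg, hfn] with x h1 h2
    rw [h1]
    by_cases hx : x ∈ B
    · simp [hx]
    · simpa [hx] using h2
  have hgn : ‖g‖ = ∫ x in B, f x ∂μ := by
    rw [norm_eq_of_nonneg hgnn, ← integral_indicator hB]
    exact integral_congr_ae hg
  have hgp : 0 < ‖g‖ := by rw [hgn]; linarith
  have h1 := h (‖g‖⁻¹ • g) (smul_nn (by positivity) hgnn)
    (by rw [norm_smul, norm_inv, norm_norm, inv_mul_cancel₀ hgp.ne']) (by
      filter_upwards [hg, Lp.coeFn_smul ‖g‖⁻¹ g] with x h1 h2 hx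
      rw [h2, Pi.smul_apply, h1, Set.indicator_of_notMem hx, smul_zero])
  set y := P (‖g‖⁻¹ • g) with hy
  have h2 : β • y ≤ P f := by
    have h3 : ‖g‖ • y = P g := by
      rw [hy, map_smul, smul_smul, mul_inv_cancel₀ hgp.ne', one_smul]
    calc β • y ≤ ‖g‖ • y := smul_mono_left (by rw [hgn]; exact hβB)
            (H.pos _ (smul_nn (by positivity) hgnn))
      _ = P g := h3
      _ ≤ P f := H.Pmono hgf
  have h3 : (β • h0 - P f)⁺ ≤ β • (h0 - y)⁺ := by
    apply sup_le
    · calc β • h0 - P f ≤ β • h0 - β • y := sub_le_sub_left h2 _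
        _ = β • (h0 - y) := (smul_sub _ _ _).symm
        _ ≤ β • (h0 - y)⁺ := by
            rw [← sub_nonneg, ← smul_sub]
            exact smul_nn hβ (sub_nonneg.2 (le_posPart _))
    · exact smul_nn hβ (posPart_nonneg _)
  calc _ ≤ Φ (β • (h0 - y)⁺) := H.Φmono h3
    _ = β * Φ (h0 - y)⁺ := by rw [map_smul, smul_eq_mul]
    _ ≤ _ := by gcongr
end Setup
end


section
variable {α : Type*} [MeasurableSpace α] {μ : Measure α}

namespace Setup
variable {P : Lp ℝ 1 μ →L[ℝ] Lp ℝ 1 μ} {f₀ : Lp ℝ 1 μ} {φ : α → ℝ}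
    {Φ : Lp ℝ 1 μ →L[ℝ] ℝ} {γ : ℝ}

lemma lower (H : Setup μ P f₀ φ Φ γ) {B : Set α} (hB : MeasurableSet B) (hBμ : μ B ≠ 0)
    {M : ℝ} (hM : 0 < M) : ∃ β : ℝ, 0 < β ∧ ∀ (σ : ℝ) (h r : Lp ℝ 1 μ), 0 ≤ σ → 0 ≤ h → 0 ≤ r →
      h ≤ (M * σ) • f₀ + r → ‖r‖ ≤ σ / 4 → Φ h = σ → β * σ ≤ ∫ x in B, P h x ∂μ := by
  obtain ⟨l, hl⟩ := exists_setI (μ := μ) B hB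
  obtain ⟨b, hbm, hbb, hbl⟩ := dual_rep f₀ H.f0pos (l.comp P)
  have hbP : ∀ f, ∫ x in B, P f x ∂μ = ∫ x, b x * f x ∂μ := fun f => by
    rw [← hbl, ← hl]; rfl
  have hbint : ∀ f : Lp ℝ 1 μ, Integrable (fun x => b x * f x) μ :=
    fun f => int_mul b hbm.aestronglyMeasurable _ hbb f
  have hbpos : ∀ᵐ x ∂μ, 0 < b x := by
    let Z : Set α := {x | b x ≤ 0}
    have hZ : MeasurableSet Z := measurableSet_le hbm measurable_const
    obtain ⟨g, hg⟩ := exists_restr Z hZ f₀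
    have hgnn : 0 ≤ g := by
      rw [← Lp.coeFn_nonneg]
      filter_upwards [hg, H.f0pos] with x h1 h2
      rw [h1]
      exact Set.indicator_apply_nonneg (fun _ => h2.le)
    have hg0 : g = 0 := by
      by_contra hne
      have h1 := H.irr g hgnn hne
      have h2 : 0 < ∫ x in B, P g x ∂μ := by
        rw [integral_pos_iff_support_of_nonneg_ae
          (ae_restrict_of_ae (h1.mono fun x hx => hx.le)) (L1.integrable_coeFn _).integrableOn]
        have h3 : (μ.restrict B) (Function.support (P g))ᶜ = 0 := by
          have : ∀ᵐ x ∂(μ.restrict B), P g x ≠ 0 :=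
            ae_restrict_of_ae (h1.mono fun x hx => hx.ne')
          rw [ae_iff] at this
          convert this using 2
          ext x; simp
        rw [pos_iff_ne_zero]
        intro h4
        apply hBμ
        rw [← Measure.restrict_apply_univ, ← Set.union_compl_self (Function.support (P g))]
        exact measure_union_null h4 h3
      rw [hbP] at h2
      refine absurd h2 (not_lt.2 (integral_nonpos_of_ae ?_))
      filter_upwards [hg, H.f0pos] with x h1 h2
      rw [h1]
      by_cases hx : x ∈ Z
      · rw [Set.indicator_of_mem hx]
        exact mul_nonpos_of_nonpos_of_nonneg hx h2.le
      · simp [hx]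
    rw [hg0] at hg
    filter_upwards [hg, H.f0pos, Lp.coeFn_zero ℝ 1 μ] with x h1 h2 h3
    by_contra hx
    have hx' : x ∈ Z := not_lt.1 hx
    rw [h3, Set.indicator_of_mem hx'] at h1
    simp at h1
    linarith
  obtain ⟨δ, hδ, hδs⟩ := small_set (H.φint f₀) hbm hbpos (show 0 < 1 / (4 * M) by positivity)
  refine ⟨δ / 2, by positivity, fun σ h r hσ hh hr hhr hrn hΦh => ?_⟩
  have hA : MeasurableSet {x | b x < δ} := measurableSet_lt hbm measurable_const
  have hhn := (Lp.coeFn_nonneg h).2 hh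
  have hrn' := (Lp.coeFn_nonneg r).2 hr
  have h1 : ∫ x in {x | b x < δ}, φ x * h x ∂μ ≤ σ / 2 := by
    calc ∫ x in {x | b x < δ}, φ x * h x ∂μ
        ≤ ∫ x in {x | b x < δ}, ((M * σ) * (φ x * f₀ x) + φ x * r x) ∂μ := by
          refine setIntegral_mono_ae (H.φint _).integrableOn
            (((H.φint _).const_mul _).add (H.φint _)).integrableOn ?_
          filter_upwards [H.φpos, (Lp.coeFn_le _ _).2 hhr, Lp.coeFn_add ((M * σ) • f₀) r,
            Lp.coeFn_smul (M * σ) f₀] with x h1 h2 h3 h4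
          rw [h3, Pi.add_apply, h4, Pi.smul_apply, smul_eq_mul] at h2
          nlinarith
      _ = (M * σ) * ∫ x in {x | b x < δ}, φ x * f₀ x ∂μ + ∫ x in {x | b x < δ}, φ x * r x ∂μ := by
          rw [integral_add ((H.φint _).const_mul _).integrableOn (H.φint _).integrableOn,
            integral_const_mul]
      _ ≤ (M * σ) * (1 / (4 * M)) + σ / 4 := by
          gcongr
          refine le_trans (setIntegral_le_integral (H.φint _) ?_) (?_ : _ ≤ _)
          · filter_upwards [H.φpos, hrn'] with x h1 h2
            exact mul_nonneg h1.le h2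
          · rw [← H.hΦ]; exact (H.Φle hr).trans hrn
      _ = σ / 2 := by field_simp; ring
  have h2 : σ / 2 ≤ ∫ x in {x | b x < δ}ᶜ, φ x * h x ∂μ := by
    have := integral_add_compl hA (H.φint h)
    rw [← H.hΦ, hΦh] at this
    linarith
  rw [hbP]
  calc δ / 2 * σ = δ * (σ / 2) := by ring
    _ ≤ δ * ∫ x in {x | b x < δ}ᶜ, φ x * h x ∂μ := by gcongr
    _ = ∫ x in {x | b x < δ}ᶜ, δ * (φ x * h x) ∂μ := (integral_const_mul _ _).symm
    _ ≤ ∫ x in {x | b x < δ}ᶜ, b x * h x ∂μ := by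
        refine setIntegral_mono_on_ae ((H.φint _).const_mul _).integrableOn
          (hbint _).integrableOn hA.compl ?_
        filter_upwards [hhn, H.φle, H.φpos] with x h1 h2 h3 hx
        simp only [Set.mem_compl_iff, Set.mem_ofPred_eq, not_lt] at hx
        have h1' : (0:ℝ) ≤ h x := h1
        have : φ x * h x ≤ h x := by nlinarith
        have h5 : 0 ≤ φ x * h x := by positivity
        nlinarith
    _ ≤ _ := by
        refine setIntegral_le_integral (hbint _) ?_
        filter_upwards [hhn, hbpos] with x h1 h2
        exact mul_nonneg h2.le h1

lemma inf_bound {a x y : Lp ℝ 1 μ} : a - (a - x)⁺ - (a - y)⁺ ≤ x ⊓ y := by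
  have h1 : a - x ≤ (a - x)⁺ := le_posPart _
  have h2 : a - y ≤ (a - y)⁺ := le_posPart _
  have h3 : 0 ≤ (a - x)⁺ := posPart_nonneg _
  have h4 : 0 ≤ (a - y)⁺ := posPart_nonneg _
  apply le_inf
  · calc a - (a - x)⁺ - (a - y)⁺ ≤ a - (a - x) - 0 := by gcongr
      _ = x := by abel
  · calc a - (a - x)⁺ - (a - y)⁺ ≤ a - 0 - (a - y) := by gcongr
      _ = y := by abel

lemma contr (H : Setup μ P f₀ φ Φ γ) {R : ℝ} (hR : 0 < R) : ∃ (n : ℕ) (c : ℝ), 0 ≤ c ∧ c < 1 ∧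
    ∀ g, Φ g = 0 → ‖g‖ ≤ R * Φ |g| → Φ |(P ^ n) g| ≤ c * Φ |g| := by
  obtain ⟨h0, B, c, hh0, hB, hBμ, hc, hc4, hsl⟩ := H.slice
  obtain ⟨M, hM, hMt⟩ := H.trunc_iter
  obtain ⟨β, hβ, hlow⟩ := H.lower hB hBμ (show 0 < M * (2 * R) by positivity)
  obtain ⟨m, hm⟩ := exists_pow_lt_of_lt_one (show 0 < 1 / (4 * (2 * R)) by positivity) H.γ1
  have hγ0 := H.γ0
  have key : ∀ (σ : ℝ) (f : Lp ℝ 1 μ), 0 ≤ f → Φ f = σ → ‖f‖ ≤ 2 * R * σ →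
      Φ ((β * σ) • h0 - (P ^ (m + 2)) f)⁺ ≤ β * σ * c := by
    intro σ f hf hfσ hfn
    have hσ : 0 ≤ σ := hfσ ▸ H.Φnn hf
    obtain ⟨r, hr, hr1, hr2⟩ := hMt m f hf
    have h1 := hlow σ ((P ^ m) f) r hσ (H.powpos m hf) hr (hr1.trans ?_) ?_
      ((H.powΦ m f).trans hfσ)
    · have e : (P ^ (m + 2)) f = P (P ((P ^ m) f)) := by
        rw [pow_succ', pow_succ']; rfl
      rw [e]
      exact hsl _ (H.pos _ (H.powpos m hf)) _ (by positivity) h1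
    · refine add_le_add_left (smul_mono_left ?_ H.f0nn) r
      rw [mul_assoc]; gcongr
    · calc ‖r‖ ≤ γ ^ m * ‖f‖ := hr2
        _ ≤ (1 / (4 * (2 * R))) * (2 * R * σ) := by gcongr
        _ = σ / 4 := by field_simp
  refine ⟨m + 2, max (1 - 2 * c * β) 0, le_max_right _ _, max_lt (by nlinarith [mul_pos hc hβ]) one_pos,
    fun g hg hgn => ?_⟩
  set σ := Φ g⁺ with hσ
  have e1 : Φ g⁻ = σ := by
    have := congrArg Φ (posPart_sub_negPart g)
    rw [map_sub, hg] at this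
    linarith
  have e2 : Φ |g| = 2 * σ := by
    rw [← posPart_add_negPart, map_add, e1]; ring
  have hσ0 : 0 ≤ σ := H.Φnn (posPart_nonneg g)
  have np : ‖g⁺‖ ≤ 2 * R * σ := by
    have : ‖g⁺‖ ≤ ‖|g|‖ := norm_mono_nn (posPart_nonneg g)
      (by rw [← posPart_add_negPart]; exact le_add_of_nonneg_right (negPart_nonneg g))
    rw [norm_abs_eq_norm] at this
    rw [e2] at hgn
    linarith
  have nn : ‖g⁻‖ ≤ 2 * R * σ := by
    have : ‖g⁻‖ ≤ ‖|g|‖ := norm_mono_nn (negPart_nonneg g)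
      (by rw [← posPart_add_negPart]; exact le_add_of_nonneg_left (posPart_nonneg g))
    rw [norm_abs_eq_norm] at this
    rw [e2] at hgn
    linarith
  have k1 := key σ g⁺ (posPart_nonneg g) rfl np
  have k2 := key σ g⁻ (negPart_nonneg g) e1 nn
  set x := (P ^ (m + 2)) g⁺ with hx
  set y := (P ^ (m + 2)) g⁻ with hy
  have e3 : (P ^ (m + 2)) g = x - y := by
    rw [hx, hy, ← map_sub, posPart_sub_negPart]
  have e4 : |x - y| = x + y - (2:ℝ) • (x ⊓ y) := by
    rw [← sup_sub_inf_eq_abs_sub, two_smul, ← inf_add_sup x y, sup_comm y x, inf_comm y x]; abel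
  have e5 := H.Φmono (inf_bound (a := (β * σ) • h0) (x := x) (y := y))
  rw [map_sub, map_sub, map_smul, smul_eq_mul] at e5
  have e6 : Φ x = σ := H.powΦ _ _
  have e7 : Φ y = σ := (H.powΦ _ _).trans e1
  rw [e3, e4, map_sub, map_add, map_smul, smul_eq_mul, e6, e7, e2]
  have e8 : β * σ * (4 * c) ≤ β * σ * Φ h0 := by gcongr
  calc σ + σ - 2 * Φ (x ⊓ y) ≤ (1 - 2 * c * β) * (2 * σ) := by nlinarith
    _ ≤ _ := by gcongr; exact le_max_left _ _

lemma half (H : Setup μ P f₀ φ Φ γ) : ∃ n : ℕ, ∀ g, Φ g = 0 → ‖(P ^ n) g‖ ≤ 1 / 2 * ‖g‖ := by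
  obtain ⟨C, hC, hly⟩ := H.lyap_iter
  have hγ0 := H.γ0
  have hγ1 := H.γ1
  have ly : ∀ (n : ℕ) g, ‖(P ^ n) g‖ ≤ γ ^ n * ‖g‖ + C * Φ |g| := by
    intro n g
    have h1 := hly n |g| (abs_nonneg g)
    rw [norm_abs_eq_norm] at h1
    refine le_trans ?_ h1
    rw [← norm_abs_eq_norm]
    exact norm_mono_nn (abs_nonneg _) (H.powabs n g)
  have hΦn : ∀ g : Lp ℝ 1 μ, Φ |g| ≤ ‖g‖ := fun g => by
    have := H.Φle (abs_nonneg g)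
    rwa [norm_abs_eq_norm] at this
  have hmon : ∀ (n : ℕ) g, Φ |(P ^ n) g| ≤ Φ |g| := fun n g =>
    (H.Φmono (H.powabs n g)).trans (H.powΦ n _).le
  have hQ : ∀ (n : ℕ) g, ‖(P ^ n) g‖ ≤ (1 + C) * ‖g‖ := by
    intro n g
    have h1 := ly n g
    have h2 : γ ^ n ≤ 1 := pow_le_one₀ hγ0.le hγ1.le
    have h3 := hΦn g
    have h4 := norm_nonneg g
    nlinarith [mul_le_mul_of_nonneg_left h3 hC, mul_le_mul_of_nonneg_right h2 h4]
  set ρ : ℝ := 1 / (4 * (1 + C)) with hρ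
  have hρ0 : 0 < ρ := by positivity
  obtain ⟨n0, c, hc0, hc1, hcon⟩ := H.contr (show 0 < (1 + C) / ρ by positivity)
  obtain ⟨j, hj⟩ := exists_pow_lt_of_lt_one hρ0 hc1
  obtain ⟨l, hl⟩ := exists_pow_lt_of_lt_one hρ0 hγ1
  have hit : ∀ g, Φ g = 0 → ∀ i : ℕ, Φ |(P ^ (n0 * i)) g| ≤ max ρ (c ^ i) * ‖g‖ := by
    intro g hg i
    induction i with
    | zero =>
      simp only [mul_zero, pow_zero, one_apply_eq_self]
      have : 1 * ‖g‖ ≤ max ρ 1 * ‖g‖ := by gcongr; exact le_max_right _ _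
      linarith [hΦn g]
    | succ i ih =>
      set u := (P ^ (n0 * i)) g with hu
      have e : (P ^ (n0 * (i + 1))) g = (P ^ n0) u := by
        rw [mul_add, mul_one, add_comm, pow_add]; rfl
      rw [e]
      have hΦu : Φ u = 0 := (H.powΦ _ g).trans hg
      by_cases hcase : Φ |u| ≤ ρ * ‖g‖
      · refine (hmon _ _).trans (hcase.trans ?_)
        gcongr; exact le_max_left _ _
      · push Not at hcase
        have h1 : ‖u‖ ≤ (1 + C) / ρ * Φ |u| := by
          have h2 := hQ (n0 * i) g
          have h3 : (1 + C) * ‖g‖ = (1 + C) / ρ * (ρ * ‖g‖) := by field_simp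
          refine h2.trans (h3.le.trans ?_)
          gcongr
        refine (hcon u hΦu h1).trans ?_
        have hci : Φ |u| ≤ c ^ i * ‖g‖ := by
          rcases le_total ρ (c ^ i) with h | h
          · rwa [max_eq_right h] at ih
          · rw [max_eq_left h] at ih
            exact absurd ih (not_le.2 hcase)
        calc c * Φ |u| ≤ c * (c ^ i * ‖g‖) := by gcongr
          _ = c ^ (i + 1) * ‖g‖ := by ring
          _ ≤ _ := by gcongr; exact le_max_right _ _
  refine ⟨l + n0 * j, fun g hg => ?_⟩
  have e : (P ^ (l + n0 * j)) g = (P ^ l) ((P ^ (n0 * j)) g) := by rw [pow_add]; rfl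
  rw [e]
  have h1 := hit g hg j
  rw [max_eq_left hj.le] at h1
  calc _ ≤ _ := ly l _
    _ ≤ ρ * ((1 + C) * ‖g‖) + C * (ρ * ‖g‖) := by
        gcongr
        exact hQ _ _
    _ ≤ 2 * (ρ * (1 + C)) * ‖g‖ := by nlinarith [mul_nonneg hρ0.le (norm_nonneg g)]
    _ = 1 / 2 * ‖g‖ := by rw [hρ]; field_simp; norm_num
end Setup
end


section
variable {α : Type*} [MeasurableSpace α] {μ : Measure α}

lemma geo {E : Type*} [NormedAddCommGroup E] [NormedSpace ℝ E] (T : E →L[ℝ] E) (Φ : E →L[ℝ] ℝ)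
    (hinv : ∀ g, Φ (T g) = Φ g) (m : ℕ) (hm : ∀ g, Φ g = 0 → ‖(T ^ m) g‖ ≤ 1 / 2 * ‖g‖) :
    ∃ ζ : ℝ, 0 < ζ ∧ ζ < 1 ∧ ∃ C : ℝ, 1 ≤ C ∧
      ∀ (n : ℕ) g, Φ g = 0 → ‖(T ^ n) g‖ ≤ C * ζ ^ n * ‖g‖ := by
  rcases Nat.eq_zero_or_pos m with rfl | hm0
  · refine ⟨1 / 2, by norm_num, by norm_num, 1, le_rfl, fun n g hg => ?_⟩
    have h1 := hm g hg
    simp only [pow_zero, one_apply_eq_self] at h1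
    have h2 : g = 0 := by
      rw [← norm_le_zero_iff]; linarith
    simp [h2]
  have hmR : (0:ℝ) < m := by exact_mod_cast hm0
  set ζ : ℝ := (1 / 2 : ℝ) ^ (1 / (m : ℝ)) with hζ
  have hζ0 : 0 < ζ := Real.rpow_pos_of_pos (by norm_num) _
  have hζ1 : ζ < 1 := Real.rpow_lt_one (by norm_num) (by norm_num) (by positivity)
  have hζm : ζ ^ m = 1 / 2 := by
    rw [hζ, ← Real.rpow_natCast, ← Real.rpow_mul (by norm_num), one_div_mul_cancel hmR.ne',
      Real.rpow_one]
  set L : ℝ := max 1 ‖T‖ with hL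
  have hL1 : 1 ≤ L := le_max_left _ _
  have hLm : 1 ≤ L ^ m := one_le_pow₀ hL1
  have hTi : ∀ (i : ℕ) g, ‖(T ^ i) g‖ ≤ L ^ i * ‖g‖ := by
    intro i
    induction i with
    | zero => intro g; simp
    | succ i ih =>
      intro g
      rw [pow_succ']
      change ‖T ((T ^ i) g)‖ ≤ _
      calc _ ≤ ‖T‖ * ‖(T ^ i) g‖ := T.le_opNorm _
        _ ≤ L * (L ^ i * ‖g‖) := by
            gcongr
            · exact le_max_right _ _
            · exact ih g
        _ = _ := by ring
  have hinv' : ∀ (i : ℕ) g, Φ ((T ^ i) g) = Φ g := by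
    intro i g
    induction i with
    | zero => simp
    | succ i ih => rw [pow_succ', ← ih]; exact hinv _
  have hq : ∀ (q : ℕ) g, Φ g = 0 → ‖(T ^ (m * q)) g‖ ≤ ζ ^ (m * q) * ‖g‖ := by
    intro q g hg
    induction q with
    | zero => simp
    | succ q ih =>
      have e : (T ^ (m * (q + 1))) g = (T ^ m) ((T ^ (m * q)) g) := by
        rw [mul_add, mul_one, add_comm, pow_add]; rfl
      rw [e, mul_add, mul_one, pow_add, hζm]
      have := hm _ ((hinv' (m * q) g).trans hg)
      linarith
  refine ⟨ζ, hζ0, hζ1, 2 * L ^ m, by linarith, fun n g hg => ?_⟩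
  have e : (T ^ n) g = (T ^ (n % m)) ((T ^ (m * (n / m))) g) := by
    conv_lhs => rw [← Nat.mod_add_div n m, pow_add]
    rfl
  have hlt := Nat.mod_lt n hm0
  have h1 : ζ ^ n = ζ ^ (n % m) * ζ ^ (m * (n / m)) := by
    conv_lhs => rw [← Nat.mod_add_div n m, pow_add]
  have h2 : 1 / 2 ≤ ζ ^ (n % m) := by
    rw [← hζm]; exact pow_le_pow_of_le_one hζ0.le hζ1.le hlt.le
  rw [e, h1]
  calc _ ≤ L ^ (n % m) * ‖(T ^ (m * (n / m))) g‖ := hTi _ _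
    _ ≤ L ^ m * (ζ ^ (m * (n / m)) * ‖g‖) := by
        gcongr
        exact hq _ _ hg
    _ = 2 * L ^ m * (1 / 2 * ζ ^ (m * (n / m))) * ‖g‖ := by ring
    _ ≤ _ := by gcongr

lemma linf_bound (φ₀ : Lp ℝ ⊤ μ) : ∀ᵐ x ∂μ, ‖φ₀ x‖ ≤ ‖φ₀‖ := by
  filter_upwards [ae_le_eLpNormEssSup (f := φ₀) (μ := μ)] with x hx
  rw [Lp.norm_def, eLpNorm_exponent_top]
  have h2 : eLpNormEssSup φ₀ μ ≠ ⊤ := by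
    have := Lp.eLpNorm_ne_top φ₀
    rwa [eLpNorm_exponent_top] at this
  have := ENNReal.toReal_mono h2 hx
  rwa [toReal_enorm] at this

lemma pair_pos (φ₀ : Lp ℝ ⊤ μ) (hφ : 0 ≤ φ₀) (hne : φ₀ ≠ 0) {f : Lp ℝ 1 μ}
    (hf : ∀ᵐ x ∂μ, 0 < f x) : 0 < ∫ x, φ₀ x * f x ∂μ := by
  have hint : Integrable (fun x => φ₀ x * f x) μ :=
    int_mul φ₀ (Lp.aestronglyMeasurable φ₀) _ (linf_bound φ₀) f
  have hnn : 0 ≤ᵐ[μ] fun x => φ₀ x * f x := by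
    filter_upwards [hf, (Lp.coeFn_nonneg φ₀).2 hφ] with x h1 h2
    exact mul_nonneg h2 h1.le
  refine lt_of_le_of_ne (integral_nonneg_of_ae hnn) fun h => hne ?_
  have h0 := (integral_eq_zero_iff_of_nonneg_ae hnn hint).1 h.symm
  rw [Lp.eq_zero_iff_ae_eq_zero]
  filter_upwards [h0, hf] with x h1 h2
  rcases mul_eq_zero.1 h1 with h3 | h3
  · exact h3
  · exact absurd h3 h2.ne'

theorem main (S W K : Lp ℝ 1 μ →L[ℝ] Lp ℝ 1 μ)
    (hSpos : ∀ f : Lp ℝ 1 μ, 0 ≤ f → 0 ≤ S f)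
    (k : ℕ) (κ₀ : ℝ) (hκ₀ : 0 < κ₀)
    (h1 : (∃ g₀ : Lp ℝ 1 μ, 0 ≤ g₀ ∧ g₀ ≠ 0 ∧ κ₀ • g₀ ≤ S g₀) ∨
      (∃ ψ₀ : Lp ℝ ⊤ μ, 0 ≤ ψ₀ ∧ ψ₀ ≠ 0 ∧ ∀ f : Lp ℝ 1 μ,
          0 ≤ f → κ₀ * ∫ x, ψ₀ x * f x ∂μ ≤ ∫ x, ψ₀ x * (S f) x ∂μ))
    (h2 : S ^ k = W + K)
    (hWnorm : ‖W‖ < κ₀ ^ k)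
    (hKweak : IsCompact (closure
      ((fun f => toWeakSpaceCLM ℝ _ (K f)) '' Metric.closedBall 0 1)))
    (h3 : ∀ f : Lp ℝ 1 μ, 0 ≤ f → f ≠ 0 → ∀ᵐ x ∂μ, 0 < ((S ^ k) f) x)
    (Λ₀ : ℝ) (f₀ : Lp ℝ 1 μ) (φ₀ : Lp ℝ ⊤ μ)
    (hf₀pos : 0 ≤ f₀) (hφ₀pos : 0 ≤ φ₀)
    (hf₀ : S f₀ = Λ₀ • f₀)
    (hφ₀ : ∀ f : Lp ℝ 1 μ, ∫ x, φ₀ x * (S f) x ∂μ = Λ₀ * ∫ x, φ₀ x * f x ∂μ)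
    (hφ₀norm : ‖φ₀‖ = 1) (hpair : (∫ x, φ₀ x * f₀ x ∂μ) = 1) :
    ∃ ζ : ℝ, 0 < ζ ∧ ζ < 1 ∧ ∃ C : ℝ, 1 ≤ C ∧
      ∀ (n : ℕ) (f : Lp ℝ 1 μ),
        ‖(Λ₀ ^ n)⁻¹ • ((S ^ n) f) - (∫ x, φ₀ x * f x ∂μ) • f₀‖ ≤
          C * ζ ^ n * ‖f - (∫ x, φ₀ x * f x ∂μ) • f₀‖ := by
  have hφne : φ₀ ≠ 0 := by rintro rfl; simp at hφ₀norm
  have hb : ∀ᵐ x ∂μ, ‖φ₀ x‖ ≤ 1 := by rw [← hφ₀norm]; exact linf_bound φ₀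
  obtain ⟨Φ, hΦ⟩ := exists_pr φ₀ (Lp.aestronglyMeasurable φ₀) 1 hb
  have hΦS : ∀ f, Φ (S f) = Λ₀ * Φ f := fun f => by rw [hΦ, hΦ]; exact hφ₀ f
  have hΦf0 : Φ f₀ = 1 := (hΦ _).trans hpair
  have hΦpow : ∀ (n : ℕ) f, Φ ((S ^ n) f) = Λ₀ ^ n * Φ f := by
    intro n f
    induction n with
    | zero => simp
    | succ n ih =>
      rw [pow_succ', pow_succ', mul_assoc, ← ih]; exact hΦS _
  have hSpow : ∀ (n : ℕ) f, 0 ≤ f → 0 ≤ (S ^ n) f := by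
    intro n f hf
    induction n with
    | zero => simpa using hf
    | succ n ih => rw [pow_succ']; exact hSpos _ ih
  have hSf0 : ∀ n : ℕ, (S ^ n) f₀ = Λ₀ ^ n • f₀ := by
    intro n
    induction n with
    | zero => simp
    | succ n ih =>
      rw [pow_succ']
      change S ((S ^ n) f₀) = _
      rw [ih, map_smul, hf₀, smul_smul, pow_succ]
  have hf0ne : f₀ ≠ 0 := by
    rintro rfl
    rw [map_zero] at hΦf0
    exact zero_ne_one hΦf0
  have hpp : ∀ f, 0 ≤ f → f ≠ 0 → 0 < Λ₀ ^ k * Φ f := by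
    intro f hf hne
    rw [← hΦpow, hΦ]
    exact pair_pos φ₀ hφ₀pos hφne (h3 f hf hne)
  have hΛk : 0 < Λ₀ ^ k := by
    have := hpp f₀ hf₀pos hf0ne
    rwa [hΦf0, mul_one] at this
  have hΦpos : ∀ f, 0 ≤ f → f ≠ 0 → 0 < Φ f := fun f hf hne =>
    (mul_pos_iff_of_pos_left hΛk).1 (hpp f hf hne)
  have hf0p : ∀ᵐ x ∂μ, 0 < f₀ x := by
    have := h3 f₀ hf₀pos hf0ne
    rw [hSf0] at this
    filter_upwards [this, Lp.coeFn_smul (Λ₀ ^ k) f₀] with x h4 h5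
    rw [h5, Pi.smul_apply, smul_eq_mul] at h4
    exact (mul_pos_iff_of_pos_left hΛk).1 h4
  have hκΛ : κ₀ ≤ Λ₀ := by
    rcases h1 with ⟨g, hg, hgne, hgS⟩ | ⟨ψ, hψ, hψne, hψS⟩
    · have h4 := hΦpos g hg hgne
      have h5 : 0 ≤ Φ (S g - κ₀ • g) := by
        by_cases h : S g - κ₀ • g = 0
        · rw [h, map_zero]
        · exact (hΦpos _ (sub_nonneg.2 hgS) h).le
      rw [map_sub, map_smul, hΦS, smul_eq_mul] at h5
      exact le_of_mul_le_mul_right (sub_nonneg.1 h5) h4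
    · have h4 := pair_pos ψ hψ hψne hf0p
      have h5 := hψS f₀ hf₀pos
      rw [hf₀] at h5
      have h6 : ∫ x, ψ x * (Λ₀ • f₀ : Lp ℝ 1 μ) x ∂μ = Λ₀ * ∫ x, ψ x * f₀ x ∂μ := by
        rw [← integral_const_mul]
        refine integral_congr_ae ?_
        filter_upwards [Lp.coeFn_smul Λ₀ f₀] with x hx
        rw [hx, Pi.smul_apply, smul_eq_mul]; ring
      rw [h6] at h5
      exact le_of_mul_le_mul_right h5 h4
  have hΛ : 0 < Λ₀ := lt_of_lt_of_le hκ₀ hκΛ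
  have hφm : Measurable φ₀ := (Lp.stronglyMeasurable φ₀).measurable
  have hφp : ∀ᵐ x ∂μ, 0 < φ₀ x := by
    let Z : Set α := {x | φ₀ x ≤ 0}
    have hZ : MeasurableSet Z := measurableSet_le hφm measurable_const
    obtain ⟨g, hg⟩ := exists_restr Z hZ f₀
    have hgnn : 0 ≤ g := by
      rw [← Lp.coeFn_nonneg]
      filter_upwards [hg, hf0p] with x h1 h2
      rw [h1]
      exact Set.indicator_apply_nonneg (fun _ => h2.le)
    have hg0 : g = 0 := by
      by_contra hne
      have h2 := hΦpos g hgnn hne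
      rw [hΦ] at h2
      refine absurd h2 (not_lt.2 (integral_nonpos_of_ae ?_))
      filter_upwards [hg, hf0p] with x h1 h2
      rw [h1]
      by_cases hx : x ∈ Z
      · rw [Set.indicator_of_mem hx]
        exact mul_nonpos_of_nonpos_of_nonneg hx h2.le
      · simp [hx]
    rw [hg0] at hg
    filter_upwards [hg, hf0p, Lp.coeFn_zero ℝ 1 μ] with x h1 h2 h3
    by_contra hx
    have hx' : x ∈ Z := not_lt.1 hx
    rw [h3, Set.indicator_of_mem hx'] at h1
    simp at h1
    linarith
  have hφle : ∀ᵐ x ∂μ, φ₀ x ≤ 1 := hb.mono fun x hx => (le_abs_self _).trans hx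
  have hφess : ∀ r < 1, μ {x | r ≤ φ₀ x} ≠ 0 := by
    intro r hr h0
    have h4 : ∀ᵐ x ∂μ, ‖φ₀ x‖ ≤ max r 0 := by
      have : ∀ᵐ x ∂μ, ¬ (r ≤ φ₀ x) := by simpa [ae_iff] using h0
      filter_upwards [this, hφp] with x h5 h6
      rw [Real.norm_of_nonneg h6.le]
      exact (not_le.1 h5).le.trans (le_max_left _ _)
    have h5 := eLpNormEssSup_le_of_ae_bound h4
    have h6 : ‖φ₀‖ ≤ max r 0 := by
      rw [Lp.norm_def, eLpNorm_exponent_top]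
      exact ENNReal.toReal_le_of_le_ofReal (le_max_right _ _) h5
    rw [hφ₀norm] at h6
    have : max r 0 < 1 := max_lt hr one_pos
    linarith
  set γ : ℝ := (‖W‖ / Λ₀ ^ k + 1) / 2 with hγ
  have hWΛ : ‖W‖ < Λ₀ ^ k := hWnorm.trans_le (pow_le_pow_left₀ hκ₀.le hκΛ k)
  have hr1 : ‖W‖ / Λ₀ ^ k < 1 := (div_lt_one hΛk).2 hWΛ
  have hr0 : 0 ≤ ‖W‖ / Λ₀ ^ k := by positivity
  have hγ0 : 0 < γ := by rw [hγ]; linarith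
  have hγ1 : γ < 1 := by rw [hγ]; linarith
  have hWγ : ‖W‖ < γ * Λ₀ ^ k := by
    rw [← div_lt_iff₀ hΛk, hγ]; linarith
  set T : Lp ℝ 1 μ →L[ℝ] Lp ℝ 1 μ := Λ₀⁻¹ • S with hT
  have hTn : ∀ (n : ℕ) f, (T ^ n) f = (Λ₀ ^ n)⁻¹ • (S ^ n) f := by
    intro n f
    rw [hT, smul_pow, inv_pow]; rfl
  have hΦT : ∀ (n : ℕ) f, Φ ((T ^ n) f) = Φ f := by
    intro n f
    rw [hTn, map_smul, hΦpow, smul_eq_mul, inv_mul_cancel_left₀ (pow_ne_zero _ hΛ.ne')]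
  have hTf0 : ∀ n : ℕ, (T ^ n) f₀ = f₀ := by
    intro n
    rw [hTn, hSf0, smul_smul, inv_mul_cancel₀ (pow_ne_zero _ hΛ.ne'), one_smul]
  have hφint : ∀ f : Lp ℝ 1 μ, Integrable (fun x => φ₀ x * f x) μ := fun f =>
    int_mul φ₀ (Lp.aestronglyMeasurable φ₀) 1 hb f
  have hui : ∃ δ : ℝ, 0 < δ ∧ ∀ A, MeasurableSet A → ∫ x in A, φ₀ x * f₀ x ∂μ ≤ δ →
      ∀ f, 0 ≤ f → ∫ x in A, (T ^ k) f x ∂μ ≤ γ * ‖f‖ := by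
    have hwm : Measurable (fun x => ENNReal.ofReal (φ₀ x * f₀ x)) :=
      (hφm.mul (Lp.stronglyMeasurable f₀).measurable).ennreal_ofReal
    obtain ⟨δ, hδ, h⟩ := ui W K (S ^ k) h2 (hSpow k) hKweak
      (μ.withDensity fun x => ENNReal.ofReal (φ₀ x * f₀ x))
      (withDensity_absolutelyContinuous' hwm.aemeasurable (by
        filter_upwards [hφp, hf0p] with x h4 h5
        rw [Ne, ENNReal.ofReal_eq_zero, not_le]
        exact mul_pos h4 h5)) hWγ
    obtain ⟨e, he0, he⟩ := ENNReal.lt_iff_exists_nnreal_btwn.1 hδ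
    refine ⟨e, by exact_mod_cast he0, fun A hA hAe f hf => ?_⟩
    have h4 := h A hA (by
      rw [withDensity_apply _ hA, ← ofReal_integral_eq_lintegral_ofReal (hφint f₀).integrableOn]
      · refine le_trans (ENNReal.ofReal_le_ofReal hAe) ?_
        rw [ENNReal.ofReal_coe_nnreal]; exact he.le
      · refine ae_restrict_of_ae ?_
        filter_upwards [hφp, hf0p] with x h4 h5
        exact (mul_pos h4 h5).le) f hf
    obtain ⟨l, hl⟩ := exists_setI (μ := μ) A hA
    rw [← hl, hTn, map_smul, hl, smul_eq_mul, inv_mul_le_iff₀ hΛk]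
    linarith
  have H : Setup μ (T ^ k) f₀ φ₀ Φ γ :=
    { pos := fun f hf => by
        rw [hTn]; exact smul_nn (by positivity) (hSpow k f hf)
      irr := fun f hf hne => by
        rw [hTn]
        filter_upwards [h3 f hf hne, Lp.coeFn_smul (Λ₀ ^ k)⁻¹ ((S ^ k) f)] with x h4 h5
        rw [h5, Pi.smul_apply, smul_eq_mul]
        positivity
      f0pos := hf0p
      φm := hφm
      φpos := hφp
      φle := hφle
      φess := hφess
      hΦ := hΦ
      Pf0 := hTf0 k
      PΦ := hΦT k
      Φf0 := hΦf0
      γ0 := hγ0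
      γ1 := hγ1
      ui := hui }
  obtain ⟨n, hn⟩ := H.half
  obtain ⟨ζ, hζ0, hζ1, C, hC, hmain⟩ := geo T Φ (fun g => by simpa using hΦT 1 g) (k * n)
    (fun g hg => by rw [pow_mul]; exact hn g hg)
  refine ⟨ζ, hζ0, hζ1, C, hC, fun n f => ?_⟩
  rw [← hΦ]
  have h4 := hmain n (f - Φ f • f₀) (by rw [map_sub, map_smul, hΦf0, smul_eq_mul, mul_one, sub_self])
  rwa [map_sub, map_smul, hTf0, hTn] at h4
end

end PerronAux

/-- **Corollary 2.5 (contraction part).** Under the hypotheses of the Perron eigentriplet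
corollary, with `(Λ₀, f₀, φ₀)` the triplet satisfying `S f₀ = Λ₀ f₀`, `S* φ₀ = Λ₀ φ₀`,
`‖φ₀‖_∞ = ⟨φ₀, f₀⟩ = 1`, there exist `ζ ∈ (0,1)` and `C ≥ 1` such that for every `n` and
every `f ∈ L¹(ℝ^d)`, `‖Λ₀⁻ⁿ Sⁿ f − ⟨φ₀, f⟩ f₀‖ ≤ C ζⁿ ‖f − ⟨φ₀, f⟩ f₀‖`. -/
theorem perron_eigentriplet_discrete_exponential_convergence
    {d : ℕ}
    (S W K : Lp ℝ 1 (volume : Measure (EuclideanSpace ℝ (Fin d))) →L[ℝ]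
      Lp ℝ 1 (volume : Measure (EuclideanSpace ℝ (Fin d))))
    (hSpos : ∀ f : Lp ℝ 1 (volume : Measure (EuclideanSpace ℝ (Fin d))), 0 ≤ f → 0 ≤ S f)
    (k : ℕ) (κ₀ : ℝ) (hκ₀ : 0 < κ₀)
    (h1 : (∃ g₀ : Lp ℝ 1 (volume : Measure (EuclideanSpace ℝ (Fin d))),
        0 ≤ g₀ ∧ g₀ ≠ 0 ∧ κ₀ • g₀ ≤ S g₀) ∨
      (∃ ψ₀ : Lp ℝ ⊤ (volume : Measure (EuclideanSpace ℝ (Fin d))),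
        0 ≤ ψ₀ ∧ ψ₀ ≠ 0 ∧ ∀ f : Lp ℝ 1 (volume : Measure (EuclideanSpace ℝ (Fin d))),
          0 ≤ f → κ₀ * ∫ x, ψ₀ x * f x ≤ ∫ x, ψ₀ x * (S f) x))
    (h2 : S ^ k = W + K)
    (hWnorm : ‖W‖ < κ₀ ^ k)
    (hKweak : IsCompact (closure
      ((fun f => toWeakSpaceCLM ℝ _ (K f)) '' Metric.closedBall 0 1)))
    (h3 : ∀ f : Lp ℝ 1 (volume : Measure (EuclideanSpace ℝ (Fin d))),
      0 ≤ f → f ≠ 0 → ∀ᵐ x, 0 < ((S ^ k) f) x)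
    (Λ₀ : ℝ) (f₀ : Lp ℝ 1 (volume : Measure (EuclideanSpace ℝ (Fin d))))
    (φ₀ : Lp ℝ ⊤ (volume : Measure (EuclideanSpace ℝ (Fin d))))
    (hf₀pos : 0 ≤ f₀) (hφ₀pos : 0 ≤ φ₀)
    (hf₀ : S f₀ = Λ₀ • f₀)
    (hφ₀ : ∀ f : Lp ℝ 1 (volume : Measure (EuclideanSpace ℝ (Fin d))),
      ∫ x, φ₀ x * (S f) x = Λ₀ * ∫ x, φ₀ x * f x)
    (hφ₀norm : ‖φ₀‖ = 1) (hpair : (∫ x, φ₀ x * f₀ x) = 1) :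
    ∃ ζ : ℝ, 0 < ζ ∧ ζ < 1 ∧ ∃ C : ℝ, 1 ≤ C ∧
      ∀ (n : ℕ) (f : Lp ℝ 1 (volume : Measure (EuclideanSpace ℝ (Fin d)))),
        ‖(Λ₀ ^ n)⁻¹ • ((S ^ n) f) - (∫ x, φ₀ x * f x) • f₀‖ ≤
          C * ζ ^ n * ‖f - (∫ x, φ₀ x * f x) • f₀‖ := by
  exact PerronAux.main S W K hSpos k κ₀ hκ₀ h1 h2 hWnorm hKweak h3 Λ₀ f₀ φ₀ hf₀pos hφ₀pos hf₀ hφ₀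
    hφ₀norm hpair
end

section
/- Let v : ℝ × ℝ^d → ℝ^d be continuous, with v(t, ·) continuously differentiable for each t and with |div_x v(t, x)| ≤ D for all (t, x), and let X_{·,·} be a global flow of v such that each map x ↦ X_{t,s}(x) is a C¹-diffeomorphism of ℝ^d with inverse X_{s,t}. Then for all s, t ∈ ℝ and every Lebesgue measurable set E ⊆ ℝ^d, e^{−|t−s| D} λ(E) ≤ λ(X_{s,t}(E)) ≤ e^{|t−s| D} λ(E), where λ denotes Lebesgue measure on ℝ^d. -/
open MeasureTheory

lemma fmd_fwd {E : Type*} [NormedAddCommGroup E] [NormedSpace ℝ E] (f w : ℝ → E) (x : E)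
    (a b M : ℝ) (hab : a ≤ b) (hM : 0 < M) (hf : ∀ t, HasDerivAt f (w t) t) (hfa : f a = x)
    (hw : ∀ t ∈ Set.Icc a b, ‖f t - x‖ ≤ 1 → ‖w t‖ < M) (hb : M * (b - a) ≤ 1) :
    ‖f b - x‖ ≤ M * (b - a) := by
  have hd : ∀ t, HasDerivAt (fun t => f t - x) (w t) t := fun t => (hf t).sub_const x
  refine image_norm_le_of_norm_deriv_right_lt_deriv_boundary (f := fun t => f t - x) (f' := w)
    (a := a) (b := b) (B := fun t => M * (t - a)) (B' := fun _ => M) 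
    (fun t _ => (hd t).continuousAt.continuousWithinAt)
    (fun t _ => (hd t).hasDerivWithinAt) ?_ ?_ ?_ (Set.right_mem_Icc.2 hab)
  · simp [hfa]
  · intro t
    simpa using ((hasDerivAt_id t).sub_const a).const_mul M
  · intro t ht h
    refine hw t ⟨ht.1, ht.2.le⟩ ?_
    rw [h]
    have : M * (t - a) ≤ M * (b - a) := by
      apply mul_le_mul_of_nonneg_left _ hM.le
      linarith [ht.2]
    linarith

lemma fmd_two {E : Type*} [NormedAddCommGroup E] [NormedSpace ℝ E] (f w : ℝ → E) (x : E)
    (a b M : ℝ) (hM : 0 < M) (hf : ∀ t, HasDerivAt f (w t) t) (hfa : f a = x)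
    (hw : ∀ t ∈ Set.uIcc a b, ‖f t - x‖ ≤ 1 → ‖w t‖ < M) (hb : M * |b - a| ≤ 1) :
    ‖f b - x‖ ≤ M * |b - a| := by
  rcases le_total a b with h | h
  · rw [abs_of_nonneg (by linarith)] at hb ⊢
    rw [Set.uIcc_of_le h] at hw
    exact fmd_fwd f w x a b M h hM hf hfa hw hb
  · rw [abs_of_nonpos (by linarith)] at hb ⊢
    rw [Set.uIcc_of_ge h] at hw
    have := fmd_fwd (fun t => f (-t)) (fun t => - w (-t)) x (-a) (-b) M (by linarith) hM
      (fun t => by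
        have h1 := (hf (-t)).scomp t (hasDerivAt_neg t)
        simpa [Function.comp_def] using h1) (by simpa using hfa)
      (fun t ht h1 => by
        rw [norm_neg]
        exact hw (-t) ⟨by linarith [ht.2], by linarith [ht.1]⟩ h1) (by linarith)
    simp only [neg_neg] at this
    linarith

lemma fmd_trap {E : Type*} [NormedAddCommGroup E] [NormedSpace ℝ E] [ProperSpace E]
    (v : ℝ → E → E) (hv_cont : Continuous (fun q : ℝ × E => v q.1 q.2))
    (X : ℝ → ℝ → E → E)
    (hX_deriv : ∀ (s : ℝ) (x : E) (t : ℝ), HasDerivAt (fun τ => X τ s x) (v t (X t s x)) t)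
    (hX_init : ∀ (s : ℝ) (x : E), X s s x = x) (s R : ℝ) :
    ∃ M > 0, ∃ δ > 0, ∀ a τ, |a - s| ≤ δ → |τ - s| ≤ δ → ∀ x, ‖x‖ ≤ R →
      ‖X τ a x - x‖ ≤ M * |τ - a| ∧ M * |τ - a| ≤ 1 := by
  obtain ⟨C, hC⟩ := ((isCompact_Icc (a := s - 1) (b := s + 1)).prod
    (isCompact_closedBall (0 : E) (R + 1))).exists_bound_of_continuousOn hv_cont.continuousOn
  have hM : 0 < max C 0 + 1 := by positivity
  set M := max C 0 + 1 with hMdef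
  refine ⟨M, hM, min 1 (1 / (2 * M)), by positivity, ?_⟩
  intro a τ ha hτ x hx
  have ha1 := abs_le.1 (ha.trans (min_le_left _ _))
  have hτ1 := abs_le.1 (hτ.trans (min_le_left _ _))
  have ha2 := (ha.trans (min_le_right _ _))
  have hτ2 := (hτ.trans (min_le_right _ _))
  have hdist : M * |τ - a| ≤ 1 := by
    have h1 : |τ - a| ≤ |τ - s| + |a - s| := by
      rw [abs_sub_comm a s]; exact abs_sub_le _ _ _
    have h2 : |τ - a| ≤ 1 / M := by
      calc |τ - a| ≤ 1 / (2 * M) + 1 / (2 * M) := by linarith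
        _ = 1 / M := by field_simp; norm_num
    calc M * |τ - a| ≤ M * (1 / M) := by gcongr
      _ = 1 := by field_simp
  refine ⟨fmd_two (fun τ => X τ a x) (fun t => v t (X t a x)) x a τ M hM
    (hX_deriv a x) (hX_init a x) ?_ hdist, hdist⟩
  intro t ht h1
  have hts : t ∈ Set.Icc (s - 1) (s + 1) :=
    Set.uIcc_subset_Icc ⟨by linarith, by linarith⟩ ⟨by linarith, by linarith⟩ ht
  have := hC (t, X t a x) ⟨hts, by
    rw [mem_closedBall_zero_iff]
    calc ‖X t a x‖ = ‖(X t a x - x) + x‖ := by simp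
      _ ≤ _ := norm_add_le _ _
      _ ≤ R + 1 := by linarith⟩
  simp only at this
  linarith [le_max_left C 0]

lemma fmd_deriv {E : Type*} [NormedAddCommGroup E] [NormedSpace ℝ E] [ProperSpace E]
    (v : ℝ → E → E) (hv_cont : Continuous (fun q : ℝ × E => v q.1 q.2))
    (X : ℝ → ℝ → E → E)
    (hX_deriv : ∀ (s : ℝ) (x : E) (t : ℝ), HasDerivAt (fun τ => X τ s x) (v t (X t s x)) t)
    (hX_init : ∀ (s : ℝ) (x : E), X s s x = x) (s : ℝ) (x : E) :
    HasDerivAt (fun a => X s a x) (- v s x) s := by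
  obtain ⟨M, hM, δ, hδ, H⟩ := fmd_trap v hv_cont X hX_deriv hX_init s ‖x‖
  rw [hasDerivAt_iff_isLittleO, Asymptotics.isLittleO_iff]
  intro ε hε
  obtain ⟨η, hη, hc⟩ := Metric.continuousAt_iff.1 (hv_cont.continuousAt (x := (s, x))) ε hε
  rw [Metric.eventually_nhds_iff]
  refine ⟨min δ (min η (η / M)), by positivity, ?_⟩
  intro a ha
  rw [Real.dist_eq] at ha
  have ha1 : |a - s| ≤ δ := (ha.trans_le (min_le_left _ _)).le
  have ha2 : |a - s| < η := ha.trans_le ((min_le_right _ _).trans (min_le_left _ _))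
  have ha3 : |a - s| < η / M := ha.trans_le ((min_le_right _ _).trans (min_le_right _ _))
  have key := Convex.norm_image_sub_le_of_norm_hasDerivWithin_le (𝕜 := ℝ)
    (f := fun τ => X τ a x - τ • v s x) (f' := fun τ => v τ (X τ a x) - v s x) (C := ε)
    (s := Set.uIcc s a) (x := a) (y := s)
    (fun τ _ => ((hX_deriv a x τ).sub (by
      simpa using (hasDerivAt_id τ).smul_const (v s x))).hasDerivWithinAt)
    (fun τ hτ => by
      have h1 : |τ - s| ≤ |a - s| := Set.abs_sub_left_of_mem_uIcc hτ
      have h2 : |τ - a| ≤ |a - s| := by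
        rw [abs_sub_comm τ a]
        exact Set.abs_sub_right_of_mem_uIcc hτ
      have h3 := (H a τ ha1 (h1.trans ha1) x le_rfl).1
      have h4 : M * |τ - a| < η := by
        calc M * |τ - a| ≤ M * |a - s| := by gcongr
          _ < M * (η / M) := by gcongr
          _ = η := by field_simp
      have := hc (x := (τ, X τ a x)) (by
        rw [Prod.dist_eq, max_lt_iff, Real.dist_eq, dist_eq_norm]
        exact ⟨h1.trans_lt ha2, h3.trans_lt h4⟩)
      rw [dist_eq_norm] at this
      exact this.le)
    (convex_uIcc s a) Set.right_mem_uIcc Set.left_mem_uIcc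
  simp only [hX_init] at key ⊢
  rw [norm_sub_rev s a] at key
  convert key using 2
  module

lemma fmd_parts {d : ℕ} (u : EuclideanSpace ℝ (Fin d) → EuclideanSpace ℝ (Fin d))
    (hu : ContDiff ℝ 1 u) (ψ : EuclideanSpace ℝ (Fin d) → ℝ) (hψ : ContDiff ℝ 1 ψ)
    (hc : HasCompactSupport ψ) :
    ∫ x, fderiv ℝ ψ x (u x) = - ∫ x, ψ x * LinearMap.trace ℝ (EuclideanSpace ℝ (Fin d))
        ((fderiv ℝ u x : EuclideanSpace ℝ (Fin d) →L[ℝ] EuclideanSpace ℝ (Fin d)) :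
          EuclideanSpace ℝ (Fin d) →ₗ[ℝ] EuclideanSpace ℝ (Fin d)) := by
  let b := EuclideanSpace.basisFun (Fin d) ℝ
  have hub : ∀ i, ContDiff ℝ 1 (fun x => inner ℝ (b i) (u x)) := fun i =>
    contDiff_const.inner ℝ hu
  have hfd : ∀ i x, fderiv ℝ (fun x => inner ℝ (b i) (u x)) x (b i)
      = inner ℝ (b i) (fderiv ℝ u x (b i)) := by
    intro i x
    have h1 : HasFDerivAt (fun x => inner ℝ (b i) (u x))
      ((innerSL ℝ (b i)).comp (fderiv ℝ u x)) x :=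
      (innerSL ℝ (b i)).hasFDerivAt.comp x (hu.differentiable (by simp) x).hasFDerivAt
    rw [h1.fderiv]; rfl
  have hψ' : Continuous (fderiv ℝ ψ) := hψ.continuous_fderiv (by simp)
  have hu' : Continuous (fderiv ℝ u) := hu.continuous_fderiv (by simp)
  have hψc := hψ.continuous
  have huc := hu.continuous
  have hc' : HasCompactSupport (fderiv ℝ ψ) := hc.fderiv ℝ
  have I1 : ∀ i, Integrable (fun x => inner ℝ (b i) (u x) * fderiv ℝ ψ x (b i)) := by
    intro i
    apply Continuous.integrable_of_hasCompactSupport (by fun_prop)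
    refine hc'.mono' (fun x hx => subset_tsupport _ ?_)
    rw [Function.mem_support] at hx ⊢
    intro h; apply hx; simp [h]
  have I2 : ∀ i, Integrable (fun x => inner ℝ (b i) (fderiv ℝ u x (b i)) * ψ x) := by
    intro i
    exact Continuous.integrable_of_hasCompactSupport (by fun_prop) hc.mul_left
  have I3 : ∀ i, Integrable (fun x => inner ℝ (b i) (u x) * ψ x) := by
    intro i
    exact Continuous.integrable_of_hasCompactSupport (by fun_prop) hc.mul_left
  have e1 : ∀ x, fderiv ℝ ψ x (u x) = ∑ i, inner ℝ (b i) (u x) * fderiv ℝ ψ x (b i) := by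
    intro x
    conv_lhs => rw [← b.sum_repr' (u x)]
    simp [map_sum]
  have e2 : ∀ x, ψ x * LinearMap.trace ℝ (EuclideanSpace ℝ (Fin d))
        ((fderiv ℝ u x : EuclideanSpace ℝ (Fin d) →L[ℝ] EuclideanSpace ℝ (Fin d)) :
          EuclideanSpace ℝ (Fin d) →ₗ[ℝ] EuclideanSpace ℝ (Fin d))
        = ∑ i, inner ℝ (b i) (fderiv ℝ u x (b i)) * ψ x := by
    intro x
    rw [LinearMap.trace_eq_sum_inner _ b, mul_comm, Finset.sum_mul]
    rfl
  simp_rw [e1, e2]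
  rw [integral_finsetSum _ (fun i _ => I1 i), integral_finsetSum _ (fun i _ => I2 i),
    ← Finset.sum_neg_distrib]
  refine Finset.sum_congr rfl (fun i _ => ?_)
  rw [integral_mul_fderiv_eq_neg_fderiv_mul_of_integrable _ (I1 i) (I3 i)]
  · simp_rw [hfd]
  · exact fun x _ => (hub i).differentiable (by simp) x
  · exact fun x _ => hψ.differentiable (by simp) x
  · simp_rw [hfd]; exact I2 i

lemma fmd_G_deriv {d : ℕ} (v : ℝ → EuclideanSpace ℝ (Fin d) → EuclideanSpace ℝ (Fin d))
    (hv_cont : Continuous (fun q : ℝ × EuclideanSpace ℝ (Fin d) => v q.1 q.2))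
    (X : ℝ → ℝ → EuclideanSpace ℝ (Fin d) → EuclideanSpace ℝ (Fin d))
    (hX_deriv : ∀ (s : ℝ) (x : EuclideanSpace ℝ (Fin d)) (t : ℝ),
      HasDerivAt (fun τ => X τ s x) (v t (X t s x)) t)
    (hX_init : ∀ (s : ℝ) (x : EuclideanSpace ℝ (Fin d)), X s s x = x)
    (hX_cocycle : ∀ (t s r : ℝ) (x : EuclideanSpace ℝ (Fin d)),
      X t s (X s r x) = X t r x)
    (hX_C1 : ∀ t s : ℝ, ContDiff ℝ 1 (X t s))
    (s : ℝ) (ψ : EuclideanSpace ℝ (Fin d) → ℝ) (hψ : ContDiff ℝ 1 ψ)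
    (hc : HasCompactSupport ψ) :
    HasDerivAt (fun a => ∫ x, ψ (X s a x)) (- ∫ x, fderiv ℝ ψ x (v s x)) s := by
  obtain ⟨R, hR⟩ := hc.isCompact.isBounded.exists_norm_le
  obtain ⟨C, hC⟩ := hψ.lipschitzWith_of_hasCompactSupport hc (by simp)
  obtain ⟨M₁, hM₁, δ₁, hδ₁, H₁⟩ := fmd_trap v hv_cont X hX_deriv hX_init s R
  obtain ⟨M₂, hM₂, δ₂, hδ₂, H₂⟩ := fmd_trap v hv_cont X hX_deriv hX_init s (R + 1)
  let L : Set (EuclideanSpace ℝ (Fin d)) := Metric.closedBall 0 (R + 1)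
  have hL : ∀ a, |a - s| ≤ δ₁ → ∀ x, ψ (X s a x) ≠ 0 → x ∈ L := by
    intro a ha x hx
    have h1 : ‖X s a x‖ ≤ R := hR _ (subset_tsupport _ hx)
    have h2 := H₁ s a (by simpa using hδ₁.le) ha _ h1
    rw [hX_cocycle, hX_init] at h2
    rw [mem_closedBall_zero_iff]
    calc ‖x‖ = ‖(x - X s a x) + X s a x‖ := by simp
      _ ≤ _ := norm_add_le _ _
      _ ≤ R + 1 := by linarith [h2.1.trans h2.2]
  have hψc := hψ.continuous
  have hψ' : Continuous (fderiv ℝ ψ) := hψ.continuous_fderiv (by simp)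
  have hvs : Continuous (v s) := hv_cont.comp (by fun_prop : Continuous fun x => (s, x))
  have main := hasFDerivAt_integral_of_dominated_loc_of_lip' (𝕜 := ℝ) (μ := volume)
    (F := fun a x => ψ (X s a x)) (x₀ := s) (s := Metric.closedBall s (min δ₁ δ₂))
    (bound := L.indicator (fun _ => C * M₂))
    (F' := fun x => ContinuousLinearMap.smulRightL ℝ ℝ ℝ 1 (- fderiv ℝ ψ x (v s x)))
    (Metric.closedBall_mem_nhds _ (by positivity))
    (fun a _ => (hψc.comp (hX_C1 s a).continuous).aestronglyMeasurable)
    (by simpa [hX_init] using hψc.integrable_of_hasCompactSupport hc)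
    (by
      apply Continuous.aestronglyMeasurable
      fun_prop)
    (Filter.Eventually.of_forall fun x a ha => by
      rw [Metric.mem_closedBall, Real.dist_eq] at ha
      have ha1 := ha.trans (min_le_left _ _)
      have ha2 := ha.trans (min_le_right _ _)
      by_cases hx : x ∈ L
      · rw [Set.indicator_of_mem hx, hX_init, ← dist_eq_norm]
        have h1 := (H₂ a s ha2 (by simpa using hδ₂.le) x (mem_closedBall_zero_iff.1 hx)).1
        calc dist (ψ (X s a x)) (ψ x) ≤ C * dist (X s a x) x := hC.dist_le_mul _ _
          _ ≤ C * (M₂ * |s - a|) := by rw [dist_eq_norm]; gcongr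
          _ = C * M₂ * ‖a - s‖ := by rw [Real.norm_eq_abs, abs_sub_comm, mul_assoc]
      · rw [Set.indicator_of_notMem hx]
        have h1 : ψ (X s a x) = 0 := by
          by_contra h; exact hx (hL a ha1 x h)
        have h2 : ψ (X s s x) = 0 := by
          by_contra h; exact hx (hL s (by simpa using hδ₁.le) x h)
        simp [h1, h2])
    (by
      rw [integrable_indicator_iff Metric.isClosed_closedBall.measurableSet]
      exact integrableOn_const (isCompact_closedBall _ _).measure_lt_top.ne)
    (Filter.Eventually.of_forall fun x => by
      have h1 := fmd_deriv v hv_cont X hX_deriv hX_init s x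
      have h2 : HasFDerivAt ψ (fderiv ℝ ψ x) (X s s x) := by
        rw [hX_init]; exact (hψ.differentiable (by simp) x).hasFDerivAt
      have h3 := h2.comp_hasDerivAt s h1
      rw [map_neg] at h3
      exact h3.hasFDerivAt)
  have h4 := main.2.hasDerivAt
  rw [ContinuousLinearMap.integral_apply main.1] at h4
  simpa [integral_neg] using h4

lemma fmd_hcs {d : ℕ}
    (X : ℝ → ℝ → EuclideanSpace ℝ (Fin d) → EuclideanSpace ℝ (Fin d))
    (hX_init : ∀ (s : ℝ) (x : EuclideanSpace ℝ (Fin d)), X s s x = x)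
    (hX_cocycle : ∀ (t s r : ℝ) (x : EuclideanSpace ℝ (Fin d)),
      X t s (X s r x) = X t r x)
    (hX_C1 : ∀ t s : ℝ, ContDiff ℝ 1 (X t s))
    (t s : ℝ) (φ : EuclideanSpace ℝ (Fin d) → ℝ) (hc : HasCompactSupport φ) :
    HasCompactSupport (fun x => φ (X t s x)) := by
  let h : EuclideanSpace ℝ (Fin d) ≃ₜ EuclideanSpace ℝ (Fin d) :=
    { toFun := X t s, invFun := X s t
      left_inv := fun x => by rw [hX_cocycle, hX_init]
      right_inv := fun x => by rw [hX_cocycle, hX_init]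
      continuous_toFun := (hX_C1 t s).continuous
      continuous_invFun := (hX_C1 s t).continuous }
  exact hc.comp_homeomorph h

lemma fmd_gronwall (G g : ℝ → ℝ) (D : ℝ) (hG : ∀ s, HasDerivAt G (g s) s)
    (hg : ∀ s, |g s| ≤ D * G s) (s t : ℝ) : G s ≤ Real.exp (|t - s| * D) * G t := by
  have hexp : ∀ c s : ℝ, HasDerivAt (fun s => Real.exp (c * s) * G s)
      (Real.exp (c * s) * (c * G s + g s)) s := by
    intro c s
    have h1 : HasDerivAt (fun s => Real.exp (c * s)) (Real.exp (c * s) * c) s := by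
      simpa using ((hasDerivAt_id s).const_mul c).exp
    have h2 := h1.mul (hG s)
    have e : Real.exp (c * s) * c * G s + Real.exp (c * s) * g s
        = Real.exp (c * s) * (c * G s + g s) := by ring
    rw [e] at h2
    exact h2
  have conc : ∀ c, |t - s| * D = c * t - c * s →
      Real.exp (c * s) * G s ≤ Real.exp (c * t) * G t →
      G s ≤ Real.exp (|t - s| * D) * G t := by
    intro c h1 h2
    rw [h1, Real.exp_sub, div_mul_eq_mul_div, le_div_iff₀ (Real.exp_pos _)]
    linarith
  rcases le_total s t with h | h
  · refine conc D (by rw [abs_of_nonneg (by linarith)]; ring) ?_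
    exact monotone_of_hasDerivAt_nonneg (hexp D)
      (fun x => mul_nonneg (Real.exp_pos _).le (by linarith [abs_le.1 (hg x)])) h
  · refine conc (-D) (by rw [abs_of_nonpos (by linarith)]; ring) ?_
    exact antitone_of_hasDerivAt_nonpos (hexp (-D))
      (fun x => mul_nonpos_of_nonneg_of_nonpos (Real.exp_pos _).le
        (by linarith [abs_le.1 (hg x)])) h

lemma fmd_test {d : ℕ} (K U : Set (EuclideanSpace ℝ (Fin d))) (hK : IsCompact K)
    (hU : IsOpen U) (hKU : K ⊆ U) : ∃ φ : EuclideanSpace ℝ (Fin d) → ℝ,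
      ContDiff ℝ 1 φ ∧ HasCompactSupport φ ∧ (∀ x, 0 ≤ φ x) ∧ (∀ x, φ x ≤ 1) ∧
      (∀ x ∈ K, φ x = 1) ∧ (∀ x, x ∉ U → φ x = 0) := by
  obtain ⟨L, hL, hKL, hLU⟩ := exists_compact_between hK hU hKU
  obtain ⟨f, hf0, hf1, hf⟩ := exists_contMDiffMap_zero_one_of_isClosed (n := 1)
    (modelWithCornersSelf ℝ (EuclideanSpace ℝ (Fin d)))
    (isOpen_interior (s := L)).isClosed_compl hK.isClosed
    (Set.disjoint_left.2 fun x hx hx' => hx (hKL hx'))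
  refine ⟨f, f.contMDiff.contDiff, ?_, fun x => (hf x).1, fun x => (hf x).2,
    fun x hx => hf1 hx, fun x hx => hf0 fun h => hx (hLU (interior_subset h))⟩
  exact HasCompactSupport.intro hL fun x hx => hf0 fun h => hx (interior_subset h)


/-- **Measure distortion of the characteristic flow.**  If `v` is a continuous time-dependent
vector field on `ℝ^d`, `C¹` in space, with `|div_x v| ≤ D`, and `X` is a global flow of `v`
such that each `X_{t,s}` is a `C¹`-diffeomorphism of `ℝ^d` with inverse `X_{s,t}`, then for
all `s, t` and every measurable `E ⊆ ℝ^d`,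
`e^{-|t-s| D} λ(E) ≤ λ(X_{s,t}(E)) ≤ e^{|t-s| D} λ(E)`. -/
theorem flow_measure_distortion_bounds
    {d : ℕ} (v : ℝ → EuclideanSpace ℝ (Fin d) → EuclideanSpace ℝ (Fin d))
    (hv_cont : Continuous (fun q : ℝ × EuclideanSpace ℝ (Fin d) => v q.1 q.2))
    (hv_C1 : ∀ t : ℝ, ContDiff ℝ 1 (v t))
    (D : ℝ)
    (hdiv : ∀ (t : ℝ) (x : EuclideanSpace ℝ (Fin d)),
      |LinearMap.trace ℝ (EuclideanSpace ℝ (Fin d))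
        ((fderiv ℝ (v t) x : EuclideanSpace ℝ (Fin d) →L[ℝ] EuclideanSpace ℝ (Fin d)) :
          EuclideanSpace ℝ (Fin d) →ₗ[ℝ] EuclideanSpace ℝ (Fin d))| ≤ D)
    (X : ℝ → ℝ → EuclideanSpace ℝ (Fin d) → EuclideanSpace ℝ (Fin d))
    (hX_deriv : ∀ (s : ℝ) (x : EuclideanSpace ℝ (Fin d)) (t : ℝ),
      HasDerivAt (fun τ => X τ s x) (v t (X t s x)) t)
    (hX_init : ∀ (s : ℝ) (x : EuclideanSpace ℝ (Fin d)), X s s x = x)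
    (hX_cocycle : ∀ (t s r : ℝ) (x : EuclideanSpace ℝ (Fin d)),
      X t s (X s r x) = X t r x)
    (hX_C1 : ∀ t s : ℝ, ContDiff ℝ 1 (X t s)) :
    ∀ (s t : ℝ) (E : Set (EuclideanSpace ℝ (Fin d))), MeasurableSet E →
      ENNReal.ofReal (Real.exp (-(|t - s| * D))) * volume E ≤ volume (X s t '' E) ∧
      volume (X s t '' E) ≤ ENNReal.ofReal (Real.exp (|t - s| * D)) * volume E := by
  have hGbound : ∀ (s t : ℝ) (φ : EuclideanSpace ℝ (Fin d) → ℝ), ContDiff ℝ 1 φ →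
      HasCompactSupport φ → (∀ x, 0 ≤ φ x) →
      ∫ x, φ (X t s x) ≤ Real.exp (|t - s| * D) * ∫ x, φ x := by
    intro s t φ hφ hφc hφ0
    have hψ : ∀ a, ContDiff ℝ 1 (fun x => φ (X t a x)) := fun a => hφ.comp (hX_C1 t a)
    have hψc : ∀ a, HasCompactSupport (fun x => φ (X t a x)) := fun a =>
      fmd_hcs X hX_init hX_cocycle hX_C1 t a φ hφc
    have hint : ∀ a, Integrable (fun x => φ (X t a x)) := fun a =>
      (hψ a).continuous.integrable_of_hasCompactSupport (hψc a)
    have hG : ∀ a, HasDerivAt (fun a => ∫ x, φ (X t a x))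
        (- ∫ x, fderiv ℝ (fun x => φ (X t a x)) x (v a x)) a := by
      intro a
      have := fmd_G_deriv v hv_cont X hX_deriv hX_init hX_cocycle hX_C1 a _ (hψ a) (hψc a)
      simpa only [hX_cocycle] using this
    have := fmd_gronwall _ _ D hG (fun a => by
      rw [fmd_parts (v a) (hv_C1 a) _ (hψ a) (hψc a), neg_neg, ← Real.norm_eq_abs,
        ← integral_const_mul]
      refine norm_integral_le_of_norm_le ((hint a).const_mul D)
        (Filter.Eventually.of_forall fun x => ?_)
      rw [norm_mul, Real.norm_eq_abs, Real.norm_eq_abs, abs_of_nonneg (hφ0 _), mul_comm]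
      exact mul_le_mul_of_nonneg_right (hdiv a x) (hφ0 _)) s t
    simpa only [hX_init] using this
  have hcomp : ∀ (s t : ℝ) (K : Set (EuclideanSpace ℝ (Fin d))), IsCompact K →
      volume (X s t '' K) ≤ ENNReal.ofReal (Real.exp (|t - s| * D)) * volume K := by
    intro s t K hK
    have hopen : ∀ U, IsOpen U → K ⊆ U → volume U ≠ ⊤ →
        volume (X s t '' K) ≤ ENNReal.ofReal (Real.exp (|t - s| * D)) * volume U := by
      intro U hU hKU hUtop
      obtain ⟨φ, hφ, hφc, hφ0, hφ1, hφK, hφU⟩ := fmd_test K U hK hU hKU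
      have hKm : MeasurableSet (X s t '' K) :=
        (hK.image (hX_C1 s t).continuous).isClosed.measurableSet
      have hint : Integrable (fun x => φ (X t s x)) :=
        (hφ.comp (hX_C1 t s)).continuous.integrable_of_hasCompactSupport
          (fmd_hcs X hX_init hX_cocycle hX_C1 t s φ hφc)
      calc volume (X s t '' K) = ∫⁻ x, (X s t '' K).indicator 1 x :=
            (lintegral_indicator_one hKm).symm
        _ ≤ ∫⁻ x, ENNReal.ofReal (φ (X t s x)) := by
            refine lintegral_mono fun x => ?_
            refine Set.indicator_le' (g := fun x => ENNReal.ofReal (φ (X t s x))) ?_ ?_ x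
            · rintro _ ⟨y, hy, rfl⟩
              simp [hX_cocycle, hX_init, hφK y hy]
            · intro y _; exact zero_le
        _ = ENNReal.ofReal (∫ x, φ (X t s x)) :=
            (ofReal_integral_eq_lintegral_ofReal hint
              (Filter.Eventually.of_forall fun x => hφ0 _)).symm
        _ ≤ ENNReal.ofReal (Real.exp (|t - s| * D) * ∫ x, φ x) :=
            ENNReal.ofReal_le_ofReal (hGbound s t φ hφ hφc hφ0)
        _ = ENNReal.ofReal (Real.exp (|t - s| * D)) * ENNReal.ofReal (∫ x, φ x) :=
            ENNReal.ofReal_mul (Real.exp_pos _).le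
        _ ≤ _ := by
            gcongr
            rw [ofReal_integral_eq_lintegral_ofReal
              (hφ.continuous.integrable_of_hasCompactSupport hφc)
              (Filter.Eventually.of_forall hφ0), ← lintegral_indicator_one hU.measurableSet]
            refine lintegral_mono fun x => ?_
            by_cases hx : x ∈ U
            · simpa [hx] using hφ1 x
            · simp [hx, hφU x hx]
    have hpos : ENNReal.ofReal (Real.exp (|t - s| * D)) ≠ 0 := by
      simpa using Real.exp_pos _
    rw [mul_comm, ← ENNReal.div_le_iff_le_mul (Or.inl hpos) (Or.inl ENNReal.ofReal_ne_top)]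
    refine le_of_forall_gt fun r hr => ?_
    obtain ⟨U, hKU, hU, hUr⟩ := K.exists_isOpen_lt_of_lt r hr
    refine lt_of_le_of_lt ?_ hUr
    rw [ENNReal.div_le_iff_le_mul (Or.inl hpos) (Or.inl ENNReal.ofReal_ne_top), mul_comm]
    exact hopen U hU hKU hUr.ne_top
  have himg : ∀ (s t : ℝ) (E : Set (EuclideanSpace ℝ (Fin d))),
      X s t '' E = X t s ⁻¹' E := by
    intro s t E
    have h1 : Function.LeftInverse (X t s) (X s t) := fun x => by rw [hX_cocycle, hX_init]
    have h2 : Function.RightInverse (X t s) (X s t) := fun x => by rw [hX_cocycle, hX_init]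
    exact congrFun (Set.image_eq_preimage_of_inverse h1 h2) E
  have hmeas : ∀ (s t : ℝ) (E : Set (EuclideanSpace ℝ (Fin d))), MeasurableSet E →
      MeasurableSet (X s t '' E) := by
    intro s t E hE
    rw [himg]
    exact (hX_C1 t s).continuous.measurable hE
  have hup : ∀ (s t : ℝ) (E : Set (EuclideanSpace ℝ (Fin d))), MeasurableSet E →
      volume (X s t '' E) ≤ ENNReal.ofReal (Real.exp (|t - s| * D)) * volume E := by
    intro s t E hE
    rw [(hmeas s t E hE).measure_eq_iSup_isCompact]
    refine iSup₂_le fun K' hK' => iSup_le fun hK'c => ?_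
    have h1 := hcomp s t (X t s '' K') (hK'c.image (hX_C1 t s).continuous)
    have h2 : X s t '' (X t s '' K') = K' := by
      rw [Set.image_image]; simp [hX_cocycle, hX_init]
    rw [h2] at h1
    refine h1.trans ?_
    gcongr
    rw [himg] at hK'
    exact Set.image_subset_iff.2 hK'
  intro s t E hE
  refine ⟨?_, hup s t E hE⟩
  have h1 := hup t s (X s t '' E) (hmeas s t E hE)
  have h2 : X t s '' (X s t '' E) = E := by
    rw [Set.image_image]; simp [hX_cocycle, hX_init]
  rw [h2, abs_sub_comm] at h1
  calc _ ≤ ENNReal.ofReal (Real.exp (-(|t - s| * D))) *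
        (ENNReal.ofReal (Real.exp (|t - s| * D)) * volume (X s t '' E)) := by gcongr
    _ = volume (X s t '' E) := by
      rw [← mul_assoc, ← ENNReal.ofReal_mul (Real.exp_pos _).le, ← Real.exp_add]
      simp
end
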